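/- Let Ω ⊂ ℝⁿ be a simply connected, bounded Lipschitz domain, let f ∈ C²([0,∞)) be strictly convex with f(0) = f'(0) = 0, satisfying the linear growth condition νt − L ≤ f(t) ≤ L(t+1) and the bound f''(t) ≤ L(1+t)⁻¹ for all t ≥ 0, and let T₀ ∈ W^{2,∞}(Ω;ℝ^{N×n}) satisfy ‖T₀‖_{L^∞(Ω;ℝ^{N×n})} < f^∞(1). Let u_k ∈ W^{1,2}(Ω;ℝ^N) be the minimisers of 𝔉_k with (u_k)_Ω = 0, and let u ∈ W^{1,1}(Ω;ℝ^N) be the unique minimiser of 𝔉 in W^{1,1}(Ω;ℝ^N) with (u)_Ω = 0. Then u_k → u strongly in W^{1,1}(Ω;ℝ^N) as k → ∞. -/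

import Mathlib

open MeasureTheory Filter Topology Set
open scoped ENNReal RealInnerProductSpace

noncomputable section

/-- Euclidean space `ℝⁿ`. -/
abbrev EVec (n : ℕ) := EuclideanSpace ℝ (Fin n)

/-- Frobenius inner product of two "matrices". -/
def mdot {ι κ : Type*} [Fintype ι] [Fintype κ] (A B : ι → κ → ℝ) : ℝ :=
  ∑ a, ∑ i, A a i * B a i

/-- Frobenius norm. -/
noncomputable def mnorm {ι κ : Type*} [Fintype ι] [Fintype κ] (A : ι → κ → ℝ) : ℝ :=
  Real.sqrt (mdot A A)

/-- Euclidean norm of a vector given as a tuple. -/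
noncomputable def vnorm {ι : Type*} [Fintype ι] (v : ι → ℝ) : ℝ :=
  Real.sqrt (∑ a, v a ^ 2)

/-- `Ω ⊆ ℝⁿ` is a (nonempty, open, connected) Lipschitz domain: every boundary point has
a neighbourhood on which `Ω` can be flattened to a half space by a bi-Lipschitz map. -/
def IsLipschitzDomain {n : ℕ} (Ω : Set (EVec n)) : Prop :=
  IsOpen Ω ∧ Ω.Nonempty ∧ IsConnected Ω ∧
  ∀ x ∈ frontier Ω, ∃ (U : Set (EVec n)) (h hinv : EVec n → EVec n) (K : NNReal)
      (e : EVec n),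
    ‖e‖ = 1 ∧ IsOpen U ∧ x ∈ U ∧ LipschitzOnWith K h U ∧
    LipschitzOnWith K hinv (h '' U) ∧ (∀ y ∈ U, hinv (h y) = y) ∧
    h '' (U ∩ Ω) = (h '' U) ∩ {y : EVec n | 0 < ⟪e, y⟫}

/-- `Du` is the weak (distributional) gradient of `u` on `Ω`, and both are integrable;
i.e. `u ∈ W^{1,1}(Ω; ℝ^ι)` with weak gradient `Du`. -/
def HasWeakDerivOn {n : ℕ} {ι : Type*} [Fintype ι] (Ω : Set (EVec n))
    (u : EVec n → ι → ℝ) (Du : EVec n → ι → Fin n → ℝ) : Prop :=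
  IntegrableOn u Ω volume ∧ IntegrableOn Du Ω volume ∧
  ∀ φ : EVec n → ℝ, ContDiff ℝ 1 φ → HasCompactSupport φ → tsupport φ ⊆ Ω →
    ∀ (a : ι) (i : Fin n),
      ∫ x in Ω, u x a * fderiv ℝ φ x (EuclideanSpace.single i 1) =
        - ∫ x in Ω, Du x a i * φ x

/-- `u ∈ W^{1,2}(Ω;ℝ^ι)` with weak gradient `Du`. -/
def MemW12 {n : ℕ} {ι : Type*} [Fintype ι] (Ω : Set (EVec n))
    (u : EVec n → ι → ℝ) (Du : EVec n → ι → Fin n → ℝ) : Prop :=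
  HasWeakDerivOn Ω u Du ∧ IntegrableOn (fun x => vnorm (u x) ^ 2) Ω volume ∧
    IntegrableOn (fun x => mnorm (Du x) ^ 2) Ω volume

/-- vanishing mean value `(u)_Ω = 0`. -/
def ZeroMean {n : ℕ} {ι : Type*} [Fintype ι] (Ω : Set (EVec n))
    (u : EVec n → ι → ℝ) : Prop :=
  ∀ a : ι, ∫ x in Ω, u x a = 0

/-- The `L^∞(Ω)` norm of a matrix field (w.r.t. the pointwise Frobenius norm). -/
noncomputable def linfNormOn {n N : ℕ} (Ω : Set (EVec n))
    (T : EVec n → Fin N → Fin n → ℝ) : ℝ≥0∞ :=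
  essSup (fun x => ENNReal.ofReal (mnorm (T x))) (volume.restrict Ω)

/-- `T ∈ W^{1,∞}(Ω)`: bounded and Lipschitz on `Ω`. -/
def MemW1inf {n N : ℕ} (Ω : Set (EVec n)) (T : EVec n → Fin N → Fin n → ℝ) : Prop :=
  ∃ C : NNReal, (∀ x ∈ Ω, ‖T x‖ ≤ C) ∧ LipschitzOnWith C T Ω

/-- `T ∈ W^{2,∞}(Ω)`: `T` is bounded with bounded Lipschitz derivative on `Ω`. -/
def MemW2inf {n N : ℕ} (Ω : Set (EVec n)) (T : EVec n → Fin N → Fin n → ℝ) : Prop :=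
  ∃ (C : NNReal) (DT : EVec n → EVec n →L[ℝ] (Fin N → Fin n → ℝ)),
    (∀ x ∈ Ω, ‖T x‖ ≤ C) ∧ (∀ x ∈ Ω, HasFDerivWithinAt T (DT x) Ω x) ∧
    (∀ x ∈ Ω, ‖DT x‖ ≤ C) ∧ LipschitzOnWith C DT Ω

/-- The nonlinear map `A(z) = f'(|z|) z / |z|` (equal to `0` at `z = 0`). -/
noncomputable def Amap {N n : ℕ} (f' : ℝ → ℝ) (z : Fin N → Fin n → ℝ) :
    Fin N → Fin n → ℝ :=
  fun a i => (f' (mnorm z) / mnorm z) * z a i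

/-- `u` is a weak solution of the Neumann problem for the integrand `f(|·|)` and datum `T₀`. -/
def IsWeakSolution {n N : ℕ} (Ω : Set (EVec n)) (f' : ℝ → ℝ)
    (T₀ : EVec n → Fin N → Fin n → ℝ)
    (u : EVec n → Fin N → ℝ) (Du : EVec n → Fin N → Fin n → ℝ) : Prop :=
  HasWeakDerivOn Ω u Du ∧
  ∀ φ Dφ, HasWeakDerivOn Ω φ Dφ →
    ∫ x in Ω, mdot (Amap f' (Du x)) (Dφ x) = ∫ x in Ω, mdot (T₀ x) (Dφ x)

/-- The functional `𝔉[w] = ∫_Ω (f(|∇w|) − T₀ · ∇w) dx` (as a function of the gradient). -/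
noncomputable def FF {n N : ℕ} (Ω : Set (EVec n)) (f : ℝ → ℝ)
    (T₀ : EVec n → Fin N → Fin n → ℝ) (Du : EVec n → Fin N → Fin n → ℝ) : ℝ :=
  ∫ x in Ω, (f (mnorm (Du x)) - mdot (T₀ x) (Du x))

/-- The regularised functional `𝔉_k[w] = 𝔉[w] + (2k)⁻¹ ∫_Ω |∇w|² dx`. -/
noncomputable def FFk {n N : ℕ} (Ω : Set (EVec n)) (f : ℝ → ℝ)
    (T₀ : EVec n → Fin N → Fin n → ℝ) (k : ℕ)
    (Du : EVec n → Fin N → Fin n → ℝ) : ℝ :=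
  FF Ω f T₀ Du + (2 * (k : ℝ))⁻¹ * ∫ x in Ω, mnorm (Du x) ^ 2

end



set_option linter.unusedSectionVars false
set_option linter.unusedVariables false

theorem integrable_ind {X F : Type*} [MeasurableSpace X] {μ : Measure X} [NormedAddCommGroup F]
    {s : Set X} (hs : MeasurableSet s) {f : X → F}
    (h : IntegrableOn f s μ) : Integrable (s.indicator f) μ := h.integrable_indicator hs

/-- scalar weak derivative -/
def WD {n : ℕ} (Ω : Set (EVec n)) (u : EVec n → ℝ) (G : EVec n → EVec n →L[ℝ] ℝ) : Prop :=
  IntegrableOn u Ω volume ∧ IntegrableOn G Ω volume ∧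
  ∀ φ : EVec n → ℝ, ContDiff ℝ 1 φ → HasCompactSupport φ → tsupport φ ⊆ Ω →
    ∀ v : EVec n, ∫ x in Ω, u x * fderiv ℝ φ x v = - ∫ x in Ω, G x v * φ x

structure IsMol {n : ℕ} (ρ : EVec n → ℝ) : Prop where
  smooth : ContDiff ℝ (((⊤ : ℕ∞) : WithTop ℕ∞)) ρ
  cpt : HasCompactSupport ρ
  nonneg : ∀ x, 0 ≤ ρ x
  int_one : ∫ x, ρ x = 1

noncomputable def mol {n : ℕ} {F : Type*} [NormedAddCommGroup F] [NormedSpace ℝ F]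
    (ρ : EVec n → ℝ) (w : EVec n → F) : EVec n → F :=
  convolution ρ w (ContinuousLinearMap.lsmul ℝ ℝ) volume

section mollify
variable {n : ℕ} {F : Type*} [NormedAddCommGroup F] [NormedSpace ℝ F] [CompleteSpace F]

theorem IsMol.integrable {ρ : EVec n → ℝ} (h : IsMol ρ) : Integrable ρ :=
  integrable_of_integral_eq_one h.int_one

theorem mol_apply (ρ : EVec n → ℝ) (w : EVec n → F) (x : EVec n) :
    mol ρ w x = ∫ t, ρ t • w (x - t) := rfl

theorem mol_integrable {ρ : EVec n → ℝ} (h : IsMol ρ) {w : EVec n → F} (hw : Integrable w) :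
    Integrable (mol ρ w) :=
  h.integrable.integrable_convolution _ hw

theorem mol_norm_le {ρ : EVec n → ℝ} (h : IsMol ρ) {w : EVec n → F} (hw : Integrable w) :
    ∫ x, ‖mol ρ w x‖ ≤ ∫ x, ‖w x‖ := by
  have h1 : ∫ x, mol ρ (fun x => ‖w x‖) x = ∫ x, ‖w x‖ := by
    have := integral_convolution (ContinuousLinearMap.lsmul ℝ ℝ) h.integrable hw.norm
      (μ := volume) (ν := volume)
    simp only [ContinuousLinearMap.lsmul_apply, h.int_one, one_smul] at this
    exact this
  rw [← h1]
  refine integral_mono (mol_integrable h hw).norm (mol_integrable h hw.norm) ?_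
  intro x
  simp only [mol_apply]
  refine (norm_integral_le_integral_norm _).trans (le_of_eq ?_)
  congr 1; ext t
  rw [norm_smul, Real.norm_of_nonneg (h.nonneg t), smul_eq_mul]

theorem mol_contDiff {ρ : EVec n → ℝ} (h : IsMol ρ) {w : EVec n → F} (hw : LocallyIntegrable w) :
    ContDiff ℝ (((⊤ : ℕ∞) : WithTop ℕ∞)) (mol ρ w) :=
  h.cpt.contDiff_convolution_left _ h.smooth hw

theorem mol_exists {ρ : EVec n → ℝ} (h : IsMol ρ) {w : EVec n → F} (hw : LocallyIntegrable w)
    (x : EVec n) : Integrable (fun t => ρ t • w (x - t)) :=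
  h.cpt.convolutionExists_left (ContinuousLinearMap.lsmul ℝ ℝ) h.smooth.continuous hw x

theorem mol_sub {ρ : EVec n → ℝ} (h : IsMol ρ) {w w' : EVec n → F} (hw : Integrable w)
    (hw' : Integrable w') (x : EVec n) :
    mol ρ (fun y => w y - w' y) x = mol ρ w x - mol ρ w' x := by
  simp only [mol_apply, smul_sub]
  exact integral_sub (mol_exists h hw.locallyIntegrable x)
    (mol_exists h hw'.locallyIntegrable x)

theorem mol_approx {w : EVec n → F} (hw : Integrable w) {ε : ℝ} (hε : 0 < ε) :
    ∃ δ > 0, ∀ ρ : EVec n → ℝ, IsMol ρ → Function.support ρ ⊆ Metric.ball 0 δ →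
      ∫ x, ‖mol ρ w x - w x‖ ≤ ε := by
  obtain ⟨c, hc, hcw, hcc, hci⟩ := hw.exists_hasCompactSupport_integral_sub_le
    (show 0 < ε / 3 by positivity)
  set S := Metric.cthickening 1 (tsupport c) with hS
  have hScpt : IsCompact S := hc.isCompact.cthickening
  set V := volume.real S with hV
  have hV0 : 0 ≤ V := measureReal_nonneg
  set η := ε / (3 * (V + 1)) with hη
  have hη0 : 0 < η := by positivity
  have huc := hcc.uniformContinuous_of_tendsto_cocompact hc.is_zero_at_infty
  obtain ⟨δ, hδ, hδc⟩ := Metric.uniformContinuous_iff.1 huc η hη0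
  refine ⟨min δ 1, by positivity, fun ρ hρ hsupp => ?_⟩
  have hb : ∀ x, ‖mol ρ c x - c x‖ ≤ η := by
    intro x
    rw [← dist_eq_norm]
    refine dist_convolution_le hη0.le hsupp hρ.nonneg hρ.int_one hcc.aestronglyMeasurable ?_
    intro y hy
    exact (hδc (lt_of_lt_of_le hy (min_le_left _ _))).le
  have hz : ∀ x, x ∉ S → mol ρ c x - c x = 0 := by
    intro x hx
    have hcx : c x = 0 := by
      by_contra h
      exact hx (Metric.self_subset_cthickening _ (subset_tsupport _ h))
    rw [hcx, sub_zero, mol_apply]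
    rw [← integral_zero (EVec n) F (μ := volume)]
    congr 1; ext t
    by_cases ht : ρ t = 0
    · simp [ht]
    · have h1 := hsupp ht
      have : c (x - t) = 0 := by
        by_contra h
        apply hx
        refine Metric.mem_cthickening_of_dist_le x (x - t) 1 _ (subset_tsupport _ h) ?_
        rw [dist_eq_norm]; simp
        rw [mem_ball_zero_iff] at h1
        exact (h1.le.trans (min_le_right _ _))
      simp [this]
  have hI1 : Integrable (fun x => w x - c x) := hw.sub hci
  have e1 : ∫ x, ‖mol ρ c x - c x‖ ≤ ε / 3 := by
    have : ∫ x, ‖mol ρ c x - c x‖ ≤ ∫ x, S.indicator (fun _ => η) x := by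
      refine integral_mono ((mol_integrable hρ hci).sub hci).norm ?_ ?_
      · exact (integrable_indicator_iff hScpt.measurableSet).2
          (integrableOn_const hScpt.measure_lt_top.ne)
      · intro x
        by_cases hx : x ∈ S
        · simpa [hx] using hb x
        · simp [hx, hz x hx]
    refine this.trans ?_
    rw [integral_indicator hScpt.measurableSet, setIntegral_const, smul_eq_mul, ← hV, hη]
    rw [mul_div_assoc', div_le_div_iff₀ (by positivity) (by positivity)]
    nlinarith
  have hsplit : ∀ x, mol ρ w x - w x =
      mol ρ (fun y => w y - c y) x - (w x - c x) + (mol ρ c x - c x) := by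
    intro x
    rw [mol_sub hρ hw hci]; abel
  calc ∫ x, ‖mol ρ w x - w x‖
      ≤ ∫ x, ((‖mol ρ (fun y => w y - c y) x‖ + ‖w x - c x‖) + ‖mol ρ c x - c x‖) := by
        refine integral_mono ((mol_integrable hρ hw).sub hw).norm
          (((mol_integrable hρ hI1).norm.add hI1.norm).add
            ((mol_integrable hρ hci).sub hci).norm) ?_
        intro x
        simp only [hsplit x]
        exact (norm_add_le _ _).trans (by gcongr; exact norm_sub_le _ _)
    _ = ((∫ x, ‖mol ρ (fun y => w y - c y) x‖) + ∫ x, ‖w x - c x‖) +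
          ∫ x, ‖mol ρ c x - c x‖ := by
        have hJ : Integrable (fun x => ‖mol ρ (fun y => w y - c y) x‖ + ‖w x - c x‖) :=
          (mol_integrable hρ hI1).norm.add hI1.norm
        have hJ2 : Integrable (fun x => ‖mol ρ c x - c x‖) :=
          ((mol_integrable hρ hci).sub hci).norm
        rw [integral_add hJ hJ2, integral_add (mol_integrable hρ hI1).norm hI1.norm]
    _ ≤ ε := by
        have := mol_norm_le hρ hI1
        linarith

theorem mol_fderiv {Ω : Set (EVec n)} (hΩ : IsOpen Ω) {u : EVec n → ℝ}
    {G : EVec n → EVec n →L[ℝ] ℝ} (hu : WD Ω u G) {ρ : EVec n → ℝ} (hρ : IsMol ρ)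
    {x : EVec n} (hx : ∀ t ∈ tsupport ρ, x - t ∈ Ω) :
    fderiv ℝ (mol ρ (Ω.indicator u)) x = mol ρ (Ω.indicator G) x := by
  have hui : Integrable (Ω.indicator u) := (integrable_indicator_iff hΩ.measurableSet).2 hu.1
  have hGi : Integrable (Ω.indicator G) := integrable_ind hΩ.measurableSet hu.2.1
  have hd := hρ.cpt.hasFDerivAt_convolution_left (ContinuousLinearMap.lsmul ℝ ℝ)
    (hρ.smooth.of_le (by simp)) hui.locallyIntegrable x (μ := volume)
  rw [show mol ρ (Ω.indicator u) = convolution ρ (Ω.indicator u)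
    (ContinuousLinearMap.lsmul ℝ ℝ) volume from rfl, hd.fderiv]
  ext v
  have hρ1 : ContDiff ℝ 1 ρ := hρ.smooth.of_le (by simp)
  have hex : ConvolutionExistsAt (fderiv ℝ ρ) (Ω.indicator u) x
      ((ContinuousLinearMap.lsmul ℝ ℝ).precompL (EVec n)) volume :=
    (hρ.cpt.fderiv ℝ).convolutionExists_left _ (hρ1.continuous_fderiv one_ne_zero)
      hui.locallyIntegrable x
  rw [convolution_def, ContinuousLinearMap.integral_apply hex, mol_apply,
    ContinuousLinearMap.integral_apply (mol_exists hρ hGi.locallyIntegrable x)]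
  set φ : EVec n → ℝ := fun t => ρ (x - t) with hφ
  have hφ1 : ContDiff ℝ 1 φ := hρ1.comp (contDiff_const.sub contDiff_id)
  have htsub : tsupport φ ⊆ (fun t => x - t) ⁻¹' (tsupport ρ) :=
    closure_minimal (fun t ht => subset_tsupport _ ht)
      ((isClosed_tsupport ρ).preimage (by fun_prop))
  have hφc : HasCompactSupport φ := by
    refine HasCompactSupport.of_support_subset_isCompact
      (K := (fun t => x - t) '' tsupport ρ) (hρ.cpt.isCompact.image (by fun_prop)) ?_
    intro t ht
    exact ⟨x - t, subset_tsupport _ ht, by simp⟩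
  have hφs : tsupport φ ⊆ Ω := by
    intro t ht
    have := hx _ (htsub ht)
    simpa using this
  have key := hu.2.2 φ hφ1 hφc hφs v
  have hdφ : ∀ t, fderiv ℝ φ t v = - fderiv ℝ ρ (x - t) v := by
    intro t
    have h1 : HasFDerivAt ρ (fderiv ℝ ρ (x - t)) (x - t) :=
      (hρ1.differentiable (by simp) _).hasFDerivAt
    have h2 : HasFDerivAt (fun t : EVec n => x - t) (-(ContinuousLinearMap.id ℝ (EVec n))) t := by
      simpa using (hasFDerivAt_id t).const_sub x
    have := (h1.comp t h2).fderiv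
    rw [show φ = ρ ∘ (fun t => x - t) from rfl, this]
    simp
  rw [← integral_indicator hΩ.measurableSet, ← integral_indicator hΩ.measurableSet] at key
  have e1 : ∫ t, (((ContinuousLinearMap.lsmul ℝ ℝ).precompL (EVec n) (fderiv ℝ ρ t))
      (Ω.indicator u (x - t))) v = ∫ t, fderiv ℝ ρ (x - t) v * Ω.indicator u t := by
    rw [← integral_sub_left_eq_self _ volume x]
    congr 1; ext t
    simp
  have e2 : ∫ t, (ρ t • Ω.indicator G (x - t)) v = ∫ t, φ t * (Ω.indicator G t v) := by
    rw [← integral_sub_left_eq_self _ volume x]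
    congr 1; ext t
    simp [hφ]
  rw [e1, e2, ← neg_inj, ← integral_neg]
  convert key using 1
  · congr 1; ext t
    by_cases ht : t ∈ Ω
    · simp [ht, hdφ]; ring
    · simp [ht]
  · congr 2; ext t
    by_cases ht : t ∈ Ω
    · simp [ht]; ring
    · simp [ht]

theorem exists_mol (q : EVec n) {r : ℝ} (hr : 0 < r) :
    ∃ ρ : EVec n → ℝ, IsMol ρ ∧ tsupport ρ ⊆ Metric.closedBall q r := by
  let b : ContDiffBump q := ⟨r / 2, r, by positivity, by linarith⟩
  exact ⟨b.normed volume, ⟨b.contDiff_normed, b.hasCompactSupport_normed, b.nonneg_normed,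
    b.integral_normed⟩, b.tsupport_normed_eq.subset⟩

end mollify

section lip
variable {n : ℕ}

theorem lip_weak {f : EVec n → ℝ} {K : NNReal} (hf : LipschitzWith K f) {φ : EVec n → ℝ}
    (hφ : ContDiff ℝ 1 φ) (hc : HasCompactSupport φ) (v : EVec n) :
    ∫ x, f x * fderiv ℝ φ x v = - ∫ x, fderiv ℝ f x v * φ x := by
  obtain ⟨D, hD⟩ := ContDiff.lipschitzWith_of_hasCompactSupport hc hφ (by simp)
  have := hf.integral_lineDeriv_mul_eq hD hc v (μ := volume)
  have h1 : ∫ x, lineDeriv ℝ f x v * φ x = ∫ x, fderiv ℝ f x v * φ x := by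
    refine integral_congr_ae ?_
    filter_upwards [hf.ae_differentiableAt (μ := volume)] with x hx
    rw [hx.lineDeriv_eq_fderiv]
  have h2 : ∫ x, lineDeriv ℝ φ x (-v) * f x = - ∫ x, f x * fderiv ℝ φ x v := by
    rw [← integral_neg]
    congr 1; ext x
    rw [(hφ.differentiable (by simp) x).lineDeriv_eq_fderiv]; simp; ring
  rw [← h1, this, h2, neg_neg]

theorem exists_lip_vol (n : ℕ) : ∃ c : ℝ≥0∞, c ≠ 0 ∧ c ≠ ∞ ∧
    (volume : Measure (EVec n)) = c • Measure.hausdorffMeasure (n : ℝ) := by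
  have h : Measure.IsAddHaarMeasure (G := EVec n) (Measure.hausdorffMeasure (n : ℝ)) := by
    have := isAddHaarMeasure_hausdorffMeasure (E := EVec n)
    simpa using this
  exact ⟨_, by simpa using (Measure.addHaarScalarFactor_pos_of_isAddHaarMeasure _ _).ne', by simp,
    Measure.isAddLeftInvariant_eq_smul (volume : Measure (EVec n))
      (Measure.hausdorffMeasure (n : ℝ))⟩

theorem lip_vol {g : EVec n → EVec n} {K : NNReal} (hg : LipschitzWith K g) (s : Set (EVec n)) :
    volume (g '' s) ≤ (K : ℝ≥0∞) ^ n * volume s := by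
  obtain ⟨c, hc0, hct, hc⟩ := exists_lip_vol n
  rw [hc, Measure.smul_apply, Measure.smul_apply, smul_eq_mul, smul_eq_mul]
  have := hg.hausdorffMeasure_image_le (d := n) (by positivity) s
  rw [ENNReal.rpow_natCast] at this
  calc _ ≤ c * ((K : ℝ≥0∞) ^ n * Measure.hausdorffMeasure (n : ℝ) s) := by gcongr
    _ = _ := by ring

/-- pushing forward Lebesgue measure by a bi-Lipschitz map -/
theorem map_le {h g : EVec n → EVec n} {K : NNReal} (hh : Measurable h) (hg : LipschitzWith K g)
    {O D : Set (EVec n)} (hmap : ∀ x ∈ O, h x ∈ D) (hinv : ∀ x ∈ O, g (h x) = x) :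
    (volume.restrict O).map h ≤ ((K : ℝ≥0∞) ^ n) • volume.restrict D := by
  refine Measure.le_iff.2 fun s hs => ?_
  rw [Measure.map_apply hh hs, Measure.restrict_apply (hh hs), Measure.smul_apply,
    Measure.restrict_apply hs, smul_eq_mul]
  refine le_trans (measure_mono ?_) (lip_vol hg (s ∩ D))
  intro x hx
  exact ⟨h x, ⟨hx.1, hmap x hx.2⟩, hinv x hx.2⟩

end lip

set_option linter.unusedSectionVars false
set_option linter.unusedVariables false

section poinc
variable {n : ℕ}

theorem lint_affine {G : EVec n → ℝ≥0∞} (hG : Measurable G) (y' : EVec n) {s : ℝ}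
    (hs0 : 0 ≤ s) (hs : s ≤ 1 / 2) :
    ∫⁻ y, G ((1 - s) • y + s • y') ≤ 2 ^ n * ∫⁻ y, G y := by
  have h1 : (1 - s) ≠ 0 := by linarith
  have hm := Measure.map_addHaar_smul (volume : Measure (EVec n)) h1
  have hG' : Measurable (fun z => G (z + s • y')) := hG.comp (measurable_id.add_const _)
  have : ∫⁻ y, G ((1 - s) • y + s • y') = ∫⁻ z, G (z + s • y') ∂(Measure.map ((1 - s) • ·)
      (volume : Measure (EVec n))) := by
    rw [lintegral_map hG' (measurable_const_smul _)]
  rw [this, hm, lintegral_smul_measure, lintegral_add_right_eq_self, smul_eq_mul]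
  gcongr
  rw [show (2 : ℝ≥0∞) ^ n = ENNReal.ofReal (2 ^ n) by
    rw [ENNReal.ofReal_pow (by norm_num)]; norm_num]
  apply ENNReal.ofReal_le_ofReal
  simp only [finrank_euclideanSpace, Fintype.card_fin]
  rw [← inv_pow, abs_of_nonneg (by apply pow_nonneg; rw [inv_nonneg]; linarith)]
  gcongr
  · rw [inv_nonneg]; linarith
  · rw [inv_le_comm₀ (by linarith) (by norm_num)]; linarith

theorem half_seg {D : Set (EVec n)} (hD : Convex ℝ D) {d : ℝ}
    (hd : ∀ y ∈ D, ∀ y' ∈ D, ‖y' - y‖ ≤ d) {f : EVec n → ℝ} (hf : ContDiff ℝ 1 f)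
    {y y' : EVec n} (hy : y ∈ D) (hy' : y' ∈ D) :
    ‖f ((1 / 2 : ℝ) • y + (1 / 2 : ℝ) • y') - f y‖ₑ ≤ ENNReal.ofReal d *
      ∫⁻ s in Ioc (0:ℝ) (1/2), D.indicator (fun z => ‖fderiv ℝ f z‖ₑ) ((1 - s) • y + s • y') := by
  have hd0 : 0 ≤ d := (norm_nonneg _).trans (hd y hy y' hy')
  have hder : ∀ s : ℝ, HasDerivAt (fun s : ℝ => f ((1 - s) • y + s • y'))
      (fderiv ℝ f ((1 - s) • y + s • y') (y' - y)) s := by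
    intro s
    have h1 : HasDerivAt (fun s : ℝ => (1 - s) • y + s • y') (y' - y) s := by
      have := (((hasDerivAt_id s).const_sub 1).smul_const y).add ((hasDerivAt_id s).smul_const y')
      convert! this using 1
      simp; abel
    exact ((hf.differentiable (by simp) _).hasFDerivAt).comp_hasDerivAt s h1
  have hcont : Continuous (fun s : ℝ => fderiv ℝ f ((1 - s) • y + s • y') (y' - y)) := by
    have := hf.continuous_fderiv (by simp)
    fun_prop
  have hi := intervalIntegral.integral_eq_sub_of_hasDerivAt (a := 0) (b := 1/2)
    (fun s _ => hder s) (hcont.intervalIntegrable _ _)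
  have e : f ((1 / 2 : ℝ) • y + (1 / 2 : ℝ) • y') - f y =
      ∫ s in Ioc (0:ℝ) (1/2), fderiv ℝ f ((1 - s) • y + s • y') (y' - y) := by
    rw [← intervalIntegral.integral_of_le (by norm_num), hi]
    norm_num
  rw [e]
  refine (enorm_integral_le_lintegral_enorm _).trans ?_
  rw [← lintegral_const_mul' _ _ ENNReal.ofReal_ne_top]
  refine setLIntegral_mono' measurableSet_Ioc fun s hs => ?_
  have hmem : (1 - s) • y + s • y' ∈ D :=
    hD hy hy' (by linarith [hs.2]) hs.1.le (by ring)
  rw [indicator_of_mem hmem]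
  calc ‖fderiv ℝ f ((1 - s) • y + s • y') (y' - y)‖ₑ
      ≤ ‖fderiv ℝ f ((1 - s) • y + s • y')‖ₑ * ‖y' - y‖ₑ := ContinuousLinearMap.le_opENorm _ _
    _ ≤ ‖fderiv ℝ f ((1 - s) • y + s • y')‖ₑ * ENNReal.ofReal d := by
        gcongr
        rw [← ofReal_norm]
        exact ENNReal.ofReal_le_ofReal (hd y hy y' hy')
    _ = _ := mul_comm _ _

set_option maxHeartbeats 1000000 in
theorem poincare_double {D : Set (EVec n)} (hD : Convex ℝ D) (hDm : MeasurableSet D) {d : ℝ}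
    (hd : ∀ y ∈ D, ∀ y' ∈ D, ‖y' - y‖ ≤ d) {f : EVec n → ℝ} (hf : ContDiff ℝ 1 f) :
    ∫⁻ y in D, ∫⁻ y' in D, ‖f y - f y'‖ₑ ≤
      2 * (ENNReal.ofReal d * (volume D * (2 ^ n * ∫⁻ z in D, ‖fderiv ℝ f z‖ₑ))) := by
  set G : EVec n → ℝ≥0∞ := D.indicator (fun z => ‖fderiv ℝ f z‖ₑ) with hG
  have hfc := hf.continuous_fderiv (by simp)
  have hGm : Measurable G := (hfc.enorm.measurable).indicator hDm
  have hGi : ∫⁻ z in D, ‖fderiv ℝ f z‖ₑ = ∫⁻ z, G z := (lintegral_indicator hDm _).symm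
  set Φ : EVec n → EVec n → ℝ≥0∞ := fun y y' =>
    ENNReal.ofReal d * ∫⁻ s in Ioc (0:ℝ) (1/2), G ((1 - s) • y + s • y') with hΦ
  have hΦm : Measurable (Function.uncurry Φ) := by
    refine Measurable.const_mul ?_ _
    refine Measurable.lintegral_prod_right' (ν := volume.restrict (Ioc (0:ℝ) (1/2)))
      (f := fun q : (EVec n × EVec n) × ℝ => G ((1 - q.2) • q.1.1 + q.2 • q.1.2)) ?_
    exact hGm.comp (by fun_prop)
  have hsec : ∀ y, Measurable (Φ y) := fun y => hΦm.of_uncurry_left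
  have hΦm2 : Measurable (fun y => ∫⁻ y' in D, Φ y y') := hΦm.lintegral_prod_right'
  clear_value Φ
  have hJ : ∫⁻ y in D, ∫⁻ y' in D, Φ y' y ≤
      ENNReal.ofReal d * (volume D * (2 ^ n * ∫⁻ z, G z)) := by
    calc ∫⁻ y in D, ∫⁻ y' in D, Φ y' y
        ≤ ∫⁻ y in D, ENNReal.ofReal d * (2 ^ n * ∫⁻ z, G z) := by
          refine lintegral_mono fun y => ?_
          simp only [hΦ]
          rw [lintegral_const_mul' _ _ ENNReal.ofReal_ne_top]
          gcongr
          rw [lintegral_lintegral_swap (by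
            apply Measurable.aemeasurable
            exact hGm.comp (by fun_prop))]
          calc ∫⁻ s in Ioc (0:ℝ) (1/2), ∫⁻ y' in D, G ((1 - s) • y' + s • y)
              ≤ ∫⁻ s in Ioc (0:ℝ) (1/2), 2 ^ n * ∫⁻ z, G z := by
                refine setLIntegral_mono' measurableSet_Ioc fun s hs => ?_
                refine (setLIntegral_le_lintegral _ _).trans ?_
                exact lint_affine hGm y hs.1.le hs.2
            _ ≤ 2 ^ n * ∫⁻ z, G z := by
                rw [setLIntegral_const]
                have : volume (Ioc (0:ℝ) (1/2)) ≤ 1 := by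
                  rw [Real.volume_Ioc]; norm_num
                calc _ ≤ (2 ^ n * ∫⁻ z, G z) * 1 := by gcongr
                  _ = _ := mul_one _
      _ = _ := by rw [setLIntegral_const]; ring
  have hJ' : ∫⁻ y in D, ∫⁻ y' in D, Φ y y' = ∫⁻ y in D, ∫⁻ y' in D, Φ y' y :=
    lintegral_lintegral_swap hΦm.aemeasurable
  calc ∫⁻ y in D, ∫⁻ y' in D, ‖f y - f y'‖ₑ
      ≤ ∫⁻ y in D, ∫⁻ y' in D, (Φ y y' + Φ y' y) := by
        refine setLIntegral_mono' hDm fun y hy => setLIntegral_mono' hDm fun y' hy' => ?_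
        have h1 := half_seg hD hd hf hy hy'
        have h2 := half_seg hD hd hf hy' hy
        rw [add_comm ((1 / 2 : ℝ) • y')] at h2
        set m := f ((1 / 2 : ℝ) • y + (1 / 2 : ℝ) • y')
        have : f y - f y' = (m - f y') - (m - f y) := by ring
        rw [this, add_comm]
        subst hΦ
        exact enorm_sub_le.trans (add_le_add h2 h1)
    _ = (∫⁻ y in D, ∫⁻ y' in D, Φ y y') + ∫⁻ y in D, ∫⁻ y' in D, Φ y' y := by
        rw [← lintegral_add_left]
        · refine lintegral_congr fun y => ?_
          rw [lintegral_add_left (hsec y)]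
        · exact hΦm2
    _ ≤ _ := by
        rw [hJ', ← two_mul, hGi]
        gcongr

theorem poincare_C1 {D : Set (EVec n)} (hD : Convex ℝ D) (hDm : MeasurableSet D)
    (hb : Bornology.IsBounded D) :
    ∃ C : ℝ, 0 ≤ C ∧ ∀ f : EVec n → ℝ, ContDiff ℝ 1 f →
      ∃ c : ℝ, ∫ x in D, |f x - c| ≤ C * ∫ x in D, ‖fderiv ℝ f x‖ := by
  obtain ⟨d, hd⟩ := Metric.isBounded_iff.1 hb
  have hd' : ∀ y ∈ D, ∀ y' ∈ D, ‖y' - y‖ ≤ d := fun y hy y' hy' => by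
    rw [← dist_eq_norm]; exact hd hy' hy
  have hfin : volume D ≠ ∞ := hb.measure_lt_top.ne
  refine ⟨2 * |d| * 2 ^ n, by positivity, fun f hf => ?_⟩
  by_cases h0 : volume D = 0
  · refine ⟨0, ?_⟩
    simp [Measure.restrict_eq_zero.2 h0]
  have hcpt : IsCompact (closure D) := hb.isCompact_closure
  have hfc := hf.continuous_fderiv (by simp)
  have hi1 : ∀ c : ℝ, IntegrableOn (fun x => |f x - c|) D := fun c => by
    refine IntegrableOn.mono_set ?_ subset_closure
    exact ((hf.continuous.sub continuous_const).abs).continuousOn.integrableOn_compact hcpt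
  have hi2 : IntegrableOn (fun x => ‖fderiv ℝ f x‖) D :=
    IntegrableOn.mono_set (hfc.norm.continuousOn.integrableOn_compact hcpt) subset_closure
  have hP := poincare_double hD hDm hd' hf
  have hGfin : ∫⁻ z in D, ‖fderiv ℝ f z‖ₑ = ENNReal.ofReal (∫ x in D, ‖fderiv ℝ f x‖) := by
    rw [ofReal_integral_eq_lintegral_ofReal hi2 (Eventually.of_forall fun _ => norm_nonneg _)]
    simp_rw [ofReal_norm]
  have hne : ∫⁻ y in D, ∫⁻ y' in D, ‖f y - f y'‖ₑ ≠ ∞ := by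
    refine ne_top_of_le_ne_top ?_ hP
    rw [hGfin]
    finiteness
  have hms : Measurable (fun y => ∫⁻ y' in D, ‖f y - f y'‖ₑ) := by
    refine Measurable.lintegral_prod_right' (ν := volume.restrict D)
      (f := fun q : EVec n × EVec n => ‖f q.1 - f q.2‖ₑ) ?_
    have := hf.continuous
    exact Continuous.measurable (by fun_prop)
  obtain ⟨y, hy, hle⟩ := exists_le_setLAverage h0 hfin hms.aemeasurable
  refine ⟨f y, ?_⟩
  rw [setLAverage_eq] at hle
  have h1 : ENNReal.ofReal (∫ x in D, |f x - f y|) = ∫⁻ y' in D, ‖f y - f y'‖ₑ := by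
    rw [ofReal_integral_eq_lintegral_ofReal (hi1 _) (Eventually.of_forall fun _ => abs_nonneg _)]
    refine lintegral_congr fun x => ?_
    rw [← ofReal_norm, Real.norm_eq_abs, abs_sub_comm]
  have h2 : ENNReal.ofReal (∫ x in D, |f x - f y|) ≤
      ENNReal.ofReal (2 * |d| * 2 ^ n * ∫ x in D, ‖fderiv ℝ f x‖) := by
    rw [h1]
    refine hle.trans ?_
    rw [ENNReal.div_le_iff h0 hfin]
    refine hP.trans ?_
    rw [hGfin, ENNReal.ofReal_mul (by positivity), ENNReal.ofReal_mul (by positivity),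
      ENNReal.ofReal_mul (by positivity), ENNReal.ofReal_pow (by positivity)]
    have : ENNReal.ofReal d ≤ ENNReal.ofReal |d| := ENNReal.ofReal_le_ofReal (le_abs_self d)
    rw [show ENNReal.ofReal 2 = 2 by norm_num]
    calc _ ≤ 2 * (ENNReal.ofReal |d| * (volume D * (2 ^ n *
        ENNReal.ofReal (∫ x in D, ‖fderiv ℝ f x‖)))) := by gcongr
      _ = _ := by ring
  exact (ENNReal.ofReal_le_ofReal_iff (by positivity)).1 h2

theorem approx_gen {D S : Set (EVec n)} (hD : IsOpen D) (hb : Bornology.IsBounded D)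
    (hS : ∀ δ > 0, ∃ ρ : EVec n → ℝ, IsMol ρ ∧ Function.support ρ ⊆ Metric.ball 0 δ ∧
      ∀ x ∈ S, ∀ t ∈ tsupport ρ, x - t ∈ D) (hSm : MeasurableSet S) (hSD : S ⊆ D)
    {V : EVec n → ℝ} {G : EVec n → EVec n →L[ℝ] ℝ} (hV : WD D V G) {ε : ℝ} (hε : 0 < ε) :
    ∃ W : EVec n → ℝ, ContDiff ℝ (((⊤ : ℕ∞) : WithTop ℕ∞)) W ∧ HasCompactSupport W ∧
      ∫ x in D, |W x - V x| ≤ ε ∧ ∫ x in S, ‖fderiv ℝ W x - G x‖ ≤ ε := by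
  have hVi : Integrable (D.indicator V) := integrable_ind hD.measurableSet hV.1
  have hGi : Integrable (D.indicator G) := integrable_ind hD.measurableSet hV.2.1
  obtain ⟨δ1, h1, H1⟩ := mol_approx hVi hε
  obtain ⟨δ2, h2, H2⟩ := mol_approx hGi hε
  obtain ⟨ρ, hρ, hsupp, hx⟩ := hS (min δ1 δ2) (by positivity)
  refine ⟨mol ρ (D.indicator V), mol_contDiff hρ hVi.locallyIntegrable, ?_, ?_, ?_⟩
  · refine hρ.cpt.convolution _ (HasCompactSupport.of_support_subset_isCompact
      hb.isCompact_closure ?_)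
    exact (support_indicator_subset).trans subset_closure
  · refine le_trans ?_ (H1 ρ hρ (hsupp.trans (Metric.ball_subset_ball (min_le_left _ _))))
    calc ∫ x in D, |mol ρ (D.indicator V) x - V x|
        = ∫ x in D, ‖mol ρ (D.indicator V) x - D.indicator V x‖ := by
          refine setIntegral_congr_fun hD.measurableSet fun x hx => ?_
          simp [hx]
      _ ≤ _ := setIntegral_le_integral ((mol_integrable hρ hVi).sub hVi).norm
          (Eventually.of_forall fun _ => norm_nonneg _)
  · refine le_trans ?_ (H2 ρ hρ (hsupp.trans (Metric.ball_subset_ball (min_le_right _ _))))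
    calc ∫ x in S, ‖fderiv ℝ (mol ρ (D.indicator V)) x - G x‖
        = ∫ x in S, ‖mol ρ (D.indicator G) x - D.indicator G x‖ := by
          refine setIntegral_congr_fun hSm fun x hxS => ?_
          rw [mol_fderiv hD hV hρ (hx x hxS), indicator_of_mem (hSD hxS)]
      _ ≤ _ := setIntegral_le_integral ((mol_integrable hρ hGi).sub hGi).norm
          (Eventually.of_forall fun _ => norm_nonneg _)

theorem approx_compact {D S : Set (EVec n)} (hD : IsOpen D) (hb : Bornology.IsBounded D)
    (hS : IsCompact S) (hSD : S ⊆ D)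
    {V : EVec n → ℝ} {G : EVec n → EVec n →L[ℝ] ℝ} (hV : WD D V G) {ε : ℝ} (hε : 0 < ε) :
    ∃ W : EVec n → ℝ, ContDiff ℝ (((⊤ : ℕ∞) : WithTop ℕ∞)) W ∧ HasCompactSupport W ∧
      ∫ x in D, |W x - V x| ≤ ε ∧ ∫ x in S, ‖fderiv ℝ W x - G x‖ ≤ ε := by
  refine approx_gen hD hb ?_ hS.measurableSet hSD hV hε
  intro δ hδ
  obtain ⟨η, hη, hηD⟩ := hS.exists_cthickening_subset_open hD hSD
  have hm : 0 < min (δ / 2) η := by positivity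
  obtain ⟨ρ, hρ, hsupp⟩ := exists_mol (0 : EVec n) hm
  refine ⟨ρ, hρ, ?_, ?_⟩
  · refine (subset_tsupport ρ).trans (hsupp.trans (Metric.closedBall_subset_ball ?_))
    exact (min_le_left _ _).trans_lt (by linarith)
  · intro x hx t ht
    apply hηD
    refine Metric.mem_cthickening_of_dist_le _ x _ _ hx ?_
    have := hsupp ht
    rw [mem_closedBall_zero_iff] at this
    rw [dist_eq_norm]; simp
    exact this.trans (min_le_right _ _)

/-- half ball -/
def HB {n : ℕ} (e p : EVec n) (r : ℝ) : Set (EVec n) := Metric.ball p r ∩ {y | 0 < ⟪e, y⟫}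

theorem HB_open (e p : EVec n) (r : ℝ) : IsOpen (HB e p r) :=
  Metric.isOpen_ball.inter (isOpen_lt (by fun_prop) (by fun_prop))

theorem HB_bdd (e p : EVec n) (r : ℝ) : Bornology.IsBounded (HB e p r) :=
  Metric.isBounded_ball.subset inter_subset_left

theorem HB_convex (e p : EVec n) (r : ℝ) : Convex ℝ (HB e p r) :=
  (convex_ball p r).inter (by
    have := convex_halfSpace_gt (𝕜 := ℝ) (f := fun y : EVec n => (⟪e, y⟫ : ℝ))
      ((innerSL ℝ e).isBoundedLinearMap.toIsLinearMap) 0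
    exact this)

theorem approx_half {e p : EVec n} (he : ‖e‖ = 1) {r : ℝ} (hr : 0 < r)
    {V : EVec n → ℝ} {G : EVec n → EVec n →L[ℝ] ℝ} (hV : WD (HB e p r) V G) {ε : ℝ}
    (hε : 0 < ε) :
    ∃ W : EVec n → ℝ, ContDiff ℝ (((⊤ : ℕ∞) : WithTop ℕ∞)) W ∧ HasCompactSupport W ∧
      ∫ x in HB e p r, |W x - V x| ≤ ε ∧ ∫ x in HB e p (r / 2), ‖fderiv ℝ W x - G x‖ ≤ ε := by
  refine approx_gen (HB_open _ _ _) (HB_bdd _ _ _) ?_ (HB_open _ _ _).measurableSet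
    (inter_subset_inter_left _ (Metric.ball_subset_ball (by linarith))) hV hε
  intro δ hδ
  set s := min (δ / 4) (r / 6) with hs
  have hs0 : 0 < s := by positivity
  have hs1 : s ≤ δ / 4 := min_le_left _ _
  have hs2 : s ≤ r / 6 := min_le_right _ _
  obtain ⟨ρ, hρ, hsupp⟩ := exists_mol (-(2 * s) • e) hs0
  have hn : ∀ t ∈ tsupport ρ, ‖t‖ ≤ 3 * s := by
    intro t ht
    have h1 := hsupp ht
    rw [mem_closedBall_iff_norm] at h1
    calc ‖t‖ = ‖(t - -(2 * s) • e) + -(2 * s) • e‖ := by simp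
      _ ≤ s + 2 * s := by
        refine (norm_add_le _ _).trans (add_le_add h1 ?_)
        rw [norm_smul, he]; simp [abs_of_pos hs0]
      _ = 3 * s := by ring
  refine ⟨ρ, hρ, ?_, ?_⟩
  · intro t ht
    rw [mem_ball_zero_iff]
    have := hn t (subset_tsupport _ ht)
    linarith
  · intro x hx t ht
    refine ⟨?_, ?_⟩
    · have h1 := hx.1
      rw [mem_ball_iff_norm] at h1 ⊢
      calc ‖x - t - p‖ = ‖(x - p) - t‖ := by congr 1; abel
        _ ≤ ‖x - p‖ + ‖t‖ := norm_sub_le _ _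
        _ < r / 2 + 3 * s := add_lt_add_of_lt_of_le h1 (hn t ht)
        _ ≤ r := by linarith
    · have h1 : 0 < ⟪e, x⟫ := hx.2
      have h2 := hsupp ht
      rw [mem_closedBall_iff_norm] at h2
      have h3 : ⟪e, t - -(2 * s) • e⟫ ≤ s := by
        refine (real_inner_le_norm _ _).trans ?_
        rw [he, one_mul]; exact h2
      rw [inner_sub_right, inner_smul_right, real_inner_self_eq_norm_sq, he] at h3
      show 0 < ⟪e, x - t⟫
      rw [inner_sub_right]
      linarith

theorem fderiv_integrable {W : EVec n → ℝ} (hW : ContDiff ℝ (((⊤ : ℕ∞) : WithTop ℕ∞)) W)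
    (hc : HasCompactSupport W) : Integrable (fderiv ℝ W) :=
  (hW.continuous_fderiv (by simp)).integrable_of_hasCompactSupport (hc.fderiv ℝ)

theorem poincare_half {e p : EVec n} (he : ‖e‖ = 1) {r : ℝ} (hr : 0 < r) :
    ∃ C : ℝ, 0 ≤ C ∧ ∀ (V : EVec n → ℝ) (G : EVec n → EVec n →L[ℝ] ℝ), WD (HB e p r) V G →
      ∀ ε > 0, ∃ c : ℝ, ∫ x in HB e p (r / 2), |V x - c| ≤
        C * (∫ x in HB e p r, ‖G x‖) + ε := by
  obtain ⟨C, hC, H⟩ := poincare_C1 (HB_convex e p (r / 2)) (HB_open _ _ _).measurableSet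
    (HB_bdd _ _ _)
  refine ⟨C, hC, fun V G hV ε hε => ?_⟩
  set η := ε / (C + 1) with hη
  have hη0 : 0 < η := by positivity
  obtain ⟨W, hW, hWc, h1, h2⟩ := approx_half he hr hV hη0
  obtain ⟨c, hc⟩ := H W (hW.of_le (by simp))
  refine ⟨c, ?_⟩
  have hsub : HB e p (r / 2) ⊆ HB e p r :=
    inter_subset_inter_left _ (Metric.ball_subset_ball (by linarith))
  have hWi : Integrable W := hW.continuous.integrable_of_hasCompactSupport hWc
  have hfin : IsFiniteMeasure (volume.restrict (HB e p (r / 2))) :=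
    ⟨by simpa using (HB_bdd _ _ _).measure_lt_top⟩
  have hVi : IntegrableOn V (HB e p (r / 2)) := hV.1.mono_set hsub
  have hGi : IntegrableOn G (HB e p (r / 2)) := hV.2.1.mono_set hsub
  have a1 : ∫ x in HB e p (r / 2), |V x - c| ≤
      (∫ x in HB e p (r / 2), |W x - V x|) + ∫ x in HB e p (r / 2), |W x - c| := by
    have j1 : IntegrableOn (fun x => |W x - V x|) (HB e p (r / 2)) :=
      (hWi.integrableOn.sub hVi).abs
    have j2 : IntegrableOn (fun x => |W x - c|) (HB e p (r / 2)) :=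
      (hWi.integrableOn.sub (integrable_const c)).abs
    rw [← integral_add j1 j2]
    refine integral_mono (hVi.sub (integrable_const c)).abs (j1.add j2) fun x => ?_
    simp only
    rw [abs_sub_comm (W x) (V x)]
    exact abs_sub_le _ _ _
  have a2 : ∫ x in HB e p (r / 2), |W x - V x| ≤ η := by
    refine le_trans (setIntegral_mono_set (hWi.integrableOn.sub hV.1).abs
      (Eventually.of_forall fun _ => abs_nonneg _) hsub.eventuallyLE) h1
  have a3 : ∫ x in HB e p (r / 2), ‖fderiv ℝ W x‖ ≤ η + ∫ x in HB e p r, ‖G x‖ := by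
    have hWi' := (fderiv_integrable hW hWc).integrableOn (s := HB e p (r / 2))
    have j1 : IntegrableOn (fun x => ‖fderiv ℝ W x - G x‖) (HB e p (r / 2)) :=
      (hWi'.sub hGi).norm
    calc ∫ x in HB e p (r / 2), ‖fderiv ℝ W x‖
        ≤ ∫ x in HB e p (r / 2), (‖fderiv ℝ W x - G x‖ + ‖G x‖) := by
          refine integral_mono hWi'.norm (j1.add hGi.norm) fun x => ?_
          simpa using norm_add_le (fderiv ℝ W x - G x) (G x)
      _ = (∫ x in HB e p (r / 2), ‖fderiv ℝ W x - G x‖) + ∫ x in HB e p (r / 2), ‖G x‖ :=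
          integral_add j1 hGi.norm
      _ ≤ _ := add_le_add h2 (setIntegral_mono_set hV.2.1.norm
          (Eventually.of_forall fun _ => norm_nonneg _) hsub.eventuallyLE)
  have a4 : C * ∫ x in HB e p (r / 2), ‖fderiv ℝ W x‖ ≤
      C * (η + ∫ x in HB e p r, ‖G x‖) := by gcongr
  have a5 : (C + 1) * η = ε := by rw [hη]; field_simp
  linarith

end poinc

set_option linter.unusedSectionVars false
set_option linter.unusedVariables false

section chain
variable {n : ℕ}

theorem comp_integrable {F : Type*} [NormedAddCommGroup F] {h g : EVec n → EVec n} {K : NNReal}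
    (hh : Measurable h)
    (hg : LipschitzWith K g) {O D : Set (EVec n)} (hmap : ∀ x ∈ O, h x ∈ D)
    (hinv : ∀ x ∈ O, g (h x) = x) {q : EVec n → F} (hq : IntegrableOn q D) :
    IntegrableOn (fun x => q (h x)) O := by
  have h1 : Integrable q (((K : ℝ≥0∞) ^ n) • volume.restrict D) :=
    Integrable.smul_measure hq (by simp)
  exact (h1.mono_measure (map_le hh hg hmap hinv)).comp_measurable hh

theorem comp_integral_le {h g : EVec n → EVec n} {K : NNReal} (hh : Measurable h)
    (hg : LipschitzWith K g) {O D : Set (EVec n)} (hmap : ∀ x ∈ O, h x ∈ D)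
    (hinv : ∀ x ∈ O, g (h x) = x) {q : EVec n → ℝ} (hq : IntegrableOn q D) (h0 : ∀ x, 0 ≤ q x) :
    ∫ x in O, q (h x) ≤ (K : ℝ) ^ n * ∫ x in D, q x := by
  have h1 : Integrable q (((K : ℝ≥0∞) ^ n) • volume.restrict D) :=
    Integrable.smul_measure hq (by simp)
  have h2 := h1.mono_measure (map_le hh hg hmap hinv)
  rw [← integral_map hh.aemeasurable h2.aestronglyMeasurable]
  refine (integral_mono_measure (map_le hh hg hmap hinv) (Eventually.of_forall h0) h1).trans ?_
  rw [integral_smul_measure]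
  simp

theorem chain_int {h g : EVec n → EVec n} {K K' : NNReal} (hh : LipschitzWith K' h)
    (hg : LipschitzWith K g) {O D : Set (EVec n)} (hmap : ∀ x ∈ O, h x ∈ D)
    (hinv : ∀ x ∈ O, g (h x) = x) {G : EVec n → EVec n →L[ℝ] ℝ} (hG : IntegrableOn G D) :
    IntegrableOn (fun x => (G (h x)).comp (fderiv ℝ h x)) O := by
  have hhm := hh.continuous.measurable
  have h1 : IntegrableOn (fun x => G (h x)) O := comp_integrable hhm hg hmap hinv hG
  have hm : AEStronglyMeasurable (fun x => fderiv ℝ h x) (volume.restrict O) :=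
    (measurable_fderiv ℝ h).aestronglyMeasurable
  refine Integrable.mono' (h1.norm.const_mul (K' : ℝ))
    ((ContinuousLinearMap.compL ℝ (EVec n) (EVec n) ℝ).aestronglyMeasurable_comp₂
      h1.aestronglyMeasurable hm) (Eventually.of_forall fun x => ?_)
  calc _ ≤ ‖G (h x)‖ * ‖fderiv ℝ h x‖ := ContinuousLinearMap.opNorm_comp_le _ _
    _ ≤ ‖G (h x)‖ * K' := by gcongr; exact norm_fderiv_le_of_lipschitz ℝ hh
    _ = _ := mul_comm _ _

theorem chain_WD {h g : EVec n → EVec n} {K K' : NNReal} (hh : LipschitzWith K' h)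
    (hg : LipschitzWith K g) {O D : Set (EVec n)} (hO : IsOpen O) (hD : IsOpen D)
    (hb : Bornology.IsBounded D) (hmap : ∀ x ∈ O, h x ∈ D)
    (hinv : ∀ x ∈ O, g (h x) = x) {V : EVec n → ℝ} {G : EVec n → EVec n →L[ℝ] ℝ}
    (hV : WD D V G) :
    WD O (fun x => V (h x)) (fun x => (G (h x)).comp (fderiv ℝ h x)) := by
  have hhm := hh.continuous.measurable
  refine ⟨comp_integrable hhm hg hmap hinv hV.1, chain_int hh hg hmap hinv hV.2.1, ?_⟩
  intro φ hφ hc hsupp v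
  set T := tsupport φ with hT
  have hTm : MeasurableSet T := (isClosed_tsupport φ).measurableSet
  have hS : IsCompact (h '' T) := hc.isCompact.image hh.continuous
  have hSD : h '' T ⊆ D := by rintro _ ⟨y, hy, rfl⟩; exact hmap y (hsupp hy)
  have hφ0 : ∀ x ∉ T, φ x = 0 := fun x hx => image_eq_zero_of_notMem_tsupport hx
  have hφ0' : ∀ x ∉ T, fderiv ℝ φ x v = 0 := fun x hx => by
    have : x ∉ tsupport (fderiv ℝ φ) := fun h => hx (tsupport_fderiv_subset ℝ h)
    rw [image_eq_zero_of_notMem_tsupport this]; rfl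
  have cut : ∀ q : EVec n → ℝ, (∀ x ∉ T, q x = 0) → ∫ x in O, q x = ∫ x in T, q x := by
    intro q hq
    rw [setIntegral_eq_integral_of_forall_compl_eq_zero (s := T) (fun x hx => hq x hx),
      setIntegral_eq_integral_of_forall_compl_eq_zero (s := O)
        (fun x hx => hq x (fun h => hx (hsupp h)))]
  have cut' : ∀ q : EVec n → ℝ, (∀ x ∉ T, q x = 0) → ∫ x, q x = ∫ x in T, q x := by
    intro q hq
    rw [setIntegral_eq_integral_of_forall_compl_eq_zero (s := T) (fun x hx => hq x hx)]
  rw [cut _ (fun x hx => by rw [hφ0' x hx, mul_zero]), cut _ (fun x hx => by rw [hφ0 x hx, mul_zero])]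
  -- bounds
  obtain ⟨M0, hM0⟩ := hc.exists_bound_of_continuous hφ.continuous
  have hdc : Continuous (fun x => fderiv ℝ φ x v) := (hφ.continuous_fderiv (by simp)).clm_apply continuous_const
  obtain ⟨M1, hM1⟩ := (hc.fderiv_apply ℝ v).exists_bound_of_continuous hdc
  have hM0p : 0 ≤ M0 := (norm_nonneg _).trans (hM0 0)
  have hM1p : 0 ≤ M1 := (norm_nonneg _).trans (hM1 0)
  have hTO : ∀ x ∈ T, h x ∈ h '' T := fun x hx => ⟨x, hx, rfl⟩
  have hTi : ∀ x ∈ T, g (h x) = x := fun x hx => hinv x (hsupp hx)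
  have key : ∀ ε > 0, |(∫ x in T, V (h x) * fderiv ℝ φ x v) +
      ∫ x in T, ((G (h x)).comp (fderiv ℝ h x)) v * φ x| ≤
      (M1 * (K : ℝ) ^ n + M0 * (K' * ‖v‖) * (K : ℝ) ^ n) * ε := by
    intro ε hε
    obtain ⟨W, hW, hWc, hW1, hW2⟩ := approx_compact hD hb hS hSD hV hε
    obtain ⟨A, hA⟩ := ContDiff.lipschitzWith_of_hasCompactSupport hWc hW (by simp)
    have hWi : IntegrableOn W D := (hW.continuous.integrable_of_hasCompactSupport hWc).integrableOn
    have hdWi : IntegrableOn (fderiv ℝ W) D := (fderiv_integrable hW hWc).integrableOn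
    have e0 := lip_weak (hA.comp hh) hφ hc v
    have e1 : ∫ x, fderiv ℝ (W ∘ h) x v * φ x =
        ∫ x, ((fderiv ℝ W (h x)).comp (fderiv ℝ h x)) v * φ x := by
      refine integral_congr_ae ?_
      filter_upwards [hh.ae_differentiableAt (μ := volume)] with x hx
      rw [fderiv_comp x (hW.differentiable (by simp) _) hx]
    rw [e1, cut' _ (fun x hx => by rw [hφ0' x hx, mul_zero]),
      cut' _ (fun x hx => by rw [hφ0 x hx, mul_zero])] at e0
    have i1 : ∀ Q : EVec n → ℝ, IntegrableOn Q D →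
        IntegrableOn (fun x => Q (h x) * fderiv ℝ φ x v) T := fun Q hQ =>
      ((comp_integrable hhm hg hmap hinv hQ).mono_set hsupp).mul_bdd (c := M1)
        hdc.aestronglyMeasurable (Eventually.of_forall hM1)
    have i2 : ∀ Q : EVec n → EVec n →L[ℝ] ℝ, IntegrableOn Q D →
        IntegrableOn (fun x => ((Q (h x)).comp (fderiv ℝ h x)) v * φ x) T := fun Q hQ =>
      ((((chain_int hh hg hmap hinv hQ).mono_set hsupp).apply_continuousLinearMap v)).mul_bdd
        (c := M0) hφ.continuous.aestronglyMeasurable (Eventually.of_forall hM0)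
    have j1 : IntegrableOn (fun x => |W x - V x|) D := (hWi.sub hV.1).abs
    have j2 : IntegrableOn (fun x => ‖fderiv ℝ W x - G x‖) (h '' T) :=
      IntegrableOn.mono_set (t := D) (hdWi.sub hV.2.1).norm hSD
    have k1 : ∫ x in T, |W (h x) - V (h x)| ≤ (K : ℝ) ^ n * ε :=
      (comp_integral_le hhm hg (O := T) (fun x hx => hmap x (hsupp hx)) hTi j1
        (fun _ => abs_nonneg _)).trans (by gcongr)
    have k2 : ∫ x in T, ‖fderiv ℝ W (h x) - G (h x)‖ ≤ (K : ℝ) ^ n * ε :=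
      (comp_integral_le hhm hg hTO hTi j2 (fun _ => norm_nonneg _)).trans (by gcongr)
    have l1 : IntegrableOn (fun x => |W (h x) - V (h x)|) T :=
      (comp_integrable hhm hg hmap hinv j1).mono_set hsupp
    have l2 : IntegrableOn (fun x => ‖fderiv ℝ W (h x) - G (h x)‖) T :=
      comp_integrable hhm hg hTO hTi j2
    have e2 : (∫ x in T, V (h x) * fderiv ℝ φ x v) +
        ∫ x in T, ((G (h x)).comp (fderiv ℝ h x)) v * φ x =
        ∫ x in T, ((V (h x) * fderiv ℝ φ x v - W (h x) * fderiv ℝ φ x v) +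
          (((G (h x)).comp (fderiv ℝ h x)) v * φ x -
            ((fderiv ℝ W (h x)).comp (fderiv ℝ h x)) v * φ x)) := by
      have s1 : IntegrableOn (fun x => V (h x) * fderiv ℝ φ x v - W (h x) * fderiv ℝ φ x v) T :=
        (i1 V hV.1).sub (i1 W hWi)
      have s2 : IntegrableOn (fun x => ((G (h x)).comp (fderiv ℝ h x)) v * φ x -
            ((fderiv ℝ W (h x)).comp (fderiv ℝ h x)) v * φ x) T :=
        (i2 G hV.2.1).sub (i2 _ hdWi)
      rw [integral_add s1 s2,
        integral_sub (i1 V hV.1) (i1 W hWi), integral_sub (i2 G hV.2.1) (i2 _ hdWi)]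
      have : ∫ x in T, W (h x) * fderiv ℝ φ x v =
        -∫ x in T, ((fderiv ℝ W (h x)).comp (fderiv ℝ h x)) v * φ x := e0
      rw [this]; ring
    rw [e2]
    calc _ ≤ ∫ x in T, (M1 * |W (h x) - V (h x)| +
          M0 * (K' * ‖v‖) * ‖fderiv ℝ W (h x) - G (h x)‖) := by
          rw [← Real.norm_eq_abs]
          refine norm_integral_le_of_norm_le ((l1.const_mul _).add (l2.const_mul _))
            (Eventually.of_forall fun x => ?_)
          refine (norm_add_le _ _).trans (add_le_add ?_ ?_)
          · rw [← sub_mul, norm_mul, mul_comm, Real.norm_eq_abs (V _ - _), abs_sub_comm]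
            gcongr; exact hM1 x
          · rw [← sub_mul, norm_mul, mul_comm, mul_assoc]
            have : ((G (h x)).comp (fderiv ℝ h x)) v - ((fderiv ℝ W (h x)).comp (fderiv ℝ h x)) v
              = (G (h x) - fderiv ℝ W (h x)) (fderiv ℝ h x v) := rfl
            rw [this]
            gcongr
            · exact hM0 x
            · refine (ContinuousLinearMap.le_opNorm _ _).trans ?_
              rw [norm_sub_rev, mul_comm]
              gcongr
              refine (ContinuousLinearMap.le_opNorm _ _).trans ?_
              gcongr
              exact norm_fderiv_le_of_lipschitz ℝ hh
      _ = M1 * (∫ x in T, |W (h x) - V (h x)|) +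
          M0 * (K' * ‖v‖) * ∫ x in T, ‖fderiv ℝ W (h x) - G (h x)‖ := by
          rw [integral_add (l1.const_mul _) (l2.const_mul _), integral_const_mul,
            integral_const_mul]
      _ ≤ M1 * ((K : ℝ) ^ n * ε) + M0 * (K' * ‖v‖) * ((K : ℝ) ^ n * ε) := by gcongr
      _ = _ := by ring
  set C := (M1 * (K : ℝ) ^ n + M0 * (K' * ‖v‖) * (K : ℝ) ^ n) with hC
  have hC0 : 0 ≤ C := by positivity
  have : |(∫ x in T, V (h x) * fderiv ℝ φ x v) +
      ∫ x in T, ((G (h x)).comp (fderiv ℝ h x)) v * φ x| ≤ 0 := by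
    refine le_of_forall_pos_le_add fun ε hε => ?_
    refine (key (ε / (C + 1)) (by positivity)).trans ?_
    rw [zero_add, mul_div_assoc', div_le_iff₀ (by positivity)]
    nlinarith
  have := abs_nonpos_iff.1 this
  linarith
end chain

set_option linter.unusedSectionVars false
set_option linter.unusedVariables false

section inv
variable {n : ℕ}

theorem det_pos_of_small {A : EVec n →L[ℝ] EVec n} (hA : ‖A‖ < 1) :
    0 < (1 + A : EVec n →L[ℝ] EVec n).det := by
  by_contra hcon
  push Not at hcon
  have hc : Continuous (fun s : ℝ => (1 + s • A : EVec n →L[ℝ] EVec n).det) :=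
    ContinuousLinearMap.continuous_det.comp (by fun_prop)
  have hmem : (0:ℝ) ∈ Icc ((1 + (1:ℝ) • A : EVec n →L[ℝ] EVec n).det)
      ((1 + (0:ℝ) • A : EVec n →L[ℝ] EVec n).det) := by
    constructor
    · simpa using hcon
    · have e0 : (1 + (0:ℝ) • A : EVec n →L[ℝ] EVec n) = 1 := by ext; simp
      rw [e0]
      have : (1 : EVec n →L[ℝ] EVec n).det = 1 := by
        simp [ContinuousLinearMap.det]
      rw [this]; exact zero_le_one
  obtain ⟨s, hs, hs0⟩ := intermediate_value_Icc' zero_le_one hc.continuousOn hmem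
  simp only at hs0
  have hk := LinearMap.bot_lt_ker_of_det_eq_zero hs0
  obtain ⟨x, hx, hx0⟩ := (Submodule.ne_bot_iff _).1 hk.ne'
  have hx' : x + s • A x = 0 := hx
  have : ‖x‖ ≤ ‖A‖ * ‖x‖ := by
    have e : x = -(s • A x) := eq_neg_of_add_eq_zero_left hx'
    calc ‖x‖ = ‖s • A x‖ := by rw [← norm_neg (s • A x), ← e]
      _ = |s| * ‖A x‖ := by rw [norm_smul, Real.norm_eq_abs]
      _ ≤ 1 * ‖A x‖ := by
        gcongr; rw [abs_of_nonneg hs.1]; exact hs.2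
      _ ≤ ‖A‖ * ‖x‖ := by rw [one_mul]; exact A.le_opNorm x
  have hxp : 0 < ‖x‖ := norm_pos_iff.2 hx0
  nlinarith

theorem small_bij {H : EVec n → EVec n} {c : NNReal} (hc : c < 1) (hH : LipschitzWith c H)
    {B : Set (EVec n)} (h0 : ∀ x ∉ B, H x = 0) :
    Function.Injective (fun x => x + H x) ∧ (fun x => x + H x) '' B = B := by
  have hinj : Function.Injective (fun x => x + H x) := by
    intro x y hxy
    simp only at hxy
    by_contra hne
    have h1 : x - y = H y - H x := by
      rw [sub_eq_sub_iff_add_eq_add, add_comm (H y), hxy]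
    have h2 : ‖x - y‖ ≤ c * ‖x - y‖ := by
      calc ‖x - y‖ = ‖H y - H x‖ := by rw [h1]
        _ ≤ c * ‖y - x‖ := hH.norm_sub_le y x
        _ = _ := by rw [norm_sub_rev]
    have h3 : 0 < ‖x - y‖ := norm_pos_iff.2 (sub_ne_zero.2 hne)
    have h4 : (c : ℝ) < 1 := by exact_mod_cast hc
    nlinarith
  refine ⟨hinj, ?_⟩
  ext y
  constructor
  · rintro ⟨x, hx, rfl⟩
    by_contra hcon
    have : x + H x = x := by
      apply hinj
      simp only
      rw [h0 _ hcon, add_zero]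
    simp only at hcon
    rw [this] at hcon
    exact hcon hx
  · intro hy
    have hcw : ContractingWith c (fun x => y - H x) := by
      refine ⟨hc, LipschitzWith.of_dist_le_mul fun a b => ?_⟩
      rw [dist_sub_left]; exact hH.dist_le_mul a b
    have hfix := hcw.fixedPoint_isFixedPt
    set x := ContractingWith.fixedPoint (fun x => y - H x) hcw
    have hx : y - H x = x := hfix
    have hxy : x + H x = y := (sub_eq_iff_eq_add.1 hx).symm
    refine ⟨x, ?_, hxy⟩
    by_contra hcon
    rw [h0 x hcon, add_zero] at hxy
    exact hcon (hxy ▸ hy)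

theorem area {T : EVec n → EVec n} {K : NNReal} (hT : LipschitzWith K T) {B : Set (EVec n)}
    (hB : MeasurableSet B) (hinj : InjOn T B) (q : EVec n → ℝ) :
    ∫ z in T '' B, q z = ∫ x in B, |(fderiv ℝ T x).det| * q (T x) := by
  set s := B ∩ {x | DifferentiableAt ℝ T x} with hs
  have hsm : MeasurableSet s := hB.inter (measurableSet_of_differentiableAt ℝ T)
  have hnull : volume (B \ s) = 0 := by
    refine measure_mono_null ?_ (hT.ae_differentiableAt (μ := volume))
    rintro x ⟨hx, hx'⟩ hd
    exact hx' ⟨hx, hd⟩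
  have h1 : s =ᵐ[volume] B :=
    (LE.le.eventuallyLE inter_subset_left).antisymm (ae_le_set.2 hnull)
  have h2 : T '' s =ᵐ[volume] T '' B := by
    refine (LE.le.eventuallyLE (image_mono inter_subset_left)).antisymm (ae_le_set.2 ?_)
    refine measure_mono_null (t := T '' (B \ s)) ?_ ?_
    · rintro _ ⟨⟨x, hx, rfl⟩, hx'⟩
      exact ⟨x, ⟨hx, fun h => hx' ⟨x, h, rfl⟩⟩, rfl⟩
    · have := lip_vol hT (B \ s)
      rw [hnull, mul_zero] at this
      exact le_antisymm this zero_le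
  rw [← setIntegral_congr_set h2, ← setIntegral_congr_set h1]
  have := integral_image_eq_integral_abs_det_fderiv_smul volume hsm
    (fun x hx => (hx.2 : DifferentiableAt ℝ T x).hasFDerivAt.hasFDerivWithinAt)
    (hinj.mono inter_subset_left) q
  simpa only [smul_eq_mul] using this

theorem det_poly (A : EVec n →L[ℝ] EVec n) : ∃ P : Polynomial ℝ, P.natDegree ≤ n ∧
    ∀ t : ℝ, (1 + t • A : EVec n →L[ℝ] EVec n).det = P.eval t := by
  let b := (EuclideanSpace.basisFun (Fin n) ℝ).toBasis
  let M := LinearMap.toMatrix b b (A : EVec n →ₗ[ℝ] EVec n)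
  refine ⟨((Polynomial.X : Polynomial ℝ) • M.map Polynomial.C +
    (1 : Matrix (Fin n) (Fin n) ℝ).map Polynomial.C).det, ?_, fun t => ?_⟩
  · simpa using Polynomial.natDegree_det_X_add_C_le M 1
  · rw [← Polynomial.coe_evalRingHom, RingHom.map_det]
    have h1 : (1 + t • A : EVec n →L[ℝ] EVec n).det =
      (LinearMap.toMatrix b b ((1 + t • A : EVec n →L[ℝ] EVec n) : EVec n →ₗ[ℝ] EVec n)).det :=
      (LinearMap.det_toMatrix b _).symm
    rw [h1]
    congr 1
    have h2 : ((1 + t • A : EVec n →L[ℝ] EVec n) : EVec n →ₗ[ℝ] EVec n) =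
      LinearMap.id + t • (A : EVec n →ₗ[ℝ] EVec n) := rfl
    rw [h2, map_add, map_smul, LinearMap.toMatrix_id]
    ext i j
    simp only [Matrix.add_apply, Matrix.smul_apply, RingHom.mapMatrix_apply, Matrix.map_apply,
      Polynomial.coe_evalRingHom, smul_eq_mul, Polynomial.eval_add, Polynomial.eval_mul,
      Polynomial.eval_X, Polynomial.eval_C]
    rw [add_comm]

theorem det_bdd (R : ℝ) : ∃ C : ℝ, ∀ A : EVec n →L[ℝ] EVec n, ‖A‖ ≤ R → ‖A.det‖ ≤ C := by
  have : ProperSpace (EVec n →L[ℝ] EVec n) := FiniteDimensional.proper ℝ _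
  obtain ⟨C, hC⟩ := (isCompact_closedBall (0 : EVec n →L[ℝ] EVec n) R).exists_bound_of_continuousOn
    (ContinuousLinearMap.continuous_det (𝕜 := ℝ) (E := EVec n)).continuousOn
  exact ⟨C, fun A hA => hC A (by simpa using hA)⟩

theorem det_int {G : EVec n → EVec n} {K : NNReal} (hG : LipschitzWith K G) {B : Set (EVec n)}
    (hB : volume B ≠ ∞) (t : ℝ) :
    IntegrableOn (fun x => (1 + t • fderiv ℝ G x : EVec n →L[ℝ] EVec n).det) B := by
  obtain ⟨C, hC⟩ := det_bdd (n := n) (‖(1 : EVec n →L[ℝ] EVec n)‖ + |t| * K)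
  have : IsFiniteMeasure (volume.restrict B) := ⟨by simpa using hB.lt_top⟩
  refine Integrable.of_bound (C := C) ?_ (Eventually.of_forall fun x => hC _ ?_)
  · refine (ContinuousLinearMap.continuous_det.measurable.comp ?_).aestronglyMeasurable
    exact ((measurable_fderiv ℝ G).const_smul t).const_add 1
  · refine (norm_add_le _ _).trans ?_
    gcongr
    rw [norm_smul, Real.norm_eq_abs]
    gcongr
    exact norm_fderiv_le_of_lipschitz ℝ hG

theorem det_integral {G : EVec n → EVec n} {K : NNReal} (hG : LipschitzWith K G)
    {B : Set (EVec n)} (hBm : MeasurableSet B)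
    (hB : volume B ≠ ∞) (h0 : ∀ x ∉ B, G x = 0) :
    ∫ x in B, (1 + fderiv ℝ G x : EVec n →L[ℝ] EVec n).det = volume.real B := by
  have small : ∀ t : ℝ, 0 ≤ t → t * K < 1 →
      ∫ x in B, (1 + t • fderiv ℝ G x : EVec n →L[ℝ] EVec n).det = volume.real B := by
    intro t ht htK
    let c : NNReal := ‖t‖₊ * K
    have hc : c < 1 := by
      rw [← NNReal.coe_lt_coe]; simpa [c, abs_of_nonneg ht] using htK
    have hH : LipschitzWith c (fun x => t • G x) := by
      exact LipschitzWith.of_dist_le_mul fun a b => by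
        rw [dist_smul₀]
        calc _ ≤ ‖t‖ * (K * dist a b) := by gcongr; exact hG.dist_le_mul a b
          _ = _ := by simp [c, mul_assoc]
    obtain ⟨hi, him⟩ := small_bij hc hH (B := B) (fun x hx => by simp [h0 x hx])
    have hTl : LipschitzWith (1 + c) (fun x => x + t • G x) := LipschitzWith.id.add hH
    have := area hTl hBm hi.injOn (fun _ => 1)
    rw [him, setIntegral_const, smul_eq_mul, mul_one] at this
    rw [this]
    refine setIntegral_congr_ae hBm ?_
    filter_upwards [hG.ae_differentiableAt (μ := volume)] with x hx _
    have e : fderiv ℝ (fun x => x + t • G x) x = 1 + t • fderiv ℝ G x := by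
      have := ((hasFDerivAt_id (𝕜 := ℝ) x).add (hx.hasFDerivAt.const_smul t)).fderiv
      exact this
    rw [e, mul_one, abs_of_pos]
    refine det_pos_of_small ?_
    calc ‖t • fderiv ℝ G x‖ = t * ‖fderiv ℝ G x‖ := by
          rw [norm_smul, Real.norm_eq_abs, abs_of_nonneg ht]
      _ ≤ t * K := by gcongr; exact norm_fderiv_le_of_lipschitz ℝ hG
      _ < 1 := htK
  let v : Fin (n + 1) → ℝ := fun i => (i : ℝ) / ((n + 1) * (K + 1))
  have hv0 : ∀ i, 0 ≤ v i := fun i => by positivity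
  have hvK : ∀ i, v i * K < 1 := fun i => by
    have hi : (i : ℝ) < n + 1 := by exact_mod_cast i.2
    have hK : (0:ℝ) ≤ K := K.2
    rw [div_mul_eq_mul_div, div_lt_one (by positivity)]
    have : (i : ℝ) * K ≤ (n + 1) * K := by gcongr
    nlinarith [this, (Nat.cast_nonneg n : (0:ℝ) ≤ n)]
  have hvinj : Set.InjOn v (Finset.univ : Finset (Fin (n + 1))) := by
    intro i _ j _ hij
    have hp : ((n : ℝ) + 1) * ((K : ℝ) + 1) ≠ 0 := by positivity
    have := (div_left_inj' hp).1 hij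
    exact Fin.ext (by exact_mod_cast this)
  have hpt : ∀ x, (1 + fderiv ℝ G x : EVec n →L[ℝ] EVec n).det =
      ∑ i, (1 + v i • fderiv ℝ G x : EVec n →L[ℝ] EVec n).det *
        (Lagrange.basis Finset.univ v i).eval 1 := by
    intro x
    obtain ⟨P, hP, hPe⟩ := det_poly (fderiv ℝ G x)
    have hdeg : P.degree < (Finset.univ : Finset (Fin (n + 1))).card := by
      rw [Finset.card_univ, Fintype.card_fin]
      refine lt_of_le_of_lt Polynomial.degree_le_natDegree ?_
      exact_mod_cast Nat.lt_succ_of_le hP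
    have h1 := Lagrange.eq_interpolate hvinj hdeg
    have h2 := congrArg (Polynomial.eval 1) h1
    rw [← hPe 1, one_smul, Lagrange.interpolate_apply, Polynomial.eval_finsetSum] at h2
    rw [h2]
    refine Finset.sum_congr rfl fun i _ => ?_
    rw [Polynomial.eval_mul, Polynomial.eval_C, hPe]
  simp_rw [hpt]
  rw [integral_finsetSum _ fun i _ => (det_int hG hB (v i)).mul_const _]
  have : ∀ i, ∫ x in B, (1 + v i • fderiv ℝ G x : EVec n →L[ℝ] EVec n).det *
        (Lagrange.basis Finset.univ v i).eval 1 =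
        volume.real B * (Lagrange.basis Finset.univ v i).eval 1 := fun i => by
    rw [integral_mul_const, small _ (hv0 i) (hvK i)]
  rw [Finset.sum_congr rfl fun i _ => this i, ← Finset.mul_sum, ← Polynomial.eval_finsetSum,
    Lagrange.sum_basis hvinj Finset.univ_nonempty, Polynomial.eval_one, mul_one]


theorem lip_smul {χ : EVec n → ℝ} {w : EVec n → EVec n} (hχ : ContDiff ℝ 1 χ)
    (hc : HasCompactSupport χ) {K : NNReal} (hw : LipschitzWith K w) :
    ∃ K' : NNReal, LipschitzWith K' (fun x => χ x • w x) := by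
  obtain ⟨A, hA⟩ := ContDiff.lipschitzWith_of_hasCompactSupport hc hχ (by simp)
  obtain ⟨M, hM⟩ := hc.exists_bound_of_continuous hχ.continuous
  obtain ⟨M2, hM2⟩ := hc.isCompact.exists_bound_of_continuousOn hw.continuous.continuousOn
  have hM0 : 0 ≤ M := (norm_nonneg _).trans (hM 0)
  have hM' : ∀ x ∈ tsupport χ, ‖w x‖ ≤ |M2| := fun x hx => (hM2 x hx).trans (le_abs_self _)
  have half : ∀ a b, a ∈ tsupport χ → dist (χ a • w a) (χ b • w b) ≤
      (A * |M2| + M * K) * dist a b := by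
    intro a b ha
    rw [dist_eq_norm]
    have : χ a • w a - χ b • w b = (χ a - χ b) • w a + χ b • (w a - w b) := by
      rw [sub_smul, smul_sub]; abel
    rw [this]
    refine (norm_add_le _ _).trans ?_
    rw [norm_smul, norm_smul, add_mul]
    refine add_le_add ?_ ?_
    · calc _ ≤ (A * dist a b) * |M2| := by
            gcongr
            · rw [← dist_eq_norm]; exact hA.dist_le_mul a b
            · exact hM' a ha
        _ = _ := by ring
    · calc _ ≤ M * (K * dist a b) := by
            gcongr
            · exact hM b
            · rw [← dist_eq_norm]; exact hw.dist_le_mul a b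
        _ = _ := by ring
  refine ⟨⟨A * |M2| + M * K, by positivity⟩, LipschitzWith.of_dist_le_mul fun a b => ?_⟩
  change _ ≤ (A * |M2| + M * K) * dist a b
  by_cases ha : a ∈ tsupport χ
  · exact half a b ha
  by_cases hb : b ∈ tsupport χ
  · rw [dist_comm, dist_comm a b]; exact half b a hb
  · rw [image_eq_zero_of_notMem_tsupport ha, image_eq_zero_of_notMem_tsupport hb]
    simp only [zero_smul, dist_self]
    positivity

theorem det_rank_one (A : EVec n →L[ℝ] EVec n) (l : EVec n →L[ℝ] ℝ) (v : EVec n) :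
    (A + (l.comp A).smulRight v : EVec n →L[ℝ] EVec n).det = (1 + l v) * A.det := by
  have h1 : ((A + (l.comp A).smulRight v : EVec n →L[ℝ] EVec n) : EVec n →ₗ[ℝ] EVec n) =
      (LinearMap.transvection (l : EVec n →ₗ[ℝ] ℝ) v) * (A : EVec n →ₗ[ℝ] EVec n) := by
    ext x
    simp [LinearMap.transvection]
  rw [ContinuousLinearMap.det, h1, map_mul, LinearMap.transvection.det]
  rfl

theorem degree_zero {h g : EVec n → EVec n} {K K' : NNReal} (hh : LipschitzWith K h)
    (hg : LipschitzWith K' g) {x : EVec n} {R R0 r : ℝ} (hR : 0 < R) (hR0 : R < R0)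
    (hr : K' * r ≤ R) (hinv : ∀ y ∈ Metric.ball x R0, g (h y) = y) {φ : EVec n → ℝ}
    (hφ : ContDiff ℝ 1 φ) (hφc : HasCompactSupport φ)
    (hφs : tsupport φ ⊆ Metric.ball (h x) r) (v : EVec n) :
    ∫ y in Metric.closedBall x R, (fderiv ℝ h y).det * fderiv ℝ φ (h y) v = 0 := by
  let b : ContDiffBump x := ⟨R, R0, hR, hR0⟩
  obtain ⟨χ, hχdef⟩ : ∃ χ : EVec n → ℝ, χ = ⇑b := ⟨_, rfl⟩
  have hχ : ContDiff ℝ 1 χ := hχdef ▸ b.contDiff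
  have hχc : HasCompactSupport χ := hχdef ▸ b.hasCompactSupport
  have hχ1 : ∀ y ∈ Metric.closedBall x R, χ y = 1 := fun y hy => by
    rw [hχdef]; exact b.one_of_mem_closedBall hy
  have hχ0 : ∀ y ∉ Metric.ball x R0, χ y = 0 := fun y hy => by
    have : y ∉ Function.support b := by rw [b.support_eq]; exact hy
    rw [hχdef]; simpa using this
  set G0 : EVec n → EVec n := fun y => χ y • (h y - y) with hG0
  set G1 : EVec n → EVec n := fun y => χ y • ((h y - y) + φ (h y) • v) with hG1
  obtain ⟨A, hA⟩ := ContDiff.lipschitzWith_of_hasCompactSupport hφc hφ (by simp)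
  have l0 : LipschitzWith (K + 1) (fun y => h y - y) := hh.sub LipschitzWith.id
  have l1 : LipschitzWith (K + 1 + A * K * ‖v‖₊) (fun y => (h y - y) + φ (h y) • v) := by
    refine l0.add (LipschitzWith.of_dist_le_mul fun a c => ?_)
    rw [dist_eq_norm, ← sub_smul, norm_smul, ← dist_eq_norm]
    push_cast
    calc _ ≤ (A * K * dist a c) * ‖v‖ := by
          gcongr
          exact (hA.comp hh).dist_le_mul a c
      _ = _ := by ring
  obtain ⟨k0, hk0⟩ := lip_smul hχ hχc l0
  obtain ⟨k1, hk1⟩ := lip_smul hχ hχc l1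
  set B := Metric.ball x R0 with hB
  have hBm : MeasurableSet B := Metric.isOpen_ball.measurableSet
  have hBf : volume B ≠ ∞ := measure_ball_lt_top.ne
  have i0 := det_integral hk0 hBm hBf (fun y hy => by simp [hχ0 y hy])
  have i1 := det_integral hk1 hBm hBf (fun y hy => by simp [hχ0 y hy])
  have n0 := det_int hk0 hBf 1
  have n1 := det_int hk1 hBf 1
  simp only [one_smul] at n0 n1
  have hz : ∫ y in B, ((1 + fderiv ℝ G1 y : EVec n →L[ℝ] EVec n).det -
      (1 + fderiv ℝ G0 y : EVec n →L[ℝ] EVec n).det) = 0 := by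
    rw [integral_sub n1 n0, i0, i1, sub_self]
  -- outside
  have hout : ∀ y ∉ Metric.ball x R, χ y * φ (h y) = 0 := by
    intro y hy
    by_cases hyB : y ∈ B
    · by_cases hφy : φ (h y) = 0
      · rw [hφy, mul_zero]
      exfalso
      have h1 : h y ∈ Metric.ball (h x) r := hφs (subset_tsupport _ hφy)
      have h2 : dist y x ≤ K' * dist (h y) (h x) := by
        have := hg.dist_le_mul (h y) (h x)
        rwa [hinv y hyB, hinv x (Metric.mem_ball_self (hR.trans hR0))] at this
      rw [Metric.mem_ball] at h1 hy
      push Not at hy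
      have hd0 : (0:ℝ) ≤ K' := K'.2
      rcases eq_or_lt_of_le hd0 with h3 | h3
      · rw [← h3, zero_mul] at h2; linarith
      · have := mul_lt_mul_of_pos_left h1 h3
        linarith
    · rw [hχ0 y hyB, zero_mul]
  have hG10 : ∀ y ∉ Metric.ball x R, G1 y = G0 y := by
    intro y hy
    simp only [hG1, hG0]
    rw [smul_add, smul_smul, hout y hy, zero_smul, add_zero]
  have hcb : Metric.closedBall x R ⊆ B := Metric.closedBall_subset_ball hR0
  have hsph : volume (Metric.sphere x R) = 0 := Measure.addHaar_sphere_of_ne_zero _ _ hR.ne'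
  have hsphae : ∀ᵐ y : EVec n, y ∉ Metric.sphere x R := measure_eq_zero_iff_ae_notMem.1 hsph
  rw [← hz]
  have hc2 : ∫ y in B, ((1 + fderiv ℝ G1 y : EVec n →L[ℝ] EVec n).det -
      (1 + fderiv ℝ G0 y : EVec n →L[ℝ] EVec n).det) =
      ∫ y in Metric.closedBall x R, ((1 + fderiv ℝ G1 y : EVec n →L[ℝ] EVec n).det -
      (1 + fderiv ℝ G0 y : EVec n →L[ℝ] EVec n).det) := by
    refine setIntegral_eq_of_subset_of_forall_sdiff_eq_zero hBm hcb ?_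
    rintro y ⟨_, hy⟩
    have : G1 =ᶠ[𝓝 y] G0 := by
      filter_upwards [Metric.isClosed_closedBall.isOpen_compl.mem_nhds hy] with z hz
      exact hG10 z (fun h => hz (Metric.ball_subset_closedBall h))
    rw [this.fderiv_eq, sub_self]
  rw [hc2]
  refine setIntegral_congr_ae Metric.isClosed_closedBall.measurableSet ?_
  filter_upwards [hh.ae_differentiableAt (μ := volume), hsphae] with y hd hs hy
  have hyb : y ∈ Metric.ball x R := by
    rw [Metric.mem_ball]
    exact lt_of_le_of_ne hy hs
  have hnb : Metric.ball x R ∈ 𝓝 y := Metric.isOpen_ball.mem_nhds hyb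
  have e0 : G0 =ᶠ[𝓝 y] fun z => h z - z := by
    filter_upwards [hnb] with z hz
    simp only [hG0]; rw [hχ1 z (Metric.ball_subset_closedBall hz), one_smul]
  have e1 : G1 =ᶠ[𝓝 y] fun z => (h z - z) + φ (h z) • v := by
    filter_upwards [hnb] with z hz
    simp only [hG1]; rw [hχ1 z (Metric.ball_subset_closedBall hz), one_smul]
  have d0 : HasFDerivAt (fun z => h z - z) (fderiv ℝ h y - 1) y :=
    hd.hasFDerivAt.sub (hasFDerivAt_id y)
  have dφ : HasFDerivAt (fun z => φ (h z)) ((fderiv ℝ φ (h y)).comp (fderiv ℝ h y)) y :=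
    (hφ.differentiable (by simp) (h y)).hasFDerivAt.comp y hd.hasFDerivAt
  have d1 := d0.add (dφ.smul_const v)
  have d1' : fderiv ℝ (fun z => (h z - z) + φ (h z) • v) y = fderiv ℝ h y - 1 +
    ((fderiv ℝ φ (h y)).comp (fderiv ℝ h y)).smulRight v := d1.fderiv
  rw [e0.fderiv_eq, e1.fderiv_eq, d0.fderiv, d1']
  have f0 : (1 + (fderiv ℝ h y - 1) : EVec n →L[ℝ] EVec n) = fderiv ℝ h y := by abel
  have f1 : (1 + (fderiv ℝ h y - 1 + ((fderiv ℝ φ (h y)).comp (fderiv ℝ h y)).smulRight v) :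
    EVec n →L[ℝ] EVec n) = fderiv ℝ h y + ((fderiv ℝ φ (h y)).comp (fderiv ℝ h y)).smulRight v := by
    abel
  rw [f0, f1, det_rank_one]
  ring

end inv

set_option linter.unusedSectionVars false
set_option linter.unusedVariables false

section inv2
variable {n : ℕ}

theorem integrableOn_z {X F : Type*} [MeasurableSpace X] {μ : Measure X} [NormedAddCommGroup F]
    {s : Set X} : IntegrableOn (fun _ : X => (0 : F)) s μ := integrableOn_zero

theorem poincare_ball_zero {p : EVec n} {r : ℝ} (hr : 0 < r) {d : EVec n → ℝ}
    (hd : WD (Metric.ball p r) d (fun _ => 0)) {ε : ℝ} (hε : 0 < ε) :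
    ∃ c : ℝ, ∫ z in Metric.ball p (r / 2), |d z - c| ≤ ε := by
  obtain ⟨C, hC0, hC⟩ := poincare_C1 (convex_ball p (r / 2)) Metric.isOpen_ball.measurableSet
    Metric.isBounded_ball
  have hsub : Metric.closedBall p (r / 2) ⊆ Metric.ball p r :=
    Metric.closedBall_subset_ball (by linarith)
  obtain ⟨W, hW, hWc, h1, h2⟩ := approx_compact Metric.isOpen_ball Metric.isBounded_ball
    (isCompact_closedBall p (r / 2)) hsub hd (show 0 < ε / (C + 1) by positivity)
  obtain ⟨c, hc⟩ := hC W (hW.of_le (by simp))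
  refine ⟨c, ?_⟩
  have hbb : Metric.ball p (r / 2) ⊆ Metric.ball p r := Metric.ball_subset_ball (by linarith)
  have iW : Integrable W := hW.continuous.integrable_of_hasCompactSupport hWc
  have id : IntegrableOn d (Metric.ball p (r / 2)) := hd.1.mono_set hbb
  have ifd : Integrable (fun x => ‖fderiv ℝ W x‖) := (fderiv_integrable hW hWc).norm
  have hfin : IntegrableOn (fun _ : EVec n => c) (Metric.ball p (r / 2)) :=
    integrableOn_const measure_ball_lt_top.ne
  have j1 : IntegrableOn (fun z => |W z - d z|) (Metric.ball p (r / 2)) :=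
    (iW.integrableOn.sub id).abs
  have j2 : IntegrableOn (fun z => |W z - c|) (Metric.ball p (r / 2)) :=
    (iW.integrableOn.sub hfin).abs
  have j0 : IntegrableOn (fun z => |W z - d z|) (Metric.ball p r) := (iW.integrableOn.sub hd.1).abs
  calc ∫ z in Metric.ball p (r / 2), |d z - c|
      ≤ ∫ z in Metric.ball p (r / 2), (|W z - d z| + |W z - c|) := by
        refine setIntegral_mono (id.sub hfin).abs (j1.add j2) fun z => ?_
        have := abs_sub_le (d z) (W z) c
        rw [abs_sub_comm (d z) (W z)] at this
        exact this
    _ = (∫ z in Metric.ball p (r / 2), |W z - d z|) + ∫ z in Metric.ball p (r / 2), |W z - c| :=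
        integral_add j1 j2
    _ ≤ ε / (C + 1) + C * (ε / (C + 1)) := by
        refine add_le_add ?_ (hc.trans ?_)
        · refine le_trans (setIntegral_mono_set j0 (Eventually.of_forall fun _ => abs_nonneg _)
            (LE.le.eventuallyLE hbb)) h1
        · gcongr
          refine le_trans (setIntegral_mono_set ifd.integrableOn
            (Eventually.of_forall fun _ => norm_nonneg _)
            (LE.le.eventuallyLE Metric.ball_subset_closedBall)) ?_
          simpa using h2
    _ = ε := by field_simp; ring

theorem inv_domain {h g : EVec n → EVec n} {K K' : NNReal} (hh : LipschitzWith K h)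
    (hg : LipschitzWith K' g) {x : EVec n} {R0 : ℝ} (hR0 : 0 < R0)
    (hinv : ∀ y ∈ Metric.ball x R0, g (h y) = y) :
    ∃ r > 0, Metric.ball (h x) r ⊆ h '' Metric.ball x R0 := by
  set R := R0 / 2 with hRdef
  have hR : 0 < R := by positivity
  have hRR : R < R0 := by rw [hRdef]; linarith
  have hK0 : (0:ℝ) ≤ K' := K'.2
  set r := R / (K' + 1) with hrdef
  have hr : 0 < r := by positivity
  have hKr : K' * r ≤ R := by
    rw [hrdef, mul_div_assoc', div_le_iff₀ (by positivity)]
    nlinarith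
  set Q := Metric.closedBall x R with hQ
  have hQB : Q ⊆ Metric.ball x R0 := Metric.closedBall_subset_ball hRR
  have hinvQ : ∀ y ∈ Q, g (h y) = y := fun y hy => hinv y (hQB hy)
  have hinj : InjOn h Q := fun a ha b hb hab => by
    rw [← hinvQ a ha, ← hinvQ b hb, hab]
  have hQm : MeasurableSet Q := Metric.isClosed_closedBall.measurableSet
  set K1 := h '' Q with hK1
  have hK1c : IsCompact K1 := (isCompact_closedBall x R).image hh.continuous
  have hK1m : MeasurableSet K1 := hK1c.isClosed.measurableSet
  set J : EVec n → ℝ := fun y => (fderiv ℝ h y).det with hJ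
  have hJm : Measurable J :=
    ContinuousLinearMap.continuous_det.measurable.comp (measurable_fderiv ℝ h)
  set sg : EVec n → ℝ := fun z => if 0 < J (g z) then 1 else if J (g z) < 0 then -1 else 0 with hsg
  have hJg : Measurable (fun z => J (g z)) := hJm.comp hg.continuous.measurable
  have hsgm : Measurable sg := by
    refine Measurable.ite (measurableSet_lt measurable_const hJg) measurable_const ?_
    exact Measurable.ite (measurableSet_lt hJg measurable_const) measurable_const measurable_const
  have hsg1 : ∀ z, |sg z| ≤ 1 := by
    intro z; simp only [hsg]; split_ifs <;> simp
  set d : EVec n → ℝ := K1.indicator sg with hd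
  have hdm : Measurable d := hsgm.indicator hK1m
  have hd1 : ∀ z, ‖d z‖ ≤ 1 := by
    intro z
    by_cases hz : z ∈ K1
    · rw [hd, indicator_of_mem hz]; exact hsg1 z
    · rw [hd, indicator_of_notMem hz]; simp
  have hfb : ∀ s, IsFiniteMeasure (volume.restrict (Metric.ball (h x) s)) := fun s =>
    ⟨by simpa using measure_ball_lt_top⟩
  have hdi : ∀ s, IntegrableOn d (Metric.ball (h x) s) := fun s =>
    have := hfb s
    Integrable.of_bound (C := 1) hdm.aestronglyMeasurable (Eventually.of_forall hd1)
  have hWD : WD (Metric.ball (h x) r) d (fun _ => 0) := by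
    refine ⟨hdi r, integrableOn_z, ?_⟩
    intro φ hφ hφc hφs v
    simp only [zero_apply, zero_mul, integral_zero, neg_zero]
    have hφ0' : ∀ z ∉ Metric.ball (h x) r, fderiv ℝ φ z v = 0 := fun z hz => by
      have : z ∉ tsupport (fderiv ℝ φ) := fun h => hz (hφs (tsupport_fderiv_subset ℝ h))
      rw [image_eq_zero_of_notMem_tsupport this]; rfl
    rw [setIntegral_eq_integral_of_forall_compl_eq_zero
      (fun z hz => by rw [hφ0' z hz, mul_zero])]
    rw [← setIntegral_eq_integral_of_forall_compl_eq_zero (s := K1)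
      (fun z hz => by rw [hd, indicator_of_notMem hz, zero_mul])]
    rw [hK1, area hh hQm hinj]
    rw [← degree_zero hh hg hR hRR hKr hinv hφ hφc hφs v]
    refine setIntegral_congr_fun hQm fun y hy => ?_
    have hy1 : h y ∈ K1 := ⟨y, hy, rfl⟩
    simp only [hd, indicator_of_mem hy1, hsg, hinvQ y hy]
    rw [← mul_assoc]
    congr 1
    change |J y| * _ = J y
    rcases lt_trichotomy (J y) 0 with h1 | h1 | h1
    · rw [abs_of_neg h1, if_neg (not_lt.2 h1.le), if_pos h1]; ring
    · rw [h1]; simp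
    · rw [abs_of_pos h1, if_pos h1, mul_one]
  -- nonvanishing
  have hne : ∀ᵐ z : EVec n, z ∈ K1 → |d z| = 1 := by
    set s0 := Q ∩ {y | DifferentiableAt ℝ h y ∧ J y = 0}
    have z1 : volume (h '' s0) = 0 :=
      addHaar_image_eq_zero_of_det_fderivWithin_eq_zero volume
        (fun y hy => (hy.2.1 : DifferentiableAt ℝ h y).hasFDerivAt.hasFDerivWithinAt)
        (fun y hy => hy.2.2)
    have z2 : volume (h '' {y | ¬ DifferentiableAt ℝ h y}) = 0 := by
      have := lip_vol hh {y | ¬ DifferentiableAt ℝ h y}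
      rw [show volume {y | ¬ DifferentiableAt ℝ h y} = 0 from
        hh.ae_differentiableAt (μ := volume), mul_zero] at this
      exact le_antisymm this zero_le
    filter_upwards [measure_eq_zero_iff_ae_notMem.1 z1, measure_eq_zero_iff_ae_notMem.1 z2] with
      z a1 a2 hz
    obtain ⟨y, hy, rfl⟩ := hz
    have hyd : DifferentiableAt ℝ h y := by
      by_contra hc; exact a2 ⟨y, hc, rfl⟩
    have hJy : J y ≠ 0 := fun hc => a1 ⟨y, ⟨hy, hyd, hc⟩, rfl⟩
    have hy1 : h y ∈ K1 := ⟨y, hy, rfl⟩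
    simp only [hd, indicator_of_mem hy1, hsg, hinvQ y hy]
    rcases lt_or_gt_of_ne hJy with h1 | h1
    · rw [if_neg (not_lt.2 h1.le), if_pos h1]; simp
    · rw [if_pos h1]; simp
  refine ⟨r / 2, by positivity, ?_⟩
  suffices hmain : Metric.ball (h x) (r / 2) ⊆ K1 from
    hmain.trans (image_mono hQB)
  by_contra hcon
  set B' := Metric.ball (h x) (r / 2) with hB'
  have hE : (B' \ K1).Nonempty := by
    rw [not_subset] at hcon
    obtain ⟨z, hz, hz'⟩ := hcon
    exact ⟨z, hz, hz'⟩
  have hEo : IsOpen (B' \ K1) := Metric.isOpen_ball.sdiff hK1c.isClosed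
  have hEp : 0 < volume.real (B' \ K1) := by
    refine ENNReal.toReal_pos (hEo.measure_pos volume hE).ne' ?_
    exact (lt_of_le_of_lt (measure_mono sdiff_subset) measure_ball_lt_top).ne
  have hIp : 0 < volume.real (B' ∩ K1) := by
    refine ENNReal.toReal_pos ?_ (lt_of_le_of_lt (measure_mono inter_subset_left)
      measure_ball_lt_top).ne
    intro h0
    -- a small ball is mapped into B' ∩ K1
    obtain ⟨δ, hδ, hδB⟩ := Metric.continuousAt_iff.1 (hh.continuous.continuousAt (x := x)) (r / 2)
      (by positivity : (0:ℝ) < r / 2)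
    have hsub : Metric.ball x (min δ R) ⊆ g '' (B' ∩ K1) := by
      intro y hy
      have hy1 : dist y x < δ := lt_of_lt_of_le hy (min_le_left _ _)
      have hy2 : y ∈ Q := (lt_of_lt_of_le (Metric.mem_ball.1 hy) (min_le_right _ _)).le
      exact ⟨h y, ⟨hδB hy1, ⟨y, hy2, rfl⟩⟩, hinvQ y hy2⟩
    have hv := (measure_mono hsub).trans (lip_vol hg (B' ∩ K1))
    rw [h0, mul_zero] at hv
    exact (Metric.measure_ball_pos volume x (lt_min hδ hR)).ne' (le_antisymm hv zero_le)
  set m := min (volume.real (B' \ K1)) (volume.real (B' ∩ K1)) with hm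
  have hmp : 0 < m := lt_min hEp hIp
  obtain ⟨c, hc⟩ := poincare_ball_zero hr hWD (half_pos hmp)
  have hB'm : MeasurableSet B' := Metric.isOpen_ball.measurableSet
  have hcint : IntegrableOn (fun z => |d z - c|) B' :=
    ((hdi (r / 2)).sub (integrableOn_const measure_ball_lt_top.ne)).abs
  have hsplit : ∫ z in B', |d z - c| =
      (∫ z in B' ∩ K1, |d z - c|) + ∫ z in B' \ K1, |d z - c| :=
    (integral_inter_add_sdiff hK1m hcint).symm
  have p1 : ∫ z in B' \ K1, |d z - c| = volume.real (B' \ K1) * |c| := by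
    rw [setIntegral_congr_fun (g := fun _ => |c|) (hB'm.diff hK1m) (fun z hz => by
      simp only [hd, indicator_of_notMem hz.2, zero_sub, abs_neg]), setIntegral_const, smul_eq_mul]
  have p2 : volume.real (B' ∩ K1) * (1 - |c|) ≤ ∫ z in B' ∩ K1, |d z - c| := by
    rw [← smul_eq_mul, ← setIntegral_const]
    refine setIntegral_mono_on_ae (integrableOn_const ?_) (hcint.mono_set inter_subset_left)
      (hB'm.inter hK1m) ?_
    · exact (lt_of_le_of_lt (measure_mono inter_subset_left) measure_ball_lt_top).ne
    · filter_upwards [hne] with z hz hz2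
      rw [← hz hz2.2]
      exact abs_sub_abs_le_abs_sub _ _
  have q1 : m * |c| ≤ volume.real (B' \ K1) * |c| := by gcongr; exact min_le_left _ _
  by_cases hc1 : |c| ≤ 1
  · have q2 : m * (1 - |c|) ≤ volume.real (B' ∩ K1) * (1 - |c|) := by
      exact mul_le_mul_of_nonneg_right (min_le_right _ _) (by linarith)
    nlinarith
  · have q3 : 0 ≤ ∫ z in B' ∩ K1, |d z - c| := integral_nonneg fun _ => abs_nonneg _
    push Not at hc1
    nlinarith

structure IsChart (Ω O : Set (EVec n)) (h g : EVec n → EVec n) (K : NNReal) (e p : EVec n)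
    (r : ℝ) : Prop where
  op : IsOpen O
  unit : ‖e‖ = 1
  rpos : 0 < r
  hl : LipschitzWith K h
  gl : LipschitzWith K g
  inv : ∀ y ∈ O, g (h y) = y
  toHB : ∀ y ∈ O ∩ Ω, h y ∈ HB e p r
  ofHB : ∀ z ∈ HB e p r, g z ∈ O ∩ Ω
  inv' : ∀ z ∈ HB e p r, h (g z) = z

theorem exists_chart (hn : 0 < n) {Ω : Set (EVec n)} (hΩ : IsLipschitzDomain Ω) {x : EVec n}
    (hx : x ∈ closure Ω) : ∃ (O : Set (EVec n)) (h g : EVec n → EVec n) (K : NNReal)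
      (e p : EVec n) (r : ℝ), IsChart Ω O h g K e p r ∧ x ∈ O ∧ h x = p := by
  by_cases hxΩ : x ∈ Ω
  · obtain ⟨r, hr, hrΩ⟩ := Metric.isOpen_iff.1 hΩ.1 x hxΩ
    set e : EVec n := EuclideanSpace.single ⟨0, hn⟩ 1 with he
    have he1 : ‖e‖ = 1 := by simp [he]
    have hee : ⟪e, e⟫ = 1 := by rw [real_inner_self_eq_norm_sq, he1]; norm_num
    set c : ℝ := r - ⟪e, x⟫ with hc
    have hb : ∀ y, y + c • e ∈ Metric.ball (x + c • e) r ↔ y ∈ Metric.ball x r := fun y => by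
      simp [Metric.mem_ball]
    have hpos : ∀ y ∈ Metric.ball x r, 0 < ⟪e, y + c • e⟫ := by
      intro y hy
      rw [inner_add_right, real_inner_smul_right, hee, mul_one, hc]
      have h1 : ⟪e, x - y⟫ ≤ ‖e‖ * ‖x - y‖ := real_inner_le_norm _ _
      rw [he1, one_mul, inner_sub_right, norm_sub_rev] at h1
      rw [Metric.mem_ball, dist_eq_norm] at hy
      linarith
    have hmem : ∀ z ∈ HB e (x + c • e) r, z - c • e ∈ Metric.ball x r := by
      intro z hz
      have := hz.1
      rw [← hb]; simpa using this
    refine ⟨Metric.ball x r, fun y => y + c • e, fun z => z - c • e, 1, e, x + c • e, r,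
      ⟨Metric.isOpen_ball, he1, hr, ?_, ?_, ?_, ?_, ?_, ?_⟩, Metric.mem_ball_self hr, rfl⟩
    · exact LipschitzWith.of_dist_le_mul fun a b => by simp
    · exact LipschitzWith.of_dist_le_mul fun a b => by simp
    · intro y _; simp
    · rintro y ⟨hy, _⟩
      exact ⟨(hb y).2 hy, hpos y hy⟩
    · intro z hz
      exact ⟨hmem z hz, hrΩ (hmem z hz)⟩
    · intro z _; simp
  · have hxf : x ∈ frontier Ω := by
      rw [frontier, hΩ.1.interior_eq]; exact ⟨hx, hxΩ⟩
    obtain ⟨U, h0, g0, K, e, he, hU, hxU, hh0, hg0, hinv0, himg⟩ := hΩ.2.2.2 x hxf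
    obtain ⟨h, hh, hhe⟩ := hh0.extend_finite_dimension
    obtain ⟨g, hg, hge⟩ := hg0.extend_finite_dimension
    set k : NNReal := lipschitzExtensionConstant (EVec n) * K with hk
    have him : ∀ S ⊆ U, h0 '' S = h '' S := fun S hS => (hhe.mono hS).image_eq
    have hinv : ∀ y ∈ U, g (h y) = y := fun y hy => by
      rw [← hhe hy, ← hge ⟨y, hy, rfl⟩, hinv0 y hy]
    rw [him _ inter_subset_left, him _ Subset.rfl] at himg
    obtain ⟨R0, hR0, hR0U⟩ := Metric.isOpen_iff.1 hU x hxU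
    obtain ⟨r, hr, hrU⟩ := inv_domain hh hg hR0 (fun y hy => hinv y (hR0U hy))
    have hHB : ∀ z ∈ HB e (h x) r, ∃ y ∈ U ∩ Ω, h y = z := by
      intro z hz
      have : z ∈ h '' U ∩ {y | 0 < ⟪e, y⟫} := ⟨image_mono hR0U (hrU hz.1), hz.2⟩
      rw [← himg] at this
      exact this
    have hxb : h x ∈ Metric.ball (h x) r := Metric.mem_ball_self hr
    have hxO : x ∈ U ∩ h ⁻¹' (Metric.ball (h x) r) := ⟨hxU, mem_preimage.2 hxb⟩
    clear_value k
    refine ⟨U ∩ h ⁻¹' (Metric.ball (h x) r), h, g, k, e, h x, r,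
      ⟨hU.inter (Metric.isOpen_ball.preimage hh.continuous), he, hr, hh, hg, ?_, ?_, ?_, ?_⟩,
      hxO, rfl⟩
    · exact fun y hy => hinv y hy.1
    · rintro y ⟨⟨hy, hy2⟩, hy3⟩
      refine ⟨hy2, ?_⟩
      have : h y ∈ h '' (U ∩ Ω) := ⟨y, ⟨hy, hy3⟩, rfl⟩
      rw [himg] at this
      exact this.2
    · intro z hz
      obtain ⟨y, hy, hyz⟩ := hHB z hz
      have hz1 : z ∈ Metric.ball (h x) r := hz.1
      rw [← hyz, hinv y hy.1]
      have hy1 : h y ∈ Metric.ball (h x) r := by rw [hyz]; exact hz1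
      exact ⟨⟨hy.1, hy1⟩, hy.2⟩
    · intro z hz
      obtain ⟨y, hy, hyz⟩ := hHB z hz
      rw [← hyz, hinv y hy.1]
end inv2

set_option linter.unusedSectionVars false
set_option linter.unusedVariables false

section loc
variable {n : ℕ} {Ω O : Set (EVec n)} {h g : EVec n → EVec n} {K : NNReal} {e p : EVec n} {r : ℝ}

theorem IsChart.wd (c : IsChart Ω O h g K e p r) (hΩ : IsOpen Ω) (hb : Bornology.IsBounded Ω)
    {v : EVec n → ℝ} {G : EVec n → EVec n →L[ℝ] ℝ} (hv : WD Ω v G) :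
    WD (HB e p r) (fun z => v (g z)) (fun z => (G (g z)).comp (fderiv ℝ g z)) :=
  chain_WD c.gl c.hl (HB_open e p r) hΩ hb (fun z hz => (c.ofHB z hz).2) c.inv' hv

theorem IsChart.norm_le (c : IsChart Ω O h g K e p r) (hΩ : IsOpen Ω)
    (hb : Bornology.IsBounded Ω)
    {v : EVec n → ℝ} {G : EVec n → EVec n →L[ℝ] ℝ} (hv : WD Ω v G) :
    ∫ z in HB e p r, ‖(G (g z)).comp (fderiv ℝ g z)‖ ≤ K * ((K:ℝ) ^ n * ∫ x in Ω, ‖G x‖) := by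
  have i1 : IntegrableOn (fun x => ‖G x‖) Ω := Integrable.norm hv.2.1
  have i2 : IntegrableOn (fun z => ‖G (g z)‖) (HB e p r) :=
    comp_integrable c.gl.continuous.measurable c.hl (fun z hz => (c.ofHB z hz).2) c.inv' i1
  have i3 : IntegrableOn (fun z => ‖(G (g z)).comp (fderiv ℝ g z)‖) (HB e p r) :=
    Integrable.norm (c.wd hΩ hb hv).2.1
  calc _ ≤ ∫ z in HB e p r, K * ‖G (g z)‖ := by
        refine setIntegral_mono i3 (i2.const_mul _) fun z => ?_
        calc _ ≤ ‖G (g z)‖ * ‖fderiv ℝ g z‖ := ContinuousLinearMap.opNorm_comp_le _ _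
          _ ≤ ‖G (g z)‖ * K := by gcongr; exact norm_fderiv_le_of_lipschitz ℝ c.gl
          _ = _ := mul_comm _ _
    _ = K * ∫ z in HB e p r, ‖G (g z)‖ := integral_const_mul _ _
    _ ≤ _ := by
        gcongr
        exact comp_integral_le c.gl.continuous.measurable c.hl (fun z hz => (c.ofHB z hz).2)
          c.inv' i1 (fun _ => norm_nonneg _)

/-- shrunken chart domain -/
def shr (O : Set (EVec n)) (h : EVec n → EVec n) (p : EVec n) (r : ℝ) : Set (EVec n) :=
  O ∩ h ⁻¹' Metric.ball p (r / 2)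

theorem IsChart.shr_open (c : IsChart Ω O h g K e p r) : IsOpen (shr O h p r) :=
  c.op.inter (Metric.isOpen_ball.preimage c.hl.continuous)

theorem IsChart.shr_map (c : IsChart Ω O h g K e p r) :
    ∀ y ∈ shr O h p r ∩ Ω, h y ∈ HB e p (r / 2) := by
  rintro y ⟨⟨hy1, hy2⟩, hy3⟩
  exact ⟨hy2, (c.toHB y ⟨hy1, hy3⟩).2⟩

theorem IsChart.shr_inv (c : IsChart Ω O h g K e p r) :
    ∀ y ∈ shr O h p r ∩ Ω, g (h y) = y := fun y hy => c.inv y hy.1.1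

theorem HB_half (e p : EVec n) {r : ℝ} (hr : 0 < r) : HB e p (r / 2) ⊆ HB e p r :=
  fun z hz => ⟨Metric.ball_subset_ball (by linarith) hz.1, hz.2⟩

def Good (Ω S : Set (EVec n)) : Prop :=
  ∃ C : ℝ, 0 ≤ C ∧ ∀ (v : EVec n → ℝ) (G : EVec n → EVec n →L[ℝ] ℝ), WD Ω v G →
    ∀ ε > 0, ∃ c : ℝ, ∫ x in S, |v x - c| ≤ C * (∫ x in Ω, ‖G x‖) + ε

theorem fin_of_bdd {S : Set (EVec n)} (hb : Bornology.IsBounded S) : volume S ≠ ∞ :=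
  hb.measure_lt_top.ne

theorem IsChart.good (c : IsChart Ω O h g K e p r) (hΩ : IsOpen Ω)
    (hb : Bornology.IsBounded Ω) : Good Ω (shr O h p r ∩ Ω) := by
  obtain ⟨C, hC, H⟩ := poincare_half (p := p) c.unit c.rpos
  refine ⟨(K:ℝ) ^ n * (C * (K * (K:ℝ) ^ n)), by positivity, fun v G hv ε hε => ?_⟩
  obtain ⟨a, ha⟩ := H _ _ (c.wd hΩ hb hv) (ε / ((K:ℝ) ^ n + 1)) (by positivity)
  refine ⟨a, ?_⟩
  have hint : IntegrableOn (fun z => |v (g z) - a|) (HB e p (r / 2)) :=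
    (((c.wd hΩ hb hv).1.mono_set (HB_half e p c.rpos)).sub
      (integrableOn_const (fin_of_bdd (HB_bdd e p (r / 2))))).abs
  have h1 := comp_integral_le c.hl.continuous.measurable c.gl c.shr_map c.shr_inv hint
    (fun _ => abs_nonneg _)
  have h2 : ∫ x in shr O h p r ∩ Ω, |v x - a| =
      ∫ x in shr O h p r ∩ Ω, |v (g (h x)) - a| := by
    refine setIntegral_congr_fun (c.shr_open.inter hΩ).measurableSet fun y hy => ?_
    simp only [c.shr_inv y hy]
  rw [h2]
  refine h1.trans ?_
  have h3 := c.norm_le hΩ hb hv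
  calc _ ≤ (K:ℝ) ^ n * (C * (K * ((K:ℝ) ^ n * ∫ x in Ω, ‖G x‖)) + ε / ((K:ℝ) ^ n + 1)) := by
        gcongr
        refine ha.trans ?_
        gcongr
    _ = (K:ℝ) ^ n * (C * (K * (K:ℝ) ^ n)) * (∫ x in Ω, ‖G x‖) +
        (K:ℝ) ^ n * (ε / ((K:ℝ) ^ n + 1)) := by ring
    _ ≤ _ := by
        gcongr
        rw [mul_div_assoc', div_le_iff₀ (by positivity)]
        nlinarith [show (0:ℝ) ≤ (K:ℝ) ^ n by positivity]

theorem Good.union {S T : Set (EVec n)} (hb : Bornology.IsBounded Ω) (hS : Good Ω S)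
    (hT : Good Ω T) (hSo : IsOpen S) (hTo : IsOpen T) (hSΩ : S ⊆ Ω) (hTΩ : T ⊆ Ω)
    (hne : (S ∩ T).Nonempty) : Good Ω (S ∪ T) := by
  obtain ⟨C1, hC1, H1⟩ := hS
  obtain ⟨C2, hC2, H2⟩ := hT
  have hbS := hb.subset hSΩ
  have hbT := hb.subset hTΩ
  set m := volume.real (S ∩ T) with hm
  have hmp : 0 < m := ENNReal.toReal_pos ((hSo.inter hTo).measure_pos volume hne).ne'
    (fin_of_bdd (hbS.subset inter_subset_left))
  set q := 1 + volume.real T / m with hq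
  have hqp : 0 < q := by positivity
  refine ⟨(C1 + C2) * q, by positivity, fun v G hv ε hε => ?_⟩
  obtain ⟨c1, h1⟩ := H1 v G hv (ε / (2 * q)) (by positivity)
  obtain ⟨c2, h2⟩ := H2 v G hv (ε / (2 * q)) (by positivity)
  refine ⟨c1, ?_⟩
  have ii : ∀ Q ⊆ Ω, ∀ c : ℝ, IntegrableOn (fun x => |v x - c|) Q := fun Q hQ c =>
    ((hv.1.mono_set hQ).sub (integrableOn_const (fin_of_bdd (hb.subset hQ)))).abs
  set A := ∫ x in S, |v x - c1| with hA
  set B := ∫ x in T, |v x - c2| with hB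
  have hAB : m * |c1 - c2| ≤ A + B := by
    calc m * |c1 - c2| = ∫ x in S ∩ T, |c1 - c2| := by rw [setIntegral_const, smul_eq_mul]
      _ ≤ ∫ x in S ∩ T, (|v x - c1| + |v x - c2|) := by
          refine setIntegral_mono (integrableOn_const (fin_of_bdd (hbS.subset inter_subset_left)))
            ((ii _ (inter_subset_left.trans hSΩ) c1).add
              (ii _ (inter_subset_left.trans hSΩ) c2)) fun x => ?_
          have := abs_sub_le c1 (v x) c2
          rwa [abs_sub_comm c1 (v x)] at this
      _ = (∫ x in S ∩ T, |v x - c1|) + ∫ x in S ∩ T, |v x - c2| :=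
          integral_add (ii _ (inter_subset_left.trans hSΩ) c1)
              (ii _ (inter_subset_left.trans hSΩ) c2)
      _ ≤ A + B := add_le_add
          (setIntegral_mono_set (ii S hSΩ c1) (Eventually.of_forall fun _ => abs_nonneg _)
            (LE.le.eventuallyLE inter_subset_left))
          (setIntegral_mono_set (ii T hTΩ c2) (Eventually.of_forall fun _ => abs_nonneg _)
            (LE.le.eventuallyLE inter_subset_right))
  have hT1 : ∫ x in T, |v x - c1| ≤ B + volume.real T * |c1 - c2| := by
    calc _ ≤ ∫ x in T, (|v x - c2| + |c1 - c2|) := by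
          refine setIntegral_mono (ii T hTΩ c1) ((ii T hTΩ c2).add
            (integrableOn_const (fin_of_bdd hbT))) fun x => ?_
          have := abs_sub_le (v x) c2 c1
          rwa [abs_sub_comm c2 c1] at this
      _ = _ := by
          rw [integral_add (ii T hTΩ c2) (integrableOn_const (fin_of_bdd hbT)),
            setIntegral_const, smul_eq_mul]
  have hU : ∫ x in S ∪ T, |v x - c1| ≤ A + ∫ x in T, |v x - c1| := by
    have e1 : S ∪ T = S ∪ (T \ S) := by rw [union_sdiff_self]
    rw [e1, setIntegral_union disjoint_sdiff_right (hTo.measurableSet.diff hSo.measurableSet)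
      (ii S hSΩ c1) (ii _ (sdiff_subset.trans hTΩ) c1)]
    refine add_le_add le_rfl (setIntegral_mono_set (ii T hTΩ c1)
      (Eventually.of_forall fun _ => abs_nonneg _) (LE.le.eventuallyLE sdiff_subset))
  have hcc : |c1 - c2| ≤ (A + B) / m := by
    rw [le_div_iff₀ hmp, mul_comm]; exact hAB
  have hVT : 0 ≤ volume.real T := measureReal_nonneg
  calc _ ≤ A + (B + volume.real T * ((A + B) / m)) := by
        refine hU.trans ?_
        gcongr
        refine hT1.trans ?_
        gcongr
    _ = (A + B) * q := by rw [hq]; field_simp; ring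
    _ ≤ ((C1 * (∫ x in Ω, ‖G x‖) + ε / (2 * q)) + (C2 * (∫ x in Ω, ‖G x‖) + ε / (2 * q))) * q := by
        gcongr
    _ = _ := by field_simp; ring

theorem good_all {Ω : Set (EVec n)} (hb : Bornology.IsBounded Ω) (hΩc : IsPreconnected Ω)
    (hΩn : Ω.Nonempty) {ι : Type*} (t : Finset ι) (S : ι → Set (EVec n))
    (hSo : ∀ i, IsOpen (S i)) (hSΩ : ∀ i, S i ⊆ Ω) (hcov : Ω ⊆ ⋃ i ∈ t, S i)
    (hg : ∀ i, Good Ω (S i)) : Good Ω Ω := by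
  classical
  set V : Finset ι → Set (EVec n) := fun A => ⋃ i ∈ A, S i with hV
  have hVo : ∀ A, IsOpen (V A) := fun A => isOpen_biUnion fun i _ => hSo i
  have hVΩ : ∀ A, V A ⊆ Ω := fun A => iUnion₂_subset fun i _ => hSΩ i
  set P := t.powerset.filter (fun A => Good Ω (V A) ∧ (V A).Nonempty) with hP
  have hPn : P.Nonempty := by
    obtain ⟨x, hx⟩ := hΩn
    obtain ⟨i, hi, hxi⟩ := mem_iUnion₂.1 (hcov hx)
    refine ⟨{i}, Finset.mem_filter.2 ⟨by simpa using hi, ?_, ?_⟩⟩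
    · simpa [hV] using hg i
    · exact ⟨x, by simpa [hV] using hxi⟩
  obtain ⟨A, hA, hmax⟩ := Finset.exists_max_image P Finset.card hPn
  obtain ⟨hAt, hAg, hAn⟩ := Finset.mem_filter.1 hA
  have hAt := Finset.mem_powerset.1 hAt
  have hcover : Ω ⊆ V A ∪ V (t \ A) := by
    intro x hx
    obtain ⟨i, hi, hxi⟩ := mem_iUnion₂.1 (hcov hx)
    by_cases hiA : i ∈ A
    · exact Or.inl (mem_iUnion₂.2 ⟨i, hiA, hxi⟩)
    · exact Or.inr (mem_iUnion₂.2 ⟨i, Finset.mem_sdiff.2 ⟨hi, hiA⟩, hxi⟩)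
  have hdisj : ¬ (V A ∩ V (t \ A)).Nonempty := by
    rintro ⟨x, hx1, hx2⟩
    obtain ⟨j, hj, hxj⟩ := mem_iUnion₂.1 hx2
    obtain ⟨hjt, hjA⟩ := Finset.mem_sdiff.1 hj
    have e1 : V (insert j A) = V A ∪ S j := by
      simp only [hV, Finset.set_biUnion_insert]; rw [union_comm]
    have : insert j A ∈ P := by
      refine Finset.mem_filter.2 ⟨Finset.mem_powerset.2 (Finset.insert_subset hjt hAt), ?_, ?_⟩
      · rw [e1]
        exact hAg.union hb (hg j) (hVo A) (hSo j) (hVΩ A) (hSΩ j) ⟨x, hx1, hxj⟩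
      · rw [e1]; exact ⟨x, Or.inl hx1⟩
    have := hmax _ this
    rw [Finset.card_insert_of_notMem hjA] at this
    omega
  have hW : ¬ (V (t \ A)).Nonempty := by
    intro hW
    have := hΩc _ _ (hVo A) (hVo (t \ A)) hcover
      (by rwa [inter_eq_right.2 (hVΩ A)]) (by rwa [inter_eq_right.2 (hVΩ _)])
    exact hdisj (this.mono inter_subset_right)
  rw [not_nonempty_iff_eq_empty] at hW
  rw [hW, union_empty] at hcover
  rwa [Subset.antisymm (hVΩ A) hcover] at hAg

theorem Good.zero_mean (hb : Bornology.IsBounded Ω) (hg : Good Ω Ω) :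
    ∃ C : ℝ, 0 ≤ C ∧ ∀ (v : EVec n → ℝ) (G : EVec n → EVec n →L[ℝ] ℝ), WD Ω v G →
      ∫ x in Ω, v x = 0 → ∫ x in Ω, |v x| ≤ C * ∫ x in Ω, ‖G x‖ := by
  obtain ⟨C, hC, H⟩ := hg
  refine ⟨2 * C, by positivity, fun v G hv hz => ?_⟩
  refine le_of_forall_pos_le_add fun ε hε => ?_
  obtain ⟨c, hc⟩ := H v G hv (ε / 2) (by positivity)
  have ic : IntegrableOn (fun _ : EVec n => c) Ω := integrableOn_const (fin_of_bdd hb)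
  have i1 : IntegrableOn (fun x => |v x - c|) Ω := (hv.1.sub ic).abs
  have e1 : ∫ x in Ω, (v x - c) = - (volume.real Ω * c) := by
    rw [integral_sub hv.1 ic, hz, setIntegral_const, smul_eq_mul]; ring
  have e2 : volume.real Ω * |c| ≤ ∫ x in Ω, |v x - c| := by
    have := abs_integral_le_integral_abs (f := fun x => v x - c) (μ := volume.restrict Ω)
    rwa [e1, abs_neg, abs_mul, abs_of_nonneg measureReal_nonneg] at this
  calc ∫ x in Ω, |v x| ≤ ∫ x in Ω, (|v x - c| + |c|) := by
        refine setIntegral_mono hv.1.abs (i1.add (integrableOn_const (fin_of_bdd hb))) fun x => ?_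
        have := abs_sub_le (v x) c 0
        simpa using this
    _ = (∫ x in Ω, |v x - c|) + volume.real Ω * |c| := by
        rw [integral_add i1 (integrableOn_const (fin_of_bdd hb)), setIntegral_const, smul_eq_mul]
    _ ≤ _ := by linarith

end loc

set_option linter.unusedSectionVars false
set_option linter.unusedVariables false

section dens
variable {n : ℕ} {Ω O : Set (EVec n)} {h g : EVec n → EVec n} {K : NNReal} {e p : EVec n} {r : ℝ}

theorem lip_fd_int {w : EVec n → ℝ} {A : NNReal} (hw : LipschitzWith A w) {S : Set (EVec n)}
    (hS : Bornology.IsBounded S) : IntegrableOn (fderiv ℝ w) S :=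
  Integrable.mono' (integrableOn_const (fin_of_bdd hS) (C := (A:ℝ)))
    (measurable_fderiv ℝ w).aestronglyMeasurable
    (Eventually.of_forall fun x => norm_fderiv_le_of_lipschitz ℝ hw)

theorem lip_int {w : EVec n → ℝ} {A : NNReal} (hw : LipschitzWith A w) {M : ℝ}
    (hM : ∀ x, |w x| ≤ M) {S : Set (EVec n)}
    (hS : Bornology.IsBounded S) : IntegrableOn w S :=
  Integrable.mono' (integrableOn_const (fin_of_bdd hS) (C := M))
    hw.continuous.aestronglyMeasurable
    (Eventually.of_forall hM)

theorem IsChart.approx (c : IsChart Ω O h g K e p r) (hΩ : IsOpen Ω)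
    (hb : Bornology.IsBounded Ω) {v : EVec n → ℝ} {G : EVec n → EVec n →L[ℝ] ℝ}
    (hv : WD Ω v G) {ε : ℝ} (hε : 0 < ε) :
    ∃ (w : EVec n → ℝ) (A : NNReal) (M : ℝ), LipschitzWith A w ∧ (∀ x, |w x| ≤ M) ∧
      ∫ x in shr O h p r ∩ Ω, |w x - v x| ≤ ε ∧
      ∫ x in shr O h p r ∩ Ω, ‖fderiv ℝ w x - G x‖ ≤ ε := by
  set δ := ε / ((K:ℝ) ^ n + K * (K:ℝ) ^ n + 1) with hδ
  have hδp : 0 < δ := by positivity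
  have hδ1 : (K:ℝ) ^ n * δ ≤ ε := by
    rw [hδ, mul_div_assoc', div_le_iff₀ (by positivity)]
    nlinarith [show (0:ℝ) ≤ (K:ℝ) ^ n by positivity, show (0:ℝ) ≤ K * (K:ℝ) ^ n by positivity]
  have hδ2 : K * ((K:ℝ) ^ n * δ) ≤ ε := by
    rw [hδ, mul_div_assoc', mul_div_assoc', div_le_iff₀ (by positivity)]
    nlinarith [show (0:ℝ) ≤ (K:ℝ) ^ n by positivity, show (0:ℝ) ≤ K * (K:ℝ) ^ n by positivity]
  have hwd := c.wd hΩ hb hv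
  obtain ⟨W, hW, hWc, hW1, hW2⟩ := approx_half c.unit c.rpos hwd hδp
  obtain ⟨A, hA⟩ := ContDiff.lipschitzWith_of_hasCompactSupport hWc hW (by simp)
  obtain ⟨M, hM⟩ := hWc.exists_bound_of_continuous hW.continuous
  have hWi := hW.continuous.integrable_of_hasCompactSupport hWc (μ := volume)
  have hdWi := fderiv_integrable hW hWc
  have hSo := c.shr_open.inter hΩ
  have hbS : Bornology.IsBounded (shr O h p r ∩ Ω) := hb.subset inter_subset_right
  have hhm := c.hl.continuous.measurable
  have j1 : IntegrableOn (fun z => |W z - v (g z)|) (HB e p r) := (hWi.integrableOn.sub hwd.1).abs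
  have j2 : IntegrableOn (fun z => ‖fderiv ℝ W z - (G (g z)).comp (fderiv ℝ g z)‖)
      (HB e p (r/2)) := by
    have := (hdWi.integrableOn.sub hwd.2.1).norm
    exact IntegrableOn.mono_set (t := HB e p r) this (HB_half e p c.rpos)
  refine ⟨W ∘ h, A * K, M, hA.comp c.hl, fun x => hM _, ?_, ?_⟩
  · have e1 : ∫ x in shr O h p r ∩ Ω, |(W ∘ h) x - v x| =
        ∫ x in shr O h p r ∩ Ω, |W (h x) - v (g (h x))| := by
      refine setIntegral_congr_fun hSo.measurableSet fun y hy => ?_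
      simp only [c.shr_inv y hy, Function.comp]
    rw [e1]
    refine (comp_integral_le (q := fun z => |W z - v (g z)|) hhm c.gl
      (fun y hy => HB_half e p c.rpos (c.shr_map y hy)) c.shr_inv j1
      (fun _ => abs_nonneg _)).trans ?_
    exact (mul_le_mul_of_nonneg_left hW1 (by positivity)).trans hδ1
  · have hae : ∀ᵐ x ∂(volume.restrict (shr O h p r ∩ Ω)), DifferentiableAt ℝ g (h x) := by
      have hnull : volume {z | ¬ DifferentiableAt ℝ g z} = 0 := c.gl.ae_differentiableAt (μ := volume)
      rw [ae_restrict_iff' hSo.measurableSet]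
      have : volume (g '' {z | ¬ DifferentiableAt ℝ g z}) = 0 := by
        have := lip_vol c.gl {z | ¬ DifferentiableAt ℝ g z}
        rw [hnull, mul_zero] at this
        exact le_antisymm this (zero_le)
      refine measure_mono_null ?_ this
      intro y hy
      simp only [mem_compl_iff, mem_ofPred_eq, not_forall] at hy
      obtain ⟨hyS, hy⟩ := hy
      exact ⟨h y, hy, c.shr_inv y hyS⟩
    have k2 : IntegrableOn (fun x => ‖fderiv ℝ W (h x) - (G (g (h x))).comp (fderiv ℝ g (h x))‖)
        (shr O h p r ∩ Ω) := comp_integrable hhm c.gl c.shr_map c.shr_inv j2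
    have l1 : IntegrableOn (fun x => ‖fderiv ℝ (W ∘ h) x - G x‖) (shr O h p r ∩ Ω) :=
      ((lip_fd_int (hA.comp c.hl) hbS).sub (hv.2.1.mono_set inter_subset_right)).norm
    calc _ ≤ ∫ x in shr O h p r ∩ Ω,
          K * ‖fderiv ℝ W (h x) - (G (g (h x))).comp (fderiv ℝ g (h x))‖ := by
          refine setIntegral_mono_ae_restrict l1 (k2.const_mul _) ?_
          filter_upwards [hae, ae_restrict_of_ae (c.hl.ae_differentiableAt (μ := volume)),
            ae_restrict_mem hSo.measurableSet] with y hy1 hy2 hyS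
          have e1 : fderiv ℝ (W ∘ h) y = (fderiv ℝ W (h y)).comp (fderiv ℝ h y) :=
            fderiv_comp y (hW.differentiable (by simp) _) hy2
          have e2 : (fderiv ℝ g (h y)).comp (fderiv ℝ h y) = ContinuousLinearMap.id ℝ _ := by
            rw [← fderiv_comp y hy1 hy2]
            have : g ∘ h =ᶠ[𝓝 y] id := by
              filter_upwards [c.op.mem_nhds hyS.1.1] with z hz using c.inv z hz
            rw [this.fderiv_eq, fderiv_id]
          have e3 : fderiv ℝ (W ∘ h) y - G y =
              (fderiv ℝ W (h y) - (G (g (h y))).comp (fderiv ℝ g (h y))).comp (fderiv ℝ h y) := by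
            rw [ContinuousLinearMap.sub_comp, ContinuousLinearMap.comp_assoc, e2, e1,
              c.shr_inv y hyS, ContinuousLinearMap.comp_id]
          rw [e3]
          refine (ContinuousLinearMap.opNorm_comp_le _ _).trans ?_
          rw [mul_comm]
          gcongr
          exact norm_fderiv_le_of_lipschitz ℝ c.hl
      _ = K * ∫ x in shr O h p r ∩ Ω,
          ‖fderiv ℝ W (h x) - (G (g (h x))).comp (fderiv ℝ g (h x))‖ := integral_const_mul _ _
      _ ≤ K * ((K:ℝ) ^ n * δ) := by
          gcongr
          refine (comp_integral_le (q := fun z => ‖fderiv ℝ W z - (G (g z)).comp (fderiv ℝ g z)‖)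
            hhm c.gl c.shr_map c.shr_inv j2 (fun _ => norm_nonneg _)).trans ?_
          exact mul_le_mul_of_nonneg_left hW2 (by positivity)
      _ ≤ ε := hδ2

/-- local data -/
def Loc (Ω S : Set (EVec n)) : Prop := IsOpen S ∧ Good Ω (S ∩ Ω) ∧
  ∀ (v : EVec n → ℝ) (G : EVec n → EVec n →L[ℝ] ℝ), WD Ω v G → ∀ ε > 0,
    ∃ (w : EVec n → ℝ) (A : NNReal) (M : ℝ), LipschitzWith A w ∧ (∀ x, |w x| ≤ M) ∧
      ∫ x in S ∩ Ω, |w x - v x| ≤ ε ∧ ∫ x in S ∩ Ω, ‖fderiv ℝ w x - G x‖ ≤ ε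

theorem finite_cover (hn : 0 < n) (hΩ : IsLipschitzDomain Ω) (hb : Bornology.IsBounded Ω) :
    ∃ (m : ℕ) (S : Fin m → Set (EVec n)), (∀ i, Loc Ω (S i)) ∧ closure Ω ⊆ ⋃ i, S i := by
  have h1 : ∀ x ∈ closure Ω, ∃ S : Set (EVec n), Loc Ω S ∧ S ∈ 𝓝[closure Ω] x := by
    intro x hx
    obtain ⟨O, h, g, K, e, p, r, c, hxO, hp⟩ := exists_chart hn hΩ hx
    refine ⟨shr O h p r, ⟨c.shr_open, c.good hΩ.1 hb,
      fun v G hv ε hε => c.approx hΩ.1 hb hv hε⟩, mem_nhdsWithin_of_mem_nhds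
      (c.shr_open.mem_nhds ⟨hxO, ?_⟩)⟩
    rw [mem_preimage, hp]
    exact Metric.mem_ball_self (by have := c.rpos; linarith)
  choose! S hS hSn using h1
  obtain ⟨t, ht, hcov⟩ := hb.isCompact_closure.elim_nhdsWithin_subcover S hSn
  refine ⟨t.card, fun i => S (t.equivFin.symm i), fun i => hS _ (ht _ (t.equivFin.symm i).2), ?_⟩
  intro x hx
  obtain ⟨y, hy, hxy⟩ := mem_iUnion₂.1 (hcov hx)
  exact mem_iUnion.2 ⟨t.equivFin ⟨y, hy⟩, by simpa using hxy⟩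

theorem poincare_dom (hn : 0 < n) (hΩ : IsLipschitzDomain Ω) (hb : Bornology.IsBounded Ω) :
    ∃ C : ℝ, 0 ≤ C ∧ ∀ (v : EVec n → ℝ) (G : EVec n → EVec n →L[ℝ] ℝ), WD Ω v G →
      ∫ x in Ω, v x = 0 → ∫ x in Ω, |v x| ≤ C * ∫ x in Ω, ‖G x‖ := by
  obtain ⟨m, S, hS, hcov⟩ := finite_cover hn hΩ hb
  refine Good.zero_mean hb (good_all hb hΩ.2.2.1.isPreconnected hΩ.2.1 Finset.univ
    (fun i => S i ∩ Ω) (fun i => (hS i).1.inter hΩ.1) (fun i => inter_subset_right) ?_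
    (fun i => (hS i).2.1))
  intro x hx
  obtain ⟨i, hi⟩ := mem_iUnion.1 (hcov (subset_closure hx))
  exact mem_iUnion₂.2 ⟨i, Finset.mem_univ _, hi, hx⟩

end dens

set_option linter.unusedSectionVars false
set_option linter.unusedVariables false

section dens2
variable {n : ℕ} {Ω : Set (EVec n)}

theorem exists_pou (hb : Bornology.IsBounded Ω) {m : ℕ} {S : Fin m → Set (EVec n)}
    (hSo : ∀ i, IsOpen (S i)) (hcov : closure Ω ⊆ ⋃ i, S i) :
    ∃ ψ : Fin m → EVec n → ℝ, (∀ i, ContDiff ℝ 1 (ψ i)) ∧ (∀ i, HasCompactSupport (ψ i)) ∧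
      (∀ i, tsupport (ψ i) ⊆ S i) ∧ (∀ i x, |ψ i x| ≤ 1) ∧ ∀ x ∈ closure Ω, ∑ i, ψ i x = 1 := by
  obtain ⟨R, hR⟩ := hb.closure.subset_ball 0
  obtain ⟨f, hf⟩ := SmoothPartitionOfUnity.exists_isSubordinate (modelWithCornersSelf ℝ (EVec n))
    (s := closure Ω) isClosed_closure (fun i => S i ∩ Metric.ball 0 R)
    (fun i => (hSo i).inter Metric.isOpen_ball)
    (fun x hx => by
      obtain ⟨i, hi⟩ := mem_iUnion.1 (hcov hx)
      exact mem_iUnion.2 ⟨i, hi, hR hx⟩)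
  refine ⟨fun i => f i, fun i => ?_, fun i => ?_, fun i => ?_, fun i x => ?_, fun x hx => ?_⟩
  · exact (f i).contMDiff.contDiff.of_le (by simp)
  · exact Metric.isCompact_of_isClosed_isBounded (isClosed_tsupport _)
      (Metric.isBounded_ball.subset ((hf i).trans inter_subset_right))
  · exact (hf i).trans inter_subset_left
  · rw [abs_of_nonneg (f.nonneg i x)]; exact f.le_one i x
  · have := f.sum_eq_one hx
    rwa [finsum_eq_sum_of_fintype] at this

theorem lip_prod {a b : EVec n → ℝ} {A B : NNReal} {P Q : ℝ} (ha : LipschitzWith A a)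
    (hb : LipschitzWith B b) (hP : ∀ x, |a x| ≤ P) (hQ : ∀ x, |b x| ≤ Q) :
    ∃ K : NNReal, LipschitzWith K (fun x => a x * b x) := by
  have hP0 : 0 ≤ P := (abs_nonneg _).trans (hP 0)
  have hQ0 : 0 ≤ Q := (abs_nonneg _).trans (hQ 0)
  refine ⟨Real.toNNReal (A * Q + P * B), LipschitzWith.of_dist_le_mul fun x y => ?_⟩
  rw [Real.coe_toNNReal _ (by positivity), Real.dist_eq]
  have e : a x * b x - a y * b y = (a x - a y) * b x + a y * (b x - b y) := by ring
  have h1 := ha.dist_le_mul x y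
  have h2 := hb.dist_le_mul x y
  rw [Real.dist_eq] at h1 h2
  rw [e]
  calc _ ≤ |a x - a y| * |b x| + |a y| * |b x - b y| := by
        rw [← abs_mul, ← abs_mul]; exact abs_add_le _ _
    _ ≤ (A * dist x y) * Q + P * (B * dist x y) := by
        gcongr
        · exact hQ x
        · exact hP y
    _ = _ := by ring

theorem lip_sum {ι : Type*} (s : Finset ι) {a : ι → EVec n → ℝ}
    (ha : ∀ i, ∃ K : NNReal, LipschitzWith K (a i)) :
    ∃ K : NNReal, LipschitzWith K (fun x => ∑ i ∈ s, a i x) := by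
  classical
  induction s using Finset.induction_on with
  | empty => exact ⟨0, by simp⟩
  | insert i s hi ih =>
    obtain ⟨K, hK⟩ := ih
    obtain ⟨A, hA⟩ := ha i
    refine ⟨A + K, ?_⟩
    simp only [Finset.sum_insert hi]
    exact hA.add hK

theorem density (hn : 0 < n) (hΩ : IsLipschitzDomain Ω) (hb : Bornology.IsBounded Ω)
    {v : EVec n → ℝ} {G : EVec n → EVec n →L[ℝ] ℝ} (hv : WD Ω v G) {ε : ℝ} (hε : 0 < ε) :
    ∃ (w : EVec n → ℝ) (A : NNReal) (M : ℝ), LipschitzWith A w ∧ (∀ x, |w x| ≤ M) ∧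
      ∫ x in Ω, ‖fderiv ℝ w x - G x‖ ≤ ε := by
  obtain ⟨m, S, hS, hcov⟩ := finite_cover hn hΩ hb
  obtain ⟨ψ, hψ, hψc, hψS, hψ1, hψs⟩ := exists_pou hb (fun i => (hS i).1) hcov
  have hLip : ∀ i, ∃ B : NNReal, LipschitzWith B (ψ i) := fun i =>
    ContDiff.lipschitzWith_of_hasCompactSupport (hψc i) (hψ i) (by simp)
  choose B hB using hLip
  have hεi : ∀ i, 0 < ε / ((m + 1) * (1 + B i)) := fun i => by positivity
  choose w A M hw hM hw1 hw2 using fun i => (hS i).2.2 v G hv _ (hεi i)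
  obtain ⟨K, hK⟩ := lip_sum Finset.univ (a := fun i x => ψ i x * w i x)
    (fun i => lip_prod (hB i) (hw i) (hψ1 i) (hM i))
  have hM0 : ∀ i, 0 ≤ M i := fun i => (abs_nonneg _).trans (hM i 0)
  refine ⟨fun x => ∑ i, ψ i x * w i x, K, ∑ i, M i, hK, fun x => ?_, ?_⟩
  · refine (Finset.abs_sum_le_sum_abs _ _).trans (Finset.sum_le_sum fun i _ => ?_)
    rw [abs_mul]
    calc _ ≤ 1 * M i := by
          gcongr
          · exact hψ1 i x
          · exact hM i x
      _ = _ := one_mul _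
  have hψ0 : ∀ i, ∀ x ∉ S i, ψ i x = 0 ∧ fderiv ℝ (ψ i) x = 0 := fun i x hx => by
    have h1 : x ∉ tsupport (ψ i) := fun h => hx (hψS i h)
    exact ⟨image_eq_zero_of_notMem_tsupport h1,
      image_eq_zero_of_notMem_tsupport fun h => h1 (tsupport_fderiv_subset ℝ h)⟩
  set q : Fin m → EVec n → ℝ := fun i => (S i).indicator
    (fun x => ‖fderiv ℝ (w i) x - G x‖ + B i * |w i x - v x|) with hq
  have i1 : ∀ i, IntegrableOn (fun x => ‖fderiv ℝ (w i) x - G x‖) Ω := fun i =>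
    ((lip_fd_int (hw i) hb).sub hv.2.1).norm
  have i2 : ∀ i, IntegrableOn (fun x => |w i x - v x|) Ω := fun i =>
    ((lip_int (hw i) (hM i) hb).sub hv.1).abs
  have hqi : ∀ i, IntegrableOn (q i) Ω := fun i =>
    Integrable.indicator ((i1 i).add ((i2 i).const_mul _)) (hS i).1.measurableSet
  have hqI : ∀ i, ∫ x in Ω, q i x ≤ ε / (m + 1) := fun i => by
    rw [hq]
    simp only
    rw [setIntegral_indicator (hS i).1.measurableSet, inter_comm,
      integral_add ((i1 i).mono_set inter_subset_right)
      (((i2 i).mono_set inter_subset_right).const_mul _), integral_const_mul]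
    calc _ ≤ ε / ((m + 1) * (1 + B i)) + B i * (ε / ((m + 1) * (1 + B i))) :=
          add_le_add (hw2 i) (mul_le_mul_of_nonneg_left (hw1 i) (B i).2)
      _ = _ := by
        have : (1:ℝ) + B i ≠ 0 := by positivity
        field_simp
  calc ∫ x in Ω, ‖fderiv ℝ (fun x => ∑ i, ψ i x * w i x) x - G x‖
      ≤ ∫ x in Ω, ∑ i, q i x := by
        refine setIntegral_mono_ae_restrict ((lip_fd_int hK hb).sub hv.2.1).norm
          (integrable_finsetSum _ fun i _ => hqi i) ?_
        have hd : ∀ᵐ x ∂volume.restrict Ω, ∀ i, DifferentiableAt ℝ (w i) x :=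
          ae_all_iff.2 fun i => ae_restrict_of_ae ((hw i).ae_differentiableAt (μ := volume))
        filter_upwards [hd, ae_restrict_mem hΩ.1.measurableSet] with x hx hxΩ
        have hdψ : ∀ i, DifferentiableAt ℝ (ψ i) x := fun i => (hψ i).differentiable (by simp) x
        have e1 : fderiv ℝ (fun x => ∑ i, ψ i x * w i x) x =
            ∑ i, (ψ i x • fderiv ℝ (w i) x + w i x • fderiv ℝ (ψ i) x) := by
          rw [fderiv_fun_sum (A := fun i x => ψ i x * w i x) (fun i _ => (hdψ i).mul (hx i))]
          exact Finset.sum_congr rfl fun i _ => fderiv_fun_mul (hdψ i) (hx i)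
        have e2 : ∑ i, fderiv ℝ (ψ i) x = 0 := by
          rw [← fderiv_fun_sum (fun i _ => hdψ i)]
          have : (fun y => ∑ i, ψ i y) =ᶠ[𝓝 x] fun _ => 1 := by
            filter_upwards [hΩ.1.mem_nhds hxΩ] with y hy using hψs y (subset_closure hy)
          rw [this.fderiv_eq]; simp
        have e3 : G x = ∑ i, ψ i x • G x := by
          rw [← Finset.sum_smul, hψs x (subset_closure hxΩ), one_smul]
        have e4 : (0 : EVec n →L[ℝ] ℝ) = ∑ i, v x • fderiv ℝ (ψ i) x := by
          rw [← Finset.smul_sum, e2, smul_zero]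
        have e5 : fderiv ℝ (fun x => ∑ i, ψ i x * w i x) x - G x =
            ∑ i, (ψ i x • (fderiv ℝ (w i) x - G x) + (w i x - v x) • fderiv ℝ (ψ i) x) := by
          rw [← sub_zero (_ - G x), e1]
          conv_lhs => rw [e3, e4]
          rw [← Finset.sum_sub_distrib, ← Finset.sum_sub_distrib]
          refine Finset.sum_congr rfl fun i _ => ?_
          rw [smul_sub, sub_smul]; abel
        rw [e5]
        refine (norm_sum_le _ _).trans (Finset.sum_le_sum fun i _ => ?_)
        by_cases hxS : x ∈ S i
        · rw [hq]
          simp only [indicator_of_mem hxS]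
          refine (norm_add_le _ _).trans (add_le_add ?_ ?_)
          · rw [norm_smul]
            exact mul_le_of_le_one_left (norm_nonneg _) (hψ1 i x)
          · rw [norm_smul, mul_comm]
            gcongr
            · exact norm_fderiv_le_of_lipschitz ℝ (hB i)
            · rfl
        · rw [hq, (hψ0 i x hxS).1, (hψ0 i x hxS).2]
          simp [indicator_of_notMem hxS]
    _ = ∑ i, ∫ x in Ω, q i x := integral_finsetSum _ fun i _ => hqi i
    _ ≤ ∑ i : Fin m, ε / (m + 1) := Finset.sum_le_sum fun i _ => hqI i
    _ = m * (ε / (m + 1)) := by simp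
    _ ≤ ε := by
        rw [mul_div_assoc', div_le_iff₀ (by positivity)]
        nlinarith
end dens2

set_option linter.unusedSectionVars false
set_option linter.unusedVariables false

section varf
variable {f : ℝ → ℝ} {c0 : ℝ}

theorem f_nonneg (hs : StrictConvexOn ℝ (Ici 0) f) (hf0 : f 0 = 0)
    (hd : HasDerivWithinAt f 0 (Ici 0) 0) {t : ℝ} (ht : 0 ≤ t) : 0 ≤ f t := by
  rcases ht.eq_or_lt with rfl | ht
  · exact hf0.ge
  have := hs.convexOn.le_slope_of_hasDerivWithinAt (x := 0) (y := t) (by simp) ht.le ht hd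
  rw [slope_def_field, hf0, sub_zero, sub_zero] at this
  have h2 := mul_nonneg this ht.le
  rwa [div_mul_cancel₀ _ ht.ne'] at h2

theorem f_sub (hs : StrictConvexOn ℝ (Ici 0) f) (hf0 : f 0 = 0) {s t : ℝ} (h0 : 0 < s)
    (hst : s < t) : f s < (s / t) * f t := by
  have ht := h0.trans hst
  have h1 : 0 < 1 - s / t := by rw [sub_pos, div_lt_one ht]; exact hst
  have := hs.2 (x := 0) (y := t) (by simp) ht.le ht.ne h1 (div_pos h0 ht) (by ring)
  simp only [smul_eq_mul, mul_zero, zero_add, hf0] at this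
  rwa [div_mul_cancel₀ _ ht.ne'] at this

theorem f_pos (hs : StrictConvexOn ℝ (Ici 0) f) (hf0 : f 0 = 0)
    (hd : HasDerivWithinAt f 0 (Ici 0) 0) {t : ℝ} (ht : 0 < t) : 0 < f t := by
  have h1 := f_nonneg hs hf0 hd (t := t / 2) (by linarith)
  have h2 := f_sub hs hf0 (s := t / 2) (t := t) (by linarith) (by linarith)
  have : t / 2 / t = 1 / 2 := by field_simp
  rw [this] at h2
  linarith

theorem f_mono (hs : StrictConvexOn ℝ (Ici 0) f) (hf0 : f 0 = 0)
    (hd : HasDerivWithinAt f 0 (Ici 0) 0) : StrictMonoOn f (Ici 0) := by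
  intro s hs0 t ht hst
  have hs0 : 0 ≤ s := hs0
  rcases hs0.eq_or_lt with rfl | h0
  · rw [hf0]; exact f_pos hs hf0 hd hst
  · have h1 := f_sub hs hf0 h0 hst
    have h2 := f_pos hs hf0 hd (h0.trans hst)
    have : s / t ≤ 1 := by rw [div_le_one (h0.trans hst)]; exact hst.le
    nlinarith

theorem f_le_inf (hs : StrictConvexOn ℝ (Ici 0) f) (hf0 : f 0 = 0)
    (hinf : Tendsto (fun t => f t / t) atTop (𝓝 c0)) {t : ℝ} (ht : 0 ≤ t) : f t ≤ c0 * t := by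
  rcases ht.eq_or_lt with rfl | ht
  · simp [hf0]
  rw [← div_le_iff₀ ht]
  refine ge_of_tendsto hinf ?_
  filter_upwards [eventually_gt_atTop t] with R hR
  have := f_sub hs hf0 ht hR
  rw [div_le_div_iff₀ ht (ht.trans hR)]
  rw [div_mul_eq_mul_div, lt_div_iff₀ (ht.trans hR)] at this
  linarith

theorem f_lip (hs : StrictConvexOn ℝ (Ici 0) f) (hf0 : f 0 = 0)
    (hd : HasDerivWithinAt f 0 (Ici 0) 0)
    (hinf : Tendsto (fun t => f t / t) atTop (𝓝 c0)) {s t : ℝ} (h0 : 0 ≤ s) (hst : s ≤ t) :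
    f t - f s ≤ c0 * (t - s) := by
  rcases hst.eq_or_lt with rfl | hst
  · simp
  rw [← div_le_iff₀ (sub_pos.2 hst)]
  have hlim : Tendsto (fun R : ℝ => (f R / R) * (1 - s / R)⁻¹) atTop (𝓝 (c0 * (1 - 0)⁻¹)) :=
    hinf.mul ((tendsto_const_nhds.sub (tendsto_const_nhds.div_atTop tendsto_id)).inv₀ (by simp))
  simp only [sub_zero, inv_one, mul_one] at hlim
  refine ge_of_tendsto hlim ?_
  filter_upwards [eventually_gt_atTop t] with R hR
  have hR0 : 0 < R := (h0.trans_lt hst).trans hR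
  have h1 := hs.convexOn.secant_mono (a := s) (x := t) (y := R) h0 (h0.trans hst.le)
    hR0.le hst.ne' (hst.trans hR).ne' hR.le
  refine h1.trans ?_
  have hsR : 0 < R - s := by linarith
  have e : (f R / R) * (1 - s / R)⁻¹ = f R / (R - s) := by
    have : 1 - s / R = (R - s) / R := by field_simp
    rw [this, inv_div]; field_simp
  rw [e]
  gcongr
  linarith [f_nonneg hs hf0 hd h0]

theorem f_coer (hs : StrictConvexOn ℝ (Ici 0) f) (hf0 : f 0 = 0)
    (hd : HasDerivWithinAt f 0 (Ici 0) 0)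
    (hinf : Tendsto (fun t => f t / t) atTop (𝓝 c0)) {σ : ℝ} (hσ0 : 0 ≤ σ) (hσ : σ < c0) :
    ∃ C : ℝ, 0 ≤ C ∧ ∀ t, 0 ≤ t → σ * t - C ≤ f t := by
  have h1 := (hinf.eventually (lt_mem_nhds hσ)).and (eventually_gt_atTop (0:ℝ))
  obtain ⟨t0, ht0, ht0p⟩ := h1.exists
  refine ⟨σ * t0, by positivity, fun t ht => ?_⟩
  rw [lt_div_iff₀ ht0p] at ht0
  rcases le_or_gt t t0 with h | h
  · have := f_nonneg hs hf0 hd ht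
    nlinarith
  · have h2 := f_sub hs hf0 ht0p h
    rw [div_mul_eq_mul_div, lt_div_iff₀ (ht0p.trans h)] at h2
    have : σ * t ≤ f t := by
      by_contra hcon
      push Not at hcon
      nlinarith
    nlinarith [mul_nonneg hσ0 ht0p.le]

variable {E : Type*} [NormedAddCommGroup E] [InnerProductSpace ℝ E]

/-- abstract facts about `F` -/
structure NiceF (F : E → ℝ) : Prop where
  lip : ∃ K : NNReal, LipschitzWith K F
  conv : ConvexOn ℝ univ F
  strict : ∀ a b : E, a ≠ b → F ((2:ℝ)⁻¹ • (a + b)) < (F a + F b) / 2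

theorem nice_f (hs : StrictConvexOn ℝ (Ici 0) f) (hf0 : f 0 = 0)
    (hd : HasDerivWithinAt f 0 (Ici 0) 0) (hc0 : 0 ≤ c0)
    (hinf : Tendsto (fun t => f t / t) atTop (𝓝 c0)) : NiceF (fun z : E => f ‖z‖) := by
  have hm := f_mono hs hf0 hd
  refine ⟨⟨Real.toNNReal c0, LipschitzWith.of_dist_le_mul fun x y => ?_⟩, ?_, ?_⟩
  · rw [Real.coe_toNNReal _ hc0]
    have key : ∀ x y : E, ‖x‖ ≤ ‖y‖ → dist (f ‖x‖) (f ‖y‖) ≤ c0 * dist x y := by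
      intro x y hxy
      rw [Real.dist_eq, abs_sub_comm, abs_of_nonneg (sub_nonneg.2
        (hm.monotoneOn (norm_nonneg x) (norm_nonneg y) hxy))]
      refine (f_lip hs hf0 hd hinf (norm_nonneg x) hxy).trans ?_
      gcongr
      rw [dist_comm, dist_eq_norm]
      exact norm_sub_norm_le _ _
    rcases le_total ‖x‖ ‖y‖ with h | h
    · exact key x y h
    · rw [dist_comm, dist_comm x y]; exact key y x h
  · refine ⟨convex_univ, fun x _ y _ a b ha hb hab => ?_⟩
    have h1 : ‖a • x + b • y‖ ≤ a * ‖x‖ + b * ‖y‖ := by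
      refine (norm_add_le _ _).trans ?_
      rw [norm_smul, norm_smul, Real.norm_of_nonneg ha, Real.norm_of_nonneg hb]
    exact (hm.monotoneOn (norm_nonneg _) (by simp only [mem_Ici]; positivity) h1).trans
      (hs.convexOn.2 (norm_nonneg x) (norm_nonneg y) ha hb hab)
  · intro a b hab
    have h2 : ‖(2:ℝ)⁻¹ • (a + b)‖ = ‖a + b‖ / 2 := by
      rw [norm_smul]; norm_num; ring
    rw [h2]
    by_cases hn : ‖a‖ = ‖b‖
    · have h3 : ‖a + b‖ / 2 < ‖a‖ := by
        have hp := parallelogram_law_with_norm ℝ a b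
        have : 0 < ‖a - b‖ := norm_pos_iff.2 (sub_ne_zero.2 hab)
        rw [← hn] at hp
        nlinarith [norm_nonneg (a + b), norm_nonneg a]
      have := hm (by simp only [mem_Ici]; positivity) (norm_nonneg a) h3
      rw [← hn]; linarith
    · have h3 : ‖a + b‖ / 2 ≤ (1/2:ℝ) * ‖a‖ + (1/2) * ‖b‖ := by
        have := norm_add_le a b; linarith
      have h4 := hm.monotoneOn (by simp only [mem_Ici]; positivity)
        (by simp only [mem_Ici]; positivity) h3
      have h5 := hs.2 (norm_nonneg a) (norm_nonneg b) hn (show (0:ℝ) < 1/2 by norm_num)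
        (show (0:ℝ) < 1/2 by norm_num) (by norm_num)
      simp only [smul_eq_mul] at h5
      linarith

/-- midpoint defect -/
noncomputable def defect (F : E → ℝ) (h z : E) : ℝ := (F z + F h) / 2 - F ((2:ℝ)⁻¹ • (z + h))

theorem NiceF.defect_nonneg {F : E → ℝ} (hF : NiceF F) (h z : E) : 0 ≤ defect F h z := by
  unfold defect
  by_cases hz : z = h
  · subst hz
    have : (2:ℝ)⁻¹ • (z + z) = z := by rw [← two_smul ℝ z, smul_smul]; norm_num
    rw [this]; linarith
  · have := hF.strict z h hz; linarith

theorem NiceF.cont {F : E → ℝ} (hF : NiceF F) : Continuous F := by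
  obtain ⟨K, hK⟩ := hF.lip; exact hK.continuous

theorem NiceF.defect_mono {F : E → ℝ} (hF : NiceF F) (h w : E) {t : ℝ} (ht : 0 ≤ t) (ht1 : t ≤ 1) :
    defect F h (h + t • w) ≤ defect F h (h + w) := by
  have hp : 0 < 1 - t / 2 := by linarith
  have hp2 : (2 - t) ≠ 0 := by linarith
  set A := h + (t / 2) • w
  have hA : (2:ℝ)⁻¹ • (h + t • w + h) = A := by
    simp only [A]; module
  have hB : (2:ℝ)⁻¹ • (h + w + h) = h + (1/2 : ℝ) • w := by module
  have ha : (1 - t) / (1 - t/2) + (t / 2) / (1 - t/2) = 1 := by field_simp; ring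
  have hb : (1/2) / (1 - t/2) + ((1 - t)/2) / (1 - t/2) = 1 := by field_simp; ring
  have h1 := hF.conv.2 (mem_univ A) (mem_univ (h + w)) (div_nonneg (by linarith) hp.le)
    (div_nonneg (by linarith) hp.le) ha
  have h2 := hF.conv.2 (mem_univ A) (mem_univ (h + w)) (div_nonneg (by norm_num) hp.le)
    (div_nonneg (by linarith) hp.le) hb
  have e1 : ((1 - t) / (1 - t/2)) • A + ((t / 2) / (1 - t/2)) • (h + w) = h + t • w := by
    simp only [A]
    have hne := hp.ne'
    match_scalars <;> field_simp <;> ring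
  have e2 : ((1/2) / (1 - t/2)) • A + (((1 - t)/2) / (1 - t/2)) • (h + w) = h + (1/2 : ℝ) • w := by
    simp only [A]
    have hne := hp.ne'
    match_scalars <;> field_simp <;> ring
  rw [e1] at h1
  rw [e2] at h2
  unfold defect
  rw [hA, hB]
  simp only [smul_eq_mul] at h1 h2
  have s1 : ((1 - t) / (1 - t/2)) / 2 + (1/2) / (1 - t/2) = 1 := by field_simp; ring
  have s2 : ((t / 2) / (1 - t/2)) / 2 + ((1 - t)/2) / (1 - t/2) = 1/2 := by field_simp; ring
  have : F (h + t • w) / 2 + F (h + (1/2:ℝ) • w) ≤ F A + F (h + w) / 2 := by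
    calc _ ≤ (((1 - t) / (1 - t/2)) / 2 + (1/2) / (1 - t/2)) * F A +
        (((t / 2) / (1 - t/2)) / 2 + ((1 - t)/2) / (1 - t/2)) * F (h + w) := by linarith
      _ = _ := by rw [s1, s2]; ring
  linarith

theorem NiceF.tendsto_of_defect [FiniteDimensional ℝ E] {F : E → ℝ} (hF : NiceF F) (h : E)
    {z : ℕ → E} (hz : Tendsto (fun k => defect F h (z k)) atTop (𝓝 0)) :
    Tendsto z atTop (𝓝 h) := by
  have : ProperSpace E := FiniteDimensional.proper ℝ E
  rw [Metric.tendsto_atTop']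
  intro δ hδ
  by_cases hne : (Metric.sphere h δ).Nonempty
  · have hc : Continuous (fun z => defect F h z) := by
      unfold defect
      have := hF.cont
      fun_prop
    obtain ⟨y, hy, hmin⟩ := (isCompact_sphere h δ).exists_isMinOn hne hc.continuousOn
    have hym : 0 < defect F h y := by
      have : y ≠ h := by rintro rfl; simp at hy; linarith
      have := hF.strict y h this
      unfold defect; linarith
    obtain ⟨K, hK⟩ := (hz.eventually (gt_mem_nhds hym)).exists_forall_of_atTop
    refine ⟨K, fun k hk => ?_⟩
    by_contra hcon
    push Not at hcon
    have h1 := hK k hk.le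
    have hd : 0 < dist (z k) h := hδ.trans_le hcon
    rw [dist_eq_norm] at hd hcon
    have h2 := hF.defect_mono h (z k - h) (t := δ / ‖z k - h‖) (by positivity)
      (by rw [div_le_one hd]; exact hcon)
    rw [add_sub_cancel] at h2
    have h3 : defect F h y ≤ defect F h (h + (δ / ‖z k - h‖) • (z k - h)) := by
      refine hmin ?_
      rw [mem_sphere_iff_norm, add_sub_cancel_left, norm_smul, norm_div, norm_norm,
        div_mul_cancel₀ _ hd.ne', Real.norm_of_nonneg hδ.le]
    linarith
  · refine ⟨0, fun k _ => ?_⟩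
    by_contra hcon
    push Not at hcon
    have hd : 0 < dist (z k) h := hδ.trans_le hcon
    rw [dist_eq_norm] at hd hcon
    refine hne ⟨h + (δ / ‖z k - h‖) • (z k - h), ?_⟩
    rw [mem_sphere_iff_norm, add_sub_cancel_left, norm_smul, norm_div, norm_norm,
        div_mul_cancel₀ _ hd.ne', Real.norm_of_nonneg hδ.le]
end varf

set_option linter.unusedSectionVars false
set_option linter.unusedVariables false

section vari
variable {X : Type*} [MeasurableSpace X] {μ : Measure X} [IsFiniteMeasure μ]
variable {E : Type*} [NormedAddCommGroup E] [InnerProductSpace ℝ E]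

theorem lip_bound {F : E → ℝ} {K : NNReal} (hF : LipschitzWith K F) (z : E) :
    |F z| ≤ |F 0| + K * ‖z‖ := by
  have := hF.dist_le_mul z 0
  rw [Real.dist_eq, dist_zero_right] at this
  have h2 := abs_add_le (F z - F 0) (F 0)
  rw [sub_add_cancel] at h2
  linarith

theorem NiceF.int {F : E → ℝ} (hF : NiceF F) {Z : X → E} (hZ : Integrable Z μ) :
    Integrable (fun x => F (Z x)) μ := by
  obtain ⟨K, hK⟩ := hF.lip
  refine Integrable.mono' ((integrable_const |F 0|).add (hZ.norm.const_mul (K:ℝ)))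
    (hF.cont.comp_aestronglyMeasurable hZ.1) (Eventually.of_forall fun x => lip_bound hK _)

theorem inner_int {T Z : X → E} {τ : ℝ} (hT : AEStronglyMeasurable T μ)
    (hTb : ∀ᵐ x ∂μ, ‖T x‖ ≤ τ) (hZ : Integrable Z μ) :
    Integrable (fun x => (⟪T x, Z x⟫ : ℝ)) μ := by
  refine Integrable.mono' (hZ.norm.const_mul τ) (hT.inner hZ.1) ?_
  filter_upwards [hTb] with x hx
  exact (norm_inner_le_norm _ _).trans (by gcongr)

theorem dct_zero {a : ℕ → X → ℝ} {b : X → ℝ} (ha : ∀ k, AEStronglyMeasurable (a k) μ)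
    (hb : Integrable b μ) (h0 : ∀ k x, 0 ≤ a k x) (hab : ∀ k, ∀ᵐ x ∂μ, a k x ≤ b x)
    (hlim : ∀ᵐ x ∂μ, Tendsto (fun k => a k x) atTop (𝓝 0)) :
    Tendsto (fun k => ∫ x, a k x ∂μ) atTop (𝓝 0) := by
  have := tendsto_integral_of_dominated_convergence (f := fun _ => (0:ℝ)) b ha hb
    (fun k => by
      filter_upwards [hab k] with x hx
      rw [Real.norm_of_nonneg (h0 k x)]; exact hx) hlim
  simpa using this

theorem scheffe {g : ℕ → X → ℝ} {g0 : X → ℝ} (hg : ∀ k, Integrable (g k) μ)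
    (hg0 : Integrable g0 μ) (h0 : ∀ k, ∀ᵐ x ∂μ, 0 ≤ g k x) (h00 : ∀ᵐ x ∂μ, 0 ≤ g0 x)
    (hlim : ∀ᵐ x ∂μ, Tendsto (fun k => g k x) atTop (𝓝 (g0 x)))
    (hI : Tendsto (fun k => ∫ x, g k x ∂μ) atTop (𝓝 (∫ x, g0 x ∂μ))) :
    Tendsto (fun k => ∫ x, |g k x - g0 x| ∂μ) atTop (𝓝 0) := by
  have i1 : ∀ k, Integrable (fun x => max (g0 x - g k x) 0) μ := fun k => (hg0.sub (hg k)).pos_part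
  have h1 : Tendsto (fun k => ∫ x, max (g0 x - g k x) 0 ∂μ) atTop (𝓝 0) := by
    refine dct_zero (fun k => (i1 k).1) hg0 (fun k x => le_max_right _ _) (fun k => ?_) ?_
    · filter_upwards [h0 k, h00] with x hx hx0
      exact max_le (by linarith) hx0
    · filter_upwards [hlim] with x hx
      have := ((tendsto_const_nhds (x := g0 x)).sub hx).max (tendsto_const_nhds (x := (0:ℝ)))
      simpa using this
  have h2 : ∀ k, ∫ x, |g k x - g0 x| ∂μ =
      ((∫ x, g k x ∂μ) - ∫ x, g0 x ∂μ) + 2 * ∫ x, max (g0 x - g k x) 0 ∂μ := fun k => by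
    have i2 : Integrable (fun x => g k x - g0 x) μ := (hg k).sub hg0
    rw [← integral_sub (hg k) hg0, ← integral_const_mul,
      ← integral_add i2 ((i1 k).const_mul 2)]
    refine integral_congr_ae (Eventually.of_forall fun x => ?_)
    simp only
    rcases le_total (g0 x) (g k x) with h | h
    · rw [abs_of_nonneg (by linarith), max_eq_right (by linarith)]; ring
    · rw [abs_of_nonpos (by linarith), max_eq_left (by linarith)]; ring
  simp_rw [h2]
  have := (hI.sub_const (∫ x, g0 x ∂μ)).add (h1.const_mul 2)
  simpa using this

theorem l1_subseq {a : ℕ → X → ℝ} (ha : ∀ k, Integrable (a k) μ) (h0 : ∀ k x, 0 ≤ a k x)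
    (hI : Tendsto (fun k => ∫ x, a k x ∂μ) atTop (𝓝 0)) :
    ∃ ms : ℕ → ℕ, StrictMono ms ∧ ∀ᵐ x ∂μ, Tendsto (fun k => a (ms k) x) atTop (𝓝 0) := by
  refine TendstoInMeasure.exists_seq_tendsto_ae (g := fun _ => 0) ?_
  refine tendstoInMeasure_of_tendsto_eLpNorm (p := 1) one_ne_zero (fun k => (ha k).1)
    aestronglyMeasurable_const ?_
  have : ∀ k, eLpNorm (a k - fun _ => 0) 1 μ = ENNReal.ofReal (∫ x, a k x ∂μ) := fun k => by
    rw [show (a k - fun _ => (0:ℝ)) = a k by ext; simp, eLpNorm_one_eq_lintegral_enorm,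
      ofReal_integral_eq_lintegral_ofReal (ha k) (Eventually.of_forall (h0 k))]
    refine lintegral_congr fun x => ?_
    rw [Real.enorm_of_nonneg (h0 k x)]
  simp_rw [this]
  have h := (ENNReal.continuous_ofReal.tendsto 0).comp hI
  rwa [ENNReal.ofReal_zero] at h

theorem var_conv [FiniteDimensional ℝ E] {F : E → ℝ} (hF : NiceF F) {T : X → E} {τ : ℝ}
    (hT : AEStronglyMeasurable T μ) (hTb : ∀ᵐ x ∂μ, ‖T x‖ ≤ τ) {c C : ℝ} (hc : 0 < c)
    (hco : ∀ᵐ x ∂μ, ∀ z : E, c * ‖z‖ - C ≤ F z - ⟪T x, z⟫)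
    {Z : ℕ → X → E} {H : X → E} (hZ : ∀ k, Integrable (Z k) μ) (hH : Integrable H μ)
    (h1 : ∀ k, ∫ x, (F (H x) - ⟪T x, H x⟫) ∂μ ≤
      ∫ x, (F ((2:ℝ)⁻¹ • (Z k x + H x)) - ⟪T x, (2:ℝ)⁻¹ • (Z k x + H x)⟫) ∂μ)
    (h2 : Tendsto (fun k => ∫ x, (F (Z k x) - ⟪T x, Z k x⟫) ∂μ) atTop
      (𝓝 (∫ x, (F (H x) - ⟪T x, H x⟫) ∂μ))) :
    Tendsto (fun k => ∫ x, ‖Z k x - H x‖ ∂μ) atTop (𝓝 0) := by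
  have hJ : ∀ {Y : X → E}, Integrable Y μ → Integrable (fun x => F (Y x) - ⟪T x, Y x⟫) μ :=
    fun hY => (hF.int hY).sub (inner_int hT hTb hY)
  have hmid : ∀ k, Integrable (fun x => (2:ℝ)⁻¹ • (Z k x + H x)) μ := fun k =>
    ((hZ k).add hH).smul _
  have hDi : ∀ k, Integrable (fun x => defect F (H x) (Z k x)) μ := fun k =>
    (((hF.int (hZ k)).add (hF.int hH)).div_const 2).sub (hF.int (hmid k))
  have hD : Tendsto (fun k => ∫ x, defect F (H x) (Z k x) ∂μ) atTop (𝓝 0) := by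
    have hle : ∀ k, ∫ x, defect F (H x) (Z k x) ∂μ ≤
        ((∫ x, (F (Z k x) - ⟪T x, Z k x⟫) ∂μ) - ∫ x, (F (H x) - ⟪T x, H x⟫) ∂μ) / 2 := fun k => by
      have e : ∫ x, defect F (H x) (Z k x) ∂μ =
          ((∫ x, (F (Z k x) - ⟪T x, Z k x⟫) ∂μ) + ∫ x, (F (H x) - ⟪T x, H x⟫) ∂μ) / 2 -
          ∫ x, (F ((2:ℝ)⁻¹ • (Z k x + H x)) - ⟪T x, (2:ℝ)⁻¹ • (Z k x + H x)⟫) ∂μ := by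
        have i2 : Integrable (fun x => ((F (Z k x) - ⟪T x, Z k x⟫) +
            (F (H x) - ⟪T x, H x⟫)) / 2) μ := ((hJ (hZ k)).add (hJ hH)).div_const 2
        rw [← integral_add (hJ (hZ k)) (hJ hH), ← integral_div, ← integral_sub i2 (hJ (hmid k))]
        refine integral_congr_ae (Eventually.of_forall fun x => ?_)
        simp only [defect, inner_smul_right, inner_add_right]
        ring
      rw [e]
      linarith [h1 k]
    refine squeeze_zero (fun k => integral_nonneg fun x => hF.defect_nonneg _ _) hle ?_
    have := (h2.sub_const (∫ x, (F (H x) - ⟪T x, H x⟫) ∂μ)).div_const 2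
    simpa using this
  refine tendsto_of_subseq_tendsto fun ns hns => ?_
  obtain ⟨ms, hms, hae⟩ := l1_subseq (a := fun k x => defect F (H x) (Z (ns k) x))
    (fun k => hDi (ns k)) (fun k x => hF.defect_nonneg _ _) (hD.comp hns)
  refine ⟨ms, ?_⟩
  set Y : ℕ → X → E := fun k => Z (ns (ms k)) with hYdef
  have hY : ∀ k, Integrable (Y k) μ := fun k => hZ _
  have hYae : ∀ᵐ x ∂μ, Tendsto (fun k => Y k x) atTop (𝓝 (H x)) := by
    filter_upwards [hae] with x hx using hF.tendsto_of_defect (H x) hx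
  set g : ℕ → X → ℝ := fun k x => F (Y k x) - ⟪T x, Y k x⟫ + C with hg
  set g0 : X → ℝ := fun x => F (H x) - ⟪T x, H x⟫ + C with hg0
  have hgi : ∀ k, Integrable (g k) μ := fun k => (hJ (hY k)).add (integrable_const C)
  have hg0i : Integrable g0 μ := (hJ hH).add (integrable_const C)
  have hgc : ∀ k, ∀ᵐ x ∂μ, c * ‖Y k x‖ ≤ g k x := fun k => by
    filter_upwards [hco] with x hx
    have := hx (Y k x)
    simp only [hg]; linarith
  have hg0c : ∀ᵐ x ∂μ, c * ‖H x‖ ≤ g0 x := by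
    filter_upwards [hco] with x hx
    have := hx (H x)
    simp only [hg0]; linarith
  have hS : Tendsto (fun k => ∫ x, |g k x - g0 x| ∂μ) atTop (𝓝 0) := by
    refine scheffe hgi hg0i (fun k => ?_) ?_ ?_ ?_
    · filter_upwards [hgc k] with x hx using le_trans (by positivity) hx
    · filter_upwards [hg0c] with x hx using le_trans (by positivity) hx
    · filter_upwards [hYae] with x hx
      refine (((hF.cont.tendsto _).comp hx).sub ?_).add_const C
      exact tendsto_const_nhds.inner hx
    · have e1 : ∀ k, ∫ x, g k x ∂μ =
          (∫ x, (F (Y k x) - ⟪T x, Y k x⟫) ∂μ) + ∫ x, C ∂μ := fun k =>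
        integral_add (hJ (hY k)) (integrable_const C)
      have e2 : ∫ x, g0 x ∂μ = (∫ x, (F (H x) - ⟪T x, H x⟫) ∂μ) + ∫ x, C ∂μ :=
        integral_add (hJ hH) (integrable_const C)
      rw [e2]
      simp_rw [e1]
      exact ((h2.comp hns).comp hms.tendsto_atTop).add_const _
  have im : ∀ k, Integrable (fun x => ‖Y k x - H x‖) μ := fun k => ((hY k).sub hH).norm
  have imin : ∀ k, Integrable (fun x => min ‖Y k x - H x‖ (|2 * g0 x / c|)) μ := fun k =>
    (im k).inf ((hg0i.const_mul 2).div_const c).abs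
  have hMin : Tendsto (fun k => ∫ x, min ‖Y k x - H x‖ (|2 * g0 x / c|) ∂μ) atTop (𝓝 0) := by
    refine dct_zero (fun k => (imin k).1) ((hg0i.const_mul 2).div_const c).abs
      (fun k x => le_min (norm_nonneg _) (abs_nonneg _))
      (fun k => Eventually.of_forall fun x => min_le_right _ _) ?_
    filter_upwards [hYae] with x hx
    have h3 : Tendsto (fun k => ‖Y k x - H x‖) atTop (𝓝 0) := by
      have := (hx.sub_const (H x)).norm
      simpa using this
    have := h3.min (tendsto_const_nhds (x := |2 * g0 x / c|))
    rwa [min_eq_left (abs_nonneg _)] at this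
  have hfin : ∀ k, ∫ x, ‖Y k x - H x‖ ∂μ ≤
      (∫ x, min ‖Y k x - H x‖ (|2 * g0 x / c|) ∂μ) + (∫ x, |g k x - g0 x| ∂μ) / c := fun k => by
    have i3 : Integrable (fun x => |g k x - g0 x| / c) μ := ((hgi k).sub hg0i).abs.div_const c
    rw [← integral_div, ← integral_add (imin k) i3]
    refine integral_mono_ae (im k) ((imin k).add i3) ?_
    filter_upwards [hgc k, hg0c] with x hx hx0
    have hn0 : 0 ≤ |g k x - g0 x| / c := by positivity
    rcases le_total ‖Y k x - H x‖ (|2 * g0 x / c|) with h | h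
    · simp only [min_eq_left h]; linarith
    · simp only [min_eq_right h]
      have h4 : 2 * g0 x / c ≤ |2 * g0 x / c| := le_abs_self _
      have h5 : ‖Y k x - H x‖ ≤ (g k x + g0 x) / c := by
        rw [le_div_iff₀ hc]
        have := norm_sub_le (Y k x) (H x)
        nlinarith
      have h6 : (g k x + g0 x) / c ≤ 2 * g0 x / c + |g k x - g0 x| / c := by
        rw [← add_div]
        refine div_le_div_of_nonneg_right ?_ hc.le
        linarith [le_abs_self (g k x - g0 x)]
      linarith
  refine squeeze_zero (fun k => integral_nonneg fun x => norm_nonneg _) hfin ?_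
  have := hMin.add (hS.div_const c)
  simpa using this
end vari

set_option linter.unusedSectionVars false
set_option linter.unusedVariables false

section conv
variable {n N : ℕ} {Ω : Set (EVec n)}

/-- matrices as a Euclidean space -/
noncomputable def toE (N n : ℕ) : (Fin N → Fin n → ℝ) →L[ℝ] EuclideanSpace ℝ (Fin N × Fin n) :=
  LinearMap.toContinuousLinearMap
    { toFun := fun A => WithLp.toLp 2 (fun p => A p.1 p.2)
      map_add' := fun A B => by ext p; simp
      map_smul' := fun c A => by ext p; simp }

theorem toE_apply (A : Fin N → Fin n → ℝ) (p : Fin N × Fin n) : toE N n A p = A p.1 p.2 := rfl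

theorem inner_toE (A B : Fin N → Fin n → ℝ) : (⟪toE N n A, toE N n B⟫ : ℝ) = mdot A B := by
  rw [PiLp.inner_apply, mdot, ← Finset.univ_product_univ, Finset.sum_product]
  simp only [toE_apply, RCLike.inner_apply, conj_trivial]
  refine Finset.sum_congr rfl fun a _ => Finset.sum_congr rfl fun i _ => mul_comm _ _

theorem norm_toE (A : Fin N → Fin n → ℝ) : ‖toE N n A‖ = mnorm A := by
  rw [mnorm, ← inner_toE, real_inner_self_eq_norm_sq, Real.sqrt_sq (norm_nonneg _)]

theorem abs_le_mnorm (A : Fin N → Fin n → ℝ) (a : Fin N) (i : Fin n) : |A a i| ≤ mnorm A := by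
  rw [← norm_toE]
  exact PiLp.norm_apply_le (toE N n A) (a, i)

theorem mnorm_le (A : Fin N → Fin n → ℝ) : mnorm A ≤ ∑ a, ∑ i, |A a i| := by
  have h0 : 0 ≤ ∑ a, ∑ i, |A a i| := by positivity
  rw [mnorm, mdot]
  refine Real.sqrt_le_iff.2 ⟨h0, ?_⟩
  have h1 : ∀ a i, |A a i| ≤ ∑ a, ∑ i, |A a i| := fun a i =>
    (Finset.single_le_sum (f := fun i => |A a i|) (fun _ _ => abs_nonneg _)
      (Finset.mem_univ i)).trans
    (Finset.single_le_sum (f := fun a => ∑ i, |A a i|)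
      (fun _ _ => Finset.sum_nonneg fun _ _ => abs_nonneg _) (Finset.mem_univ a))
  calc ∑ a, ∑ i, A a i * A a i = ∑ a, ∑ i, |A a i| * |A a i| := by simp only [abs_mul_abs_self]
    _ ≤ ∑ a, ∑ i, |A a i| * (∑ a, ∑ i, |A a i|) := by
        refine Finset.sum_le_sum fun a _ => Finset.sum_le_sum fun i _ => ?_
        exact mul_le_mul_of_nonneg_left (h1 a i) (abs_nonneg _)
    _ = _ := by simp only [← Finset.sum_mul]; rw [sq]

theorem vnorm_le (v : Fin N → ℝ) : vnorm v ≤ ∑ a, |v a| := by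
  have h0 : 0 ≤ ∑ a, |v a| := by positivity
  rw [vnorm]
  refine Real.sqrt_le_iff.2 ⟨h0, ?_⟩
  have h1 : ∀ a, |v a| ≤ ∑ a, |v a| := fun a =>
    (Finset.single_le_sum (f := fun i => |v i|) (fun _ _ => abs_nonneg _) (Finset.mem_univ a))
  calc ∑ a, v a ^ 2 = ∑ a, |v a| * |v a| := by simp only [abs_mul_abs_self, sq]
    _ ≤ ∑ a, |v a| * (∑ a, |v a|) := by
        refine Finset.sum_le_sum fun a _ => ?_
        exact mul_le_mul_of_nonneg_left (h1 a) (abs_nonneg _)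
    _ = _ := by simp only [← Finset.sum_mul]; rw [sq]

/-- gradient as a functional -/
noncomputable def gradL (n : ℕ) : (Fin n → ℝ) →L[ℝ] (EVec n →L[ℝ] ℝ) :=
  LinearMap.toContinuousLinearMap
    { toFun := fun z => ∑ i, z i • (EuclideanSpace.proj i : EVec n →L[ℝ] ℝ)
      map_add' := fun z w => by simp [add_smul, Finset.sum_add_distrib]
      map_smul' := fun c z => by simp [Finset.smul_sum, smul_smul] }

theorem gradL_apply (z : Fin n → ℝ) (v : EVec n) : gradL n z v = ∑ i, z i * v i := by
  change (∑ i, z i • (EuclideanSpace.proj i : EVec n →L[ℝ] ℝ)) v = _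
  simp [ContinuousLinearMap.sum_apply]

theorem gradL_single (z : Fin n → ℝ) (i : Fin n) :
    gradL n z (EuclideanSpace.single i 1) = z i := by
  rw [gradL_apply]
  simp

theorem gradL_norm (z : Fin n → ℝ) : ‖gradL n z‖ ≤ ∑ i, |z i| := by
  refine ContinuousLinearMap.opNorm_le_bound _ (by positivity) fun v => ?_
  rw [gradL_apply, Finset.sum_mul]
  refine (norm_sum_le _ _).trans (Finset.sum_le_sum fun i _ => ?_)
  rw [norm_mul]
  exact mul_le_mul_of_nonneg_left (PiLp.norm_apply_le v i) (abs_nonneg _)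

theorem int_comp {X : Type*} [MeasurableSpace X] {μ : Measure X} {u : X → Fin N → ℝ}
    (hu : Integrable u μ) (a : Fin N) : Integrable (fun x => u x a) μ :=
  (ContinuousLinearMap.proj (R := ℝ) (φ := fun _ : Fin N => ℝ) a).integrable_comp hu

theorem int_row {X : Type*} [MeasurableSpace X] {μ : Measure X} {u : X → Fin N → Fin n → ℝ}
    (hu : Integrable u μ) (a : Fin N) : Integrable (fun x => u x a) μ :=
  (ContinuousLinearMap.proj (R := ℝ) (φ := fun _ : Fin N => Fin n → ℝ) a).integrable_comp hu

theorem mul_test {s : Set (EVec n)} {u ψ : EVec n → ℝ} (hu : IntegrableOn u s)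
    (hψ : Continuous ψ) (hc : HasCompactSupport ψ) : IntegrableOn (fun x => u x * ψ x) s := by
  obtain ⟨M, hM⟩ := hc.exists_bound_of_continuous hψ
  exact Integrable.mul_bdd (c := M) hu hψ.aestronglyMeasurable (Eventually.of_forall hM)

theorem test_d {φ : EVec n → ℝ} (hφ : ContDiff ℝ 1 φ) (v : EVec n) :
    Continuous (fun x => fderiv ℝ φ x v) :=
  (hφ.continuous_fderiv (by simp)).clm_apply continuous_const

theorem HasWeakDerivOn.wd {u : EVec n → Fin N → ℝ} {Du : EVec n → Fin N → Fin n → ℝ}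
    (h : HasWeakDerivOn Ω u Du) (a : Fin N) :
    WD Ω (fun x => u x a) (fun x => gradL n (Du x a)) := by
  refine ⟨int_comp h.1 a, (gradL n).integrable_comp (int_row h.2.1 a), ?_⟩
  intro φ hφ hc hs v
  have e1 : ∀ x, fderiv ℝ φ x v = ∑ i, v i * fderiv ℝ φ x (EuclideanSpace.single i 1) := by
    intro x
    have hv : v = ∑ i, v i • (EuclideanSpace.single i 1 : EVec n) := by
      ext j
      simp [Pi.single_apply]
    conv_lhs => rw [hv]
    simp
  have i1 : ∀ i, IntegrableOn (fun x => v i * (u x a * fderiv ℝ φ x (EuclideanSpace.single i 1))) Ω :=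
    fun i => (mul_test (int_comp h.1 a) (test_d hφ _) (hc.fderiv_apply ℝ _)).const_mul _
  have i2 : ∀ i, IntegrableOn (fun x => v i * (Du x a i * φ x)) Ω :=
    fun i => (mul_test (int_comp (int_row h.2.1 a) i) hφ.continuous hc).const_mul _
  calc ∫ x in Ω, u x a * fderiv ℝ φ x v
      = ∫ x in Ω, ∑ i, v i * (u x a * fderiv ℝ φ x (EuclideanSpace.single i 1)) := by
        refine integral_congr_ae (Eventually.of_forall fun x => ?_)
        simp only
        rw [e1 x, Finset.mul_sum]
        exact Finset.sum_congr rfl fun i _ => by ring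
    _ = ∑ i, v i * ∫ x in Ω, u x a * fderiv ℝ φ x (EuclideanSpace.single i 1) := by
        rw [integral_finsetSum _ fun i _ => i1 i]
        simp_rw [integral_const_mul]
    _ = - ∑ i, v i * ∫ x in Ω, Du x a i * φ x := by
        rw [← Finset.sum_neg_distrib]
        refine Finset.sum_congr rfl fun i _ => ?_
        rw [h.2.2 φ hφ hc hs a i]; ring
    _ = - ∫ x in Ω, ∑ i, v i * (Du x a i * φ x) := by
        rw [integral_finsetSum _ fun i _ => i2 i]
        simp_rw [integral_const_mul]
    _ = _ := by
        congr 1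
        refine integral_congr_ae (Eventually.of_forall fun x => ?_)
        simp only
        rw [gradL_apply, Finset.sum_mul]
        exact Finset.sum_congr rfl fun i _ => by ring

theorem HasWeakDerivOn.lin {u w : EVec n → Fin N → ℝ} {Du Dw : EVec n → Fin N → Fin n → ℝ}
    (h : HasWeakDerivOn Ω u Du) (h' : HasWeakDerivOn Ω w Dw) (α β : ℝ) :
    HasWeakDerivOn Ω (fun x => α • u x + β • w x) (fun x => α • Du x + β • Dw x) := by
  refine ⟨(h.1.smul α).add (h'.1.smul β), (h.2.1.smul α).add (h'.2.1.smul β), ?_⟩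
  intro φ hφ hc hs a i
  have i1 := (mul_test (int_comp h.1 a) (test_d hφ (EuclideanSpace.single i 1))
    (hc.fderiv_apply ℝ _)).const_mul α
  have i2 := (mul_test (int_comp h'.1 a) (test_d hφ (EuclideanSpace.single i 1))
    (hc.fderiv_apply ℝ _)).const_mul β
  have i3 := (mul_test (int_comp (int_row h.2.1 a) i) hφ.continuous hc).const_mul α
  have i4 := (mul_test (int_comp (int_row h'.2.1 a) i) hφ.continuous hc).const_mul β
  have e1 := h.2.2 φ hφ hc hs a i
  have e2 := h'.2.2 φ hφ hc hs a i
  calc _ = ∫ x in Ω, (α * (u x a * fderiv ℝ φ x (EuclideanSpace.single i 1)) +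
        β * (w x a * fderiv ℝ φ x (EuclideanSpace.single i 1))) := by
        refine integral_congr_ae (Eventually.of_forall fun x => ?_)
        simp only [Pi.add_apply, Pi.smul_apply, smul_eq_mul]; ring
    _ = - ∫ x in Ω, (α * (Du x a i * φ x) + β * (Dw x a i * φ x)) := by
        rw [integral_add i1 i2, integral_add i3 i4, integral_const_mul, integral_const_mul,
          integral_const_mul, integral_const_mul, e1, e2]
        ring
    _ = _ := by
        congr 1
        refine integral_congr_ae (Eventually.of_forall fun x => ?_)
        simp only [Pi.add_apply, Pi.smul_apply, smul_eq_mul]; ring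

theorem bdd_int {s : Set (EVec n)} (hs : Bornology.IsBounded s) {q : EVec n → ℝ}
    (hq : Measurable q) {M : ℝ} (hM : ∀ x, |q x| ≤ M) : IntegrableOn q s :=
  Integrable.mono' (integrableOn_const (fin_of_bdd hs) (C := M)) hq.aestronglyMeasurable
    (Eventually.of_forall hM)

theorem lip_mem (hb : Bornology.IsBounded Ω) {w : Fin N → EVec n → ℝ} {A : Fin N → NNReal}
    {M : Fin N → ℝ} (hw : ∀ a, LipschitzWith (A a) (w a)) (hM : ∀ a x, |w a x| ≤ M a) :
    MemW12 Ω (fun x a => w a x)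
      (fun x a i => fderiv ℝ (w a) x (EuclideanSpace.single i 1)) := by
  have hdm : ∀ a i, Measurable (fun x => fderiv ℝ (w a) x (EuclideanSpace.single i 1)) :=
    fun a i => measurable_fderiv_apply_const ℝ _ _
  have hdb : ∀ a i x, |fderiv ℝ (w a) x (EuclideanSpace.single i 1)| ≤ A a := fun a i x => by
    have h1 := (fderiv ℝ (w a) x).le_opNorm (EuclideanSpace.single i 1)
    have h2 : ‖fderiv ℝ (w a) x‖ ≤ A a := norm_fderiv_le_of_lipschitz ℝ (hw a)
    have h3 : ‖(EuclideanSpace.single i 1 : EVec n)‖ = 1 := by simp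
    rw [h3, mul_one] at h1
    exact h1.trans h2
  have hwm : ∀ a, Measurable (w a) := fun a => (hw a).continuous.measurable
  refine ⟨⟨?_, ?_, ?_⟩, ?_, ?_⟩
  · exact Integrable.of_eval fun a => bdd_int hb (hwm a) (hM a)
  · exact Integrable.of_eval fun a => Integrable.of_eval fun i => bdd_int hb (hdm a i) (hdb a i)
  · intro φ hφ hc hs a i
    have := lip_weak (hw a) hφ hc (EuclideanSpace.single i 1)
    rw [setIntegral_eq_integral_of_forall_compl_eq_zero, this,
      setIntegral_eq_integral_of_forall_compl_eq_zero]
    · intro x hx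
      rw [image_eq_zero_of_notMem_tsupport (fun h => hx (hs h)), mul_zero]
    · intro x hx
      have : x ∉ tsupport (fderiv ℝ φ) := fun h => hx (hs (tsupport_fderiv_subset ℝ h))
      rw [image_eq_zero_of_notMem_tsupport this]; simp
  · have e : ∀ x, vnorm (fun a => w a x) ^ 2 = ∑ a, w a x ^ 2 := fun x =>
      Real.sq_sqrt (by positivity)
    simp only [e]
    refine integrable_finsetSum _ fun a _ => bdd_int hb ((hwm a).pow_const 2) (M := M a ^ 2) fun x => ?_
    rw [abs_of_nonneg (by positivity)]
    exact sq_le_sq' (abs_le.1 (hM a x)).1 (abs_le.1 (hM a x)).2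
  · have e : ∀ x, mnorm (fun a i => fderiv ℝ (w a) x (EuclideanSpace.single i 1)) ^ 2 =
        ∑ a, ∑ i, fderiv ℝ (w a) x (EuclideanSpace.single i 1) *
          fderiv ℝ (w a) x (EuclideanSpace.single i 1) := fun x =>
      Real.sq_sqrt (Finset.sum_nonneg fun a _ => Finset.sum_nonneg fun i _ => mul_self_nonneg _)
    simp only [e]
    refine integrable_finsetSum _ fun a _ => integrable_finsetSum _ fun i _ =>
      bdd_int hb ((hdm a i).mul (hdm a i)) (M := A a * A a) fun x => ?_
    rw [abs_mul]
    exact mul_le_mul (hdb a i x) (hdb a i x) (abs_nonneg _) (A a).2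

theorem density_vec (hn : 0 < n) (hΩ : IsLipschitzDomain Ω) (hb : Bornology.IsBounded Ω)
    {u : EVec n → Fin N → ℝ} {Du : EVec n → Fin N → Fin n → ℝ}
    (h : HasWeakDerivOn Ω u Du) {ε : ℝ} (hε : 0 < ε) :
    ∃ (w : EVec n → Fin N → ℝ) (Dw : EVec n → Fin N → Fin n → ℝ), MemW12 Ω w Dw ∧
      ∫ x in Ω, ‖toE N n (Dw x) - toE N n (Du x)‖ ≤ ε := by
  set δ := ε / (N * n + 1) with hδ
  have hδp : 0 < δ := by positivity
  choose w A M hw hM hwd using fun a => density hn hΩ hb (h.wd a) hδp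
  have hm := lip_mem hb hw hM
  refine ⟨_, _, hm, ?_⟩
  have i1 : ∀ a, IntegrableOn (fun x => ‖fderiv ℝ (w a) x - gradL n (Du x a)‖) Ω := fun a =>
    ((lip_fd_int (hw a) hb).sub (h.wd a).2.1).norm
  calc _ ≤ ∫ x in Ω, ∑ a, n * ‖fderiv ℝ (w a) x - gradL n (Du x a)‖ := by
        refine setIntegral_mono
          (((toE N n).integrable_comp hm.1.2.1).sub ((toE N n).integrable_comp h.2.1)).norm
          (integrable_finsetSum _ fun a _ => (i1 a).const_mul _) fun x => ?_
        simp only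
        rw [← map_sub, norm_toE]
        refine (mnorm_le _).trans (Finset.sum_le_sum fun a _ => ?_)
        calc _ ≤ ∑ i : Fin n, ‖fderiv ℝ (w a) x - gradL n (Du x a)‖ := by
              refine Finset.sum_le_sum fun i _ => ?_
              have h1 := (fderiv ℝ (w a) x - gradL n (Du x a)).le_opNorm
                (EuclideanSpace.single i 1)
              have h3 : ‖(EuclideanSpace.single i 1 : EVec n)‖ = 1 := by simp
              rw [h3, mul_one, ContinuousLinearMap.sub_apply, gradL_single] at h1
              exact h1
          _ = _ := by simp
    _ = ∑ a, n * ∫ x in Ω, ‖fderiv ℝ (w a) x - gradL n (Du x a)‖ := by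
        rw [integral_finsetSum _ fun a _ => (i1 a).const_mul _]
        simp_rw [integral_const_mul]
    _ ≤ ∑ a : Fin N, n * δ := by
        refine Finset.sum_le_sum fun a _ => ?_
        exact mul_le_mul_of_nonneg_left (hwd a) (by positivity)
    _ = N * n * δ := by simp; ring
    _ ≤ ε := by
        rw [hδ, mul_div_assoc', div_le_iff₀ (by positivity)]
        nlinarith [show (0:ℝ) ≤ N * n by positivity]

theorem poincare_vec (hn : 0 < n) (hΩ : IsLipschitzDomain Ω) (hb : Bornology.IsBounded Ω) :
    ∃ C : ℝ, 0 ≤ C ∧ ∀ (u : EVec n → Fin N → ℝ) (Du : EVec n → Fin N → Fin n → ℝ),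
      HasWeakDerivOn Ω u Du → ZeroMean Ω u →
      ∫ x in Ω, vnorm (u x) ≤ C * ∫ x in Ω, mnorm (Du x) := by
  obtain ⟨C, hC, H⟩ := poincare_dom hn hΩ hb
  refine ⟨N * (C * n), by positivity, fun u Du h hz => ?_⟩
  have i0 : ∀ a, IntegrableOn (fun x => |u x a|) Ω := fun a => (int_comp h.1 a).abs
  have i1 : IntegrableOn (fun x => mnorm (Du x)) Ω := by
    have := ((toE N n).integrable_comp h.2.1).norm
    simp only [norm_toE] at this
    exact this
  have hcv : Continuous (fun v : Fin N → ℝ => vnorm v) := by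
    unfold vnorm; fun_prop
  have iv : IntegrableOn (fun x => vnorm (u x)) Ω := by
    refine Integrable.mono' (integrable_finsetSum Finset.univ fun a _ => i0 a)
      (hcv.comp_aestronglyMeasurable h.1.1) (Eventually.of_forall fun x => ?_)
    rw [Real.norm_of_nonneg (show 0 ≤ vnorm (u x) from Real.sqrt_nonneg _)]
    exact vnorm_le _
  calc _ ≤ ∫ x in Ω, ∑ a, |u x a| := setIntegral_mono iv
          (integrable_finsetSum _ fun a _ => i0 a) fun x => vnorm_le _
    _ = ∑ a, ∫ x in Ω, |u x a| := integral_finsetSum _ fun a _ => i0 a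
    _ ≤ ∑ a : Fin N, C * (n * ∫ x in Ω, mnorm (Du x)) := by
        refine Finset.sum_le_sum fun a _ => (H _ _ (h.wd a) (hz a)).trans ?_
        refine mul_le_mul_of_nonneg_left ?_ hC
        rw [← integral_const_mul]
        refine setIntegral_mono (h.wd a).2.1.norm (i1.const_mul _) fun x => ?_
        refine (gradL_norm _).trans ?_
        calc _ ≤ ∑ i : Fin n, mnorm (Du x) := Finset.sum_le_sum fun i _ => abs_le_mnorm _ _ _
          _ = _ := by simp
    _ = _ := by simp; ring

end conv

set_option linter.unusedSectionVars false
set_option linter.unusedVariables false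

theorem J_lip {X E : Type*} [MeasurableSpace X] {μ : Measure X} [IsFiniteMeasure μ]
    [NormedAddCommGroup E] [InnerProductSpace ℝ E] {F : E → ℝ} (hF : NiceF F)
    {K : NNReal} (hK : LipschitzWith K F) {T : X → E} {τ : ℝ}
    (hT : AEStronglyMeasurable T μ) (hTb : ∀ᵐ x ∂μ, ‖T x‖ ≤ τ) {Y H : X → E}
    (hY : Integrable Y μ) (hH : Integrable H μ) :
    ∫ x, (F (Y x) - ⟪T x, Y x⟫) ∂μ ≤ ∫ x, (F (H x) - ⟪T x, H x⟫) ∂μ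
      + (K + τ) * ∫ x, ‖Y x - H x‖ ∂μ := by
  have iH : Integrable (fun x => F (H x) - ⟪T x, H x⟫) μ := (hF.int hH).sub (inner_int hT hTb hH)
  have iY : Integrable (fun x => F (Y x) - ⟪T x, Y x⟫) μ := (hF.int hY).sub (inner_int hT hTb hY)
  have iD : Integrable (fun x => (K + τ) * ‖Y x - H x‖) μ := (hY.sub hH).norm.const_mul _
  rw [← integral_const_mul, ← integral_add iH iD]
  refine integral_mono_ae iY (iH.add iD) ?_
  filter_upwards [hTb] with x hx
  have h1 := hK.dist_le_mul (Y x) (H x)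
  rw [Real.dist_eq, dist_eq_norm] at h1
  have h2 := (le_abs_self _).trans h1
  have h3 : (⟪T x, H x - Y x⟫ : ℝ) ≤ τ * ‖Y x - H x‖ := by
    rw [norm_sub_rev]
    exact (real_inner_le_norm _ _).trans (by gcongr)
  rw [inner_sub_right] at h3
  nlinarith

theorem zero_dim {N : ℕ} {Ω : Set (EVec 0)} (hΩ : IsLipschitzDomain Ω)
    (hb : Bornology.IsBounded Ω) {u : EVec 0 → Fin N → ℝ} (hz : ZeroMean Ω u) (x : EVec 0) :
    u x = 0 := by
  ext a
  have h := hz a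
  have e : (fun y => u y a) = fun _ => u x a := by
    ext y; rw [Subsingleton.elim y x]
  rw [e, setIntegral_const, smul_eq_mul] at h
  rcases mul_eq_zero.1 h with h | h
  · exfalso
    rw [measureReal_def, ENNReal.toReal_eq_zero_iff] at h
    rcases h with h | h
    · exact (hΩ.1.measure_pos volume hΩ.2.1).ne' h
    · exact hb.measure_lt_top.ne h
  · exact h

/-- **Corollary 3.6 (strong `W^{1,1}` convergence).** On a simply connected bounded
Lipschitz domain, the minimisers `u_k` of the regularised functionals `𝔉_k` (with zero
mean) converge strongly in `W^{1,1}(Ω;ℝ^N)` to the unique zero-mean minimiser `u` of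
`𝔉` in `W^{1,1}(Ω;ℝ^N)`. -/
theorem strong_W11_convergence
    {n N : ℕ} (Ω : Set (EVec n))
    (hΩ : IsLipschitzDomain Ω) (hΩbdd : Bornology.IsBounded Ω)
    (hΩsc : SimplyConnectedSpace Ω)
    (ν L : ℝ) (hν : 0 < ν) (hνL : ν ≤ L)
    (f f' f'' : ℝ → ℝ)
    (hderiv : ∀ t ∈ Set.Ici (0:ℝ), HasDerivWithinAt f (f' t) (Set.Ici 0) t)
    (hderiv' : ∀ t ∈ Set.Ici (0:ℝ), HasDerivWithinAt f' (f'' t) (Set.Ici 0) t)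
    (hf''cont : ContinuousOn f'' (Set.Ici 0))
    (hstrict : StrictConvexOn ℝ (Set.Ici 0) f)
    (hf0 : f 0 = 0) (hf'0 : f' 0 = 0)
    (hgrowth : ∀ t ∈ Set.Ici (0:ℝ), ν * t - L ≤ f t ∧ f t ≤ L * (t + 1))
    (hsec : ∀ t ∈ Set.Ici (0:ℝ), f'' t ≤ L * (1 + t)⁻¹)
    (finf : ℝ) (hfinf : Filter.Tendsto (fun t => f t / t) Filter.atTop (nhds finf))
    (T₀ : EVec n → Fin N → Fin n → ℝ)
    (hT : MemW2inf Ω T₀)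
    (hTsmall : linfNormOn Ω T₀ < ENNReal.ofReal finf)
    (u : ℕ → EVec n → Fin N → ℝ) (Du : ℕ → EVec n → Fin N → Fin n → ℝ)
    (hmem : ∀ k, 0 < k → MemW12 Ω (u k) (Du k))
    (hzero : ∀ k, 0 < k → ZeroMean Ω (u k))
    (hmin : ∀ k, 0 < k →
      ∀ (w : EVec n → Fin N → ℝ) (Dw : EVec n → Fin N → Fin n → ℝ),
        MemW12 Ω w Dw → FFk Ω f T₀ k (Du k) ≤ FFk Ω f T₀ k Dw)
    (U : EVec n → Fin N → ℝ) (DU : EVec n → Fin N → Fin n → ℝ)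
    (hU : HasWeakDerivOn Ω U DU) (hUzero : ZeroMean Ω U)
    (hUmin : ∀ (w : EVec n → Fin N → ℝ) (Dw : EVec n → Fin N → Fin n → ℝ),
      HasWeakDerivOn Ω w Dw → FF Ω f T₀ DU ≤ FF Ω f T₀ Dw) :
    Filter.Tendsto
      (fun k : ℕ => (∫ x in Ω, vnorm (u k x - U x)) +
        ∫ x in Ω, mnorm (Du k x - DU x))
      Filter.atTop (nhds 0) := by

  rcases Nat.eq_zero_or_pos n with hn | hn
  · subst hn
    refine tendsto_const_nhds.congr' ?_
    filter_upwards [eventually_gt_atTop 0] with k hk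
    have e1 : ∀ x, u k x = 0 := zero_dim hΩ hΩbdd (hzero k hk)
    have e2 : ∀ x, U x = 0 := zero_dim hΩ hΩbdd hUzero
    simp [e1, e2, vnorm, mnorm, mdot]
  have hd : HasDerivWithinAt f 0 (Ici 0) 0 := by
    have := hderiv 0 (mem_Ici.2 le_rfl)
    rwa [hf'0] at this
  have hfin : volume Ω < ∞ := hΩbdd.measure_lt_top
  haveI : IsFiniteMeasure (volume.restrict Ω) := ⟨by simpa using hfin⟩
  have hfp : 0 < finf := ENNReal.ofReal_pos.1 (bot_le.trans_lt hTsmall)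
  have hne : linfNormOn Ω T₀ ≠ ∞ := (hTsmall.trans ENNReal.ofReal_lt_top).ne
  obtain ⟨τ, hτdef⟩ : ∃ τ, τ = (linfNormOn Ω T₀).toReal := ⟨_, rfl⟩
  have hτ0 : 0 ≤ τ := hτdef ▸ ENNReal.toReal_nonneg
  have hτ : τ < finf := by
    rw [hτdef]
    exact (ENNReal.lt_ofReal_iff_toReal_lt hne).1 hTsmall
  have hTb : ∀ᵐ x ∂(volume.restrict Ω), ‖toE N n (T₀ x)‖ ≤ τ := by
    have h := ae_le_essSup (f := fun x => ENNReal.ofReal (mnorm (T₀ x))) (μ := volume.restrict Ω)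
    filter_upwards [h] with x hx
    rw [norm_toE, hτdef]
    exact (ENNReal.ofReal_le_iff_le_toReal hne).1 hx
  have hTm : AEStronglyMeasurable (fun x => toE N n (T₀ x)) (volume.restrict Ω) := by
    obtain ⟨C, DT, -, h2, -⟩ := hT
    have hc : ContinuousOn T₀ Ω := fun x hx => (h2 x hx).continuousWithinAt
    exact (toE N n).continuous.comp_aestronglyMeasurable
      (hc.aestronglyMeasurable hΩ.1.measurableSet)
  have hF : NiceF (fun z : EuclideanSpace ℝ (Fin N × Fin n) => f ‖z‖) :=
    nice_f hstrict hf0 hd hfp.le hfinf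
  obtain ⟨K, hK⟩ := hF.lip
  obtain ⟨C, hC, hco⟩ := f_coer hstrict hf0 hd hfinf (σ := (τ + finf) / 2) (by positivity)
    (by linarith)
  have hFF : ∀ D : EVec n → Fin N → Fin n → ℝ, FF Ω f T₀ D =
      ∫ x in Ω, (f ‖toE N n (D x)‖ - ⟪toE N n (T₀ x), toE N n (D x)⟫) := by
    intro D
    simp only [FF, norm_toE, inner_toE]
  have hI : ∀ {w : EVec n → Fin N → ℝ} {D : EVec n → Fin N → Fin n → ℝ},
      HasWeakDerivOn Ω w D → Integrable (fun x => toE N n (D x)) (volume.restrict Ω) :=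
    fun h => (toE N n).integrable_comp h.2.1
  have h2 : Tendsto (fun k => FF Ω f T₀ (Du (k + 1))) atTop (𝓝 (FF Ω f T₀ DU)) := by
    rw [Metric.tendsto_atTop]
    intro ε hε
    obtain ⟨w, Dw, hw, hwd⟩ := density_vec hn hΩ hΩbdd hU
      (ε := ε / (4 * (K + τ + 1))) (by positivity)
    have h3 := J_lip hF hK hTm hTb (hI hw.1) (hI hU)
    rw [← hFF, ← hFF] at h3
    have h4 : ((K:ℝ) + τ) * ∫ x in Ω, ‖toE N n (Dw x) - toE N n (DU x)‖ ≤ ε / 4 := by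
      calc ((K:ℝ) + τ) * ∫ x in Ω, ‖toE N n (Dw x) - toE N n (DU x)‖
          ≤ (K + τ) * (ε / (4 * (K + τ + 1))) := by gcongr
        _ ≤ ε / 4 := by
          rw [mul_div_assoc', div_le_div_iff₀ (by positivity) (by norm_num)]
          nlinarith
    obtain ⟨M, hM⟩ : ∃ M, M = ∫ x in Ω, mnorm (Dw x) ^ 2 := ⟨_, rfl⟩
    have hlim : Tendsto (fun k : ℕ => (2 * ((k + 1 : ℕ) : ℝ))⁻¹ * M) atTop (𝓝 (0 * M)) := by
      refine Tendsto.mul_const _ ?_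
      refine tendsto_inv_atTop_zero.comp ?_
      refine Tendsto.const_mul_atTop (by norm_num) ?_
      exact tendsto_natCast_atTop_atTop.comp (tendsto_add_atTop_nat 1)
    rw [zero_mul] at hlim
    obtain ⟨k0, hk0⟩ := eventually_atTop.1 (hlim.eventually (gt_mem_nhds (half_pos hε)))
    refine ⟨k0, fun k hk => ?_⟩
    have h5 := hmin (k + 1) (Nat.succ_pos k) w Dw hw
    have h6 := hk0 k hk
    have h7 := hUmin _ _ (hmem (k + 1) (Nat.succ_pos k)).1
    rw [FFk, FFk, ← hM] at h5
    have h8 : 0 ≤ (2 * ((k + 1 : ℕ) : ℝ))⁻¹ * ∫ x in Ω, mnorm (Du (k + 1) x) ^ 2 :=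
      mul_nonneg (by positivity) (integral_nonneg fun x => sq_nonneg _)
    rw [Real.dist_eq, abs_of_nonneg (by linarith)]
    linarith
  have h1 : ∀ k, FF Ω f T₀ DU ≤
      ∫ x in Ω, (f ‖(2:ℝ)⁻¹ • (toE N n (Du (k + 1) x) + toE N n (DU x))‖
        - ⟪toE N n (T₀ x), (2:ℝ)⁻¹ • (toE N n (Du (k + 1) x) + toE N n (DU x))⟫) := by
    intro k
    have := hUmin _ _ ((hmem (k + 1) (Nat.succ_pos k)).1.lin hU (2:ℝ)⁻¹ (2:ℝ)⁻¹)
    rw [hFF (fun x => (2:ℝ)⁻¹ • Du (k + 1) x + (2:ℝ)⁻¹ • DU x)] at this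
    simpa only [map_add, map_smul, smul_add] using this
  have hconv := var_conv hF hTm hTb (c := (τ + finf) / 2 - τ) (C := C) (by linarith)
    (by
      filter_upwards [hTb] with x hx z
      have a1 := hco ‖z‖ (norm_nonneg z)
      have a2 : (⟪toE N n (T₀ x), z⟫ : ℝ) ≤ τ * ‖z‖ :=
        (real_inner_le_norm _ _).trans (by gcongr)
      linarith)
    (fun k => hI (hmem (k + 1) (Nat.succ_pos k)).1) (hI hU)
    (fun k => by rw [← hFF]; exact h1 k)
    (by simp only [← hFF]; exact h2)
  have hm : Tendsto (fun k => ∫ x in Ω, mnorm (Du (k + 1) x - DU x)) atTop (𝓝 0) := by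
    simpa only [← map_sub, norm_toE] using hconv
  obtain ⟨P, hP, hpo⟩ := poincare_vec (N := N) hn hΩ hΩbdd
  have hv : Tendsto (fun k => ∫ x in Ω, vnorm (u (k + 1) x - U x)) atTop (𝓝 0) := by
    have hm2 := hm.const_mul P
    rw [mul_zero] at hm2
    refine squeeze_zero (fun k => integral_nonneg fun x => Real.sqrt_nonneg _) (fun k => ?_) hm2
    have hk := hmem (k + 1) (Nat.succ_pos k)
    have hl := hk.1.lin hU 1 (-1)
    have e1 : (fun x => (1:ℝ) • u (k + 1) x + (-1:ℝ) • U x) = fun x => u (k + 1) x - U x := by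
      ext x a; simp [sub_eq_add_neg]
    have e2 : (fun x => (1:ℝ) • Du (k + 1) x + (-1:ℝ) • DU x) = fun x => Du (k + 1) x - DU x := by
      ext x a; simp [sub_eq_add_neg]
    rw [e1, e2] at hl
    refine hpo _ _ hl fun a => ?_
    have := integral_sub (int_comp hk.1.1 a) (int_comp hU.1 a)
    rw [hzero _ (Nat.succ_pos k) a, hUzero a, sub_zero] at this
    exact this
  rw [← tendsto_add_atTop_iff_nat 1]
  simpa using hv.add hm
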